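/- Let p : Fin n → EuclideanSpace ℝ (Fin d) be an injective family such that every p i is an extreme point of P := convexHull ℝ (Set.range p), and assume 0 ∈ interior P. Then there exists a symmetric matrix M : Matrix (Fin n) (Fin n) ℝ such that: (1) M i j > 0 whenever (i,j) is an edge of P; (2) M i j = 0 whenever i ≠ j and (i,j) is not an edge of P; (3) the kernel of the linear map v ↦ M.mulVec v has dimension d over ℝ; (4) for every i, ∑ j, (M i j) • (p j) = 0; (5) exactly one eigenvalue of M, counted with multiplicity in the list of n real eigenvalues of the real symmetric matrix M, is positive. -/

import Mathlib

/-- For `i ≠ j`, the pair `(i,j)` is an edge of the polytope `convexHull ℝ (Set.range p)`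
if the closed segment between `p i` and `p j` is an extreme subset of it. -/
def IsEdge {n d : ℕ} (p : Fin n → EuclideanSpace ℝ (Fin d)) (i j : Fin n) : Prop :=
  i ≠ j ∧ IsExtreme ℝ (convexHull ℝ (Set.range p)) (segment ℝ (p i) (p j))

/-!
The polar polytope `P° = {x | ∀ i, ⟪x, p i⟫ ≤ 1}` has one facet for each vertex `p i`, and two of
its facets meet in a ridge exactly when the corresponding vertices of `P` span an edge. The matrix
is the Hessian of the volume of `P°` as a function of the displacements of its facets. Its entry
at `(i, j)` is a positive multiple of the volume of the ridge where the facets `i` and `j` meet,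
and it is annihilated by the displacements `⟪y, p i⟫` that come from translations of `P°`. That it
has one positive eigenvalue and no further kernel is the Alexandrov–Fenchel inequality, with its
equality case, for the strongly isomorphic polytopes near `P°`.

The inequality is proved for all faces of `P°` by induction on their dimension; for polygons it is
Minkowski's inequality. In higher dimension the mixed volume form of a face is compared with those
of its facets, weighted by the support numbers. The difference is a sum over the faces of
codimension three of terms that depend only on the three-dimensional link there, and each of them
is nonnegative and vanishes only for rigid displacements of the link. Together with the inequality
for the facets this is a Bochner-type estimate, which excludes eigenvalues strictly between zero
and the largest one; in the case of equality the rigidity of the links lets the translations of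
the facets be glued along adjacent facets.
-/

open scoped InnerProductSpace Matrix
open Module

namespace PolarPolytope

/-! ### Symmetric forms that are negative semidefinite on a hyperplane -/

section Lorentzian

variable {V : Type*} [AddCommGroup V] [Module ℝ V] {B : LinearMap.BilinForm ℝ V} {h : V}

lemma mul_apply_self_le_sq (hsymm : B.IsSymm) (hpos : 0 < B h h)
    (hneg : ∀ x, B x h = 0 → B x x ≤ 0) (x : V) : B x x * B h h ≤ B x h ^ 2 := by
  have hproj := hneg (B h h • x - B x h • h) (by
    simp only [map_sub, map_smul, LinearMap.sub_apply, LinearMap.smul_apply, smul_eq_mul]; ring)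
  simp only [map_sub, map_smul, LinearMap.sub_apply, LinearMap.smul_apply, smul_eq_mul,
    hsymm.eq h x] at hproj
  nlinarith

/-- Cauchy–Schwarz for the positive semidefinite form `B x h * B y h - B h h * B x y`. -/
lemma apply_eq_zero_of_isotropic (hsymm : B.IsSymm) (hpos : 0 < B h h)
    (hneg : ∀ x, B x h = 0 → B x x ≤ 0) {x : V} (hxh : B x h = 0) (hxx : B x x = 0) (y : V) :
    B x y = 0 := by
  set C : LinearMap.BilinForm ℝ V :=
    LinearMap.BilinForm.linMulLin (B.flip h) (B.flip h) - B h h • B with hC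
  have hC_apply : ∀ u v, C u v = B u h * B v h - B h h * B u v := fun u v => by simp [hC]
  have hC_nonneg : ∀ u, 0 ≤ C u u := fun u => by
    rw [hC_apply]; linarith [mul_apply_self_le_sq hsymm hpos hneg u]
  have hC_symm : C.IsSymm := ⟨fun u v => by
    simp only [hC_apply, hsymm.eq u v]; ring⟩
  have hle := C.apply_sq_le_of_symm hC_nonneg (LinearMap.BilinForm.isSymm_iff.1 hC_symm) x y
  rw [hC_apply x x, hC_apply x y, hxh, hxx] at hle
  have hprod : B h h * B x y = 0 := by nlinarith
  exact (mul_eq_zero.1 hprod).resolve_left hpos.ne'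

end Lorentzian

lemma exists_mem_orthogonal_inner_pos {E : Type*} [NormedAddCommGroup E] [InnerProductSpace ℝ E]
    {K : Submodule ℝ E} [K.HasOrthogonalProjection] {v : E} (hv : v ∉ K) :
    ∃ y ∈ Kᗮ, 0 < ⟪y, v⟫_ℝ := by
  set y := v - K.starProjection v with hy
  have hyK : y ∈ Kᗮ := Submodule.sub_starProjection_mem_orthogonal v
  have hy0 : y ≠ 0 := fun h =>
    hv (Submodule.starProjection_eq_self_iff.1 (sub_eq_zero.1 (hy.symm.trans h)).symm)
  refine ⟨y, hyK, ?_⟩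
  have hyv : ⟪y, v⟫_ℝ = ⟪y, y⟫_ℝ := by
    conv_rhs => rw [hy, inner_sub_right]
    rw [Submodule.inner_left_of_mem_orthogonal (Submodule.starProjection_apply_mem K v) hyK,
      sub_zero]
  exact hyv ▸ real_inner_self_pos.2 hy0

/-! ### Faces of the polar polytope -/

section Faces

variable {ι E : Type*} [NormedAddCommGroup E] [InnerProductSpace ℝ E]

/-- The vectors `p i` positively span the space, i.e. the polar polytope
`{x | ∀ i, ⟪x, p i⟫ ≤ 1}` is bounded. -/
def PositivelySpans (p : ι → E) : Prop := ∀ y : E, y ≠ 0 → ∃ i, 0 < ⟪y, p i⟫_ℝ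

/-- `S` is the set of constraints `⟪x, p i⟫ ≤ 1` that are tight at some point `x` of the polar
polytope. Such sets encode the nonempty faces of the polar polytope, with inclusion reversed: the
empty set is the polytope itself. -/
def IsPolarFace (p : ι → E) (S : Set ι) : Prop :=
  ∃ x : E, (∀ i ∈ S, ⟪x, p i⟫_ℝ = 1) ∧ ∀ i ∉ S, ⟪x, p i⟫_ℝ < 1

open Classical in
/-- A chosen point in the relative interior of the face `S` of the polar polytope. -/
noncomputable def facePoint (p : ι → E) (S : Set ι) : E :=
  if h : IsPolarFace p S then h.choose else 0

/-- The linear span of the vectors tight on the face `S`; its orthogonal complement is the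
direction of the affine span of that face. -/
def faceSpan (p : ι → E) (S : Set ι) : Submodule ℝ E := Submodule.span ℝ (p '' S)

/-- The codimension of the face `S` in the polar polytope. -/
noncomputable def faceRank (p : ι → E) (S : Set ι) : ℕ := finrank ℝ (faceSpan p S)

/-- `T` is a facet of the face `S`. -/
structure FaceCov (p : ι → E) (S T : Set ι) : Prop where
  isPolarFace_left : IsPolarFace p S
  isPolarFace_right : IsPolarFace p T
  subset : S ⊆ T
  faceRank_right : faceRank p T = faceRank p S + 1

variable {p : ι → E} {S T U W : Set ι} {i : ι}

namespace IsPolarFace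

lemma inner_facePoint_eq (hS : IsPolarFace p S) (hi : i ∈ S) : ⟪facePoint p S, p i⟫_ℝ = 1 := by
  rw [facePoint, dif_pos hS]; exact hS.choose_spec.1 i hi

lemma inner_facePoint_lt (hS : IsPolarFace p S) (hi : i ∉ S) : ⟪facePoint p S, p i⟫_ℝ < 1 := by
  rw [facePoint, dif_pos hS]; exact hS.choose_spec.2 i hi

lemma inner_facePoint_le (hS : IsPolarFace p S) (i : ι) : ⟪facePoint p S, p i⟫_ℝ ≤ 1 := by
  by_cases hi : i ∈ S
  · exact (hS.inner_facePoint_eq hi).le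
  · exact (hS.inner_facePoint_lt hi).le

end IsPolarFace

lemma apply_mem_faceSpan (hi : i ∈ S) : p i ∈ faceSpan p S := Submodule.subset_span ⟨i, hi, rfl⟩

lemma faceSpan_le {K : Submodule ℝ E} (h : ∀ i ∈ S, p i ∈ K) : faceSpan p S ≤ K :=
  Submodule.span_le.2 (Set.image_subset_iff.2 h)

lemma faceSpan_mono (h : S ⊆ T) : faceSpan p S ≤ faceSpan p T :=
  Submodule.span_mono (Set.image_mono h)

lemma mem_orthogonal_faceSpan {y : E} : y ∈ (faceSpan p S)ᗮ ↔ ∀ i ∈ S, ⟪y, p i⟫_ℝ = 0 := by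
  refine ⟨fun hy i hi => Submodule.inner_left_of_mem_orthogonal (apply_mem_faceSpan hi) hy,
    fun hy => (Submodule.mem_orthogonal' _ _).2 fun z hz => ?_⟩
  exact Submodule.mem_orthogonal_singleton_iff_inner_right.1
    (faceSpan_le (fun i hi => Submodule.mem_orthogonal_singleton_iff_inner_right.2 (hy i hi)) hz)

lemma sub_facePoint_mem_orthogonal {x : E} (hT : IsPolarFace p T) (hST : S ⊆ T)
    (hx : ∀ i ∈ S, ⟪x, p i⟫_ℝ = 1) : x - facePoint p T ∈ (faceSpan p S)ᗮ :=
  mem_orthogonal_faceSpan.2 fun i hi => by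
    rw [inner_sub_left, hx i hi, hT.inner_facePoint_eq (hST hi), sub_self]

namespace IsPolarFace

lemma facePoint_sub_mem_orthogonal (hS : IsPolarFace p S) (hT : IsPolarFace p T) (hST : S ⊆ T) :
    facePoint p T - facePoint p S ∈ (faceSpan p S)ᗮ :=
  sub_facePoint_mem_orthogonal hS subset_rfl fun _ hi => hT.inner_facePoint_eq (hST hi)

lemma inner_facePoint_sub_pos (hS : IsPolarFace p S) (hT : IsPolarFace p T) (hiT : i ∈ T)
    (hiS : i ∉ S) : 0 < ⟪facePoint p T - facePoint p S, p i⟫_ℝ := by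
  rw [inner_sub_left, hT.inner_facePoint_eq hiT]
  linarith [hS.inner_facePoint_lt hiS]

lemma inner_facePoint_sub_nonneg (hS : IsPolarFace p S) (hT : IsPolarFace p T) (hiT : i ∈ T) :
    0 ≤ ⟪facePoint p T - facePoint p S, p i⟫_ℝ := by
  rw [inner_sub_left, hT.inner_facePoint_eq hiT]
  linarith [hS.inner_facePoint_le i]

lemma mem_of_apply_mem_faceSpan (hS : IsPolarFace p S) (hT : IsPolarFace p T) (hST : S ⊆ T)
    (hiT : i ∈ T) (hi : p i ∈ faceSpan p S) : i ∈ S := by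
  by_contra hiS
  exact (inner_facePoint_sub_pos hS hT hiT hiS).ne' <|
    Submodule.inner_left_of_mem_orthogonal hi (hS.facePoint_sub_mem_orthogonal hT hST)

/-- Moving the point of the face `W` slightly in a direction `y` that violates no constraint
tight on `W`. -/
lemma sep_inner_eq_zero [Finite ι] (hW : IsPolarFace p W) {y : E}
    (hy : ∀ j ∈ W, ⟪y, p j⟫_ℝ ≤ 0) : IsPolarFace p {j ∈ W | ⟪y, p j⟫_ℝ = 0} := by
  have hslack : ∀ᶠ ε in nhdsWithin (0 : ℝ) (Set.Ioi 0), ∀ j, j ∉ W →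
      ⟪facePoint p W, p j⟫_ℝ + ε * ⟪y, p j⟫_ℝ < 1 := by
    refine Filter.eventually_all.2 fun j => Filter.eventually_imp_distrib_left.2 fun hj => ?_
    have hcont : Continuous fun ε : ℝ => ⟪facePoint p W, p j⟫_ℝ + ε * ⟪y, p j⟫_ℝ := by fun_prop
    exact nhdsWithin_le_nhds <| hcont.tendsto 0 |>.eventually
      (Iio_mem_nhds (by simpa using hW.inner_facePoint_lt hj))
  obtain ⟨ε, hε_slack, hε⟩ := (hslack.and self_mem_nhdsWithin).exists
  refine ⟨facePoint p W + ε • y, fun i hi => ?_, fun i hi => ?_⟩ <;>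
    rw [inner_add_left, real_inner_smul_left]
  · rw [hi.2, hW.inner_facePoint_eq hi.1, mul_zero, add_zero]
  · by_cases hiW : i ∈ W
    · have hneg : ⟪y, p i⟫_ℝ < 0 := lt_of_le_of_ne (hy i hiW) fun h => hi ⟨hiW, h⟩
      rw [hW.inner_facePoint_eq hiW]
      nlinarith
    · exact hε_slack i hiW

/-- Follow the ray from the point of `S` in the direction `y` until it leaves the polar
polytope. -/
lemma exists_exit [Finite ι] (hp : PositivelySpans p) (hS : IsPolarFace p S) {y : E} (hy0 : y ≠ 0)
    (hy : y ∈ (faceSpan p S)ᗮ) :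
    ∃ (W : Set ι) (t : ℝ), IsPolarFace p W ∧ S ⊂ W ∧ 0 < t ∧
      (∀ j, ⟪facePoint p S + t • y, p j⟫_ℝ ≤ 1) ∧
      (∀ j ∈ W, ⟪facePoint p S + t • y, p j⟫_ℝ = 1) ∧ ∃ j ∈ W, 0 < ⟪y, p j⟫_ℝ := by
  have hyS := mem_orthogonal_faceSpan.1 hy
  obtain ⟨k, hk, hmin⟩ := Set.exists_min_image {i | 0 < ⟪y, p i⟫_ℝ}
    (fun i => (1 - ⟪facePoint p S, p i⟫_ℝ) / ⟪y, p i⟫_ℝ) (Set.toFinite _) (hp y hy0)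
  rw [Set.mem_ofPred_eq] at hk
  have hkS : k ∉ S := fun h => hk.ne' (hyS k h)
  set t := (1 - ⟪facePoint p S, p k⟫_ℝ) / ⟪y, p k⟫_ℝ with ht
  have ht0 : 0 < t := div_pos (by linarith [hS.inner_facePoint_lt hkS]) hk
  have hinner : ∀ j, ⟪facePoint p S + t • y, p j⟫_ℝ = ⟪facePoint p S, p j⟫_ℝ + t * ⟪y, p j⟫_ℝ :=
    fun j => by rw [inner_add_left, real_inner_smul_left]
  have hle : ∀ j, ⟪facePoint p S + t • y, p j⟫_ℝ ≤ 1 := fun j => by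
    rw [hinner]
    by_cases hj : 0 < ⟪y, p j⟫_ℝ
    · linarith [(le_div_iff₀ hj).1 (hmin j hj)]
    · nlinarith [hS.inner_facePoint_le j]
  have hk1 : ⟪facePoint p S + t • y, p k⟫_ℝ = 1 := by
    rw [hinner, ht, div_mul_cancel₀ _ hk.ne']; ring
  refine ⟨{j | ⟪facePoint p S + t • y, p j⟫_ℝ = 1}, t, ⟨_, fun _ => id, fun j hj =>
    (hle j).lt_of_ne hj⟩, (Set.ssubset_iff_of_subset fun i hi => ?_).2 ⟨k, hk1, hkS⟩, ht0, hle,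
    fun _ => id, k, hk1, hk⟩
  rw [Set.mem_ofPred_eq, hinner, hyS i hi, hS.inner_facePoint_eq hi, mul_zero, add_zero]

/-- Among the faces between `S` and `W`, pick the one on which the slope of `y` relative to
the direction from the point of `S` to the point of `W` is largest. -/
lemma exists_maximal_slope [Finite ι] (hS : IsPolarFace p S) (hW : IsPolarFace p W) (h : S ⊂ W)
    {y : E} (hy : y ∈ (faceSpan p S)ᗮ) :
    ∃ (T : Set ι) (t : ℝ), IsPolarFace p T ∧ S ⊂ T ∧ T ⊆ W ∧
      (∀ j ∈ T, ⟪y, p j⟫_ℝ = t * ⟪facePoint p W - facePoint p S, p j⟫_ℝ) ∧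
      ∀ j ∈ W, ⟪y, p j⟫_ℝ ≤ t * ⟪facePoint p W - facePoint p S, p j⟫_ℝ := by
  set g := facePoint p W - facePoint p S
  have hgS : ∀ i ∈ S, ⟪g, p i⟫_ℝ = 0 :=
    mem_orthogonal_faceSpan.1 (hS.facePoint_sub_mem_orthogonal hW h.1)
  have hyS := mem_orthogonal_faceSpan.1 hy
  have hpos : ∀ j ∈ W \ S, 0 < ⟪g, p j⟫_ℝ := fun j hj => hS.inner_facePoint_sub_pos hW hj.1 hj.2
  obtain ⟨k, hk, hmax⟩ := Set.exists_max_image (W \ S) (fun i => ⟪y, p i⟫_ℝ / ⟪g, p i⟫_ℝ)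
    (Set.toFinite _) (Set.nonempty_of_ssubset h)
  set t := ⟪y, p k⟫_ℝ / ⟪g, p k⟫_ℝ with ht
  have hle : ∀ j ∈ W, ⟪y, p j⟫_ℝ ≤ t * ⟪g, p j⟫_ℝ := fun j hj => by
    by_cases hjS : j ∈ S
    · rw [hyS j hjS, hgS j hjS, mul_zero]
    · exact (div_le_iff₀ (hpos j ⟨hj, hjS⟩)).1 (hmax j ⟨hj, hjS⟩)
  have hinner : ∀ j, ⟪y - t • g, p j⟫_ℝ = ⟪y, p j⟫_ℝ - t * ⟪g, p j⟫_ℝ := fun j => by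
    rw [inner_sub_left, real_inner_smul_left]
  have hkT : ⟪y - t • g, p k⟫_ℝ = 0 := by
    rw [hinner, ht, div_mul_cancel₀ _ (hpos k hk).ne', sub_self]
  refine ⟨{j ∈ W | ⟪y - t • g, p j⟫_ℝ = 0}, t,
    hW.sep_inner_eq_zero fun j hj => by linarith [hinner j, hle j hj],
    (Set.ssubset_iff_of_subset fun i hi => Set.mem_sep (h.1 hi) ?_).2 ⟨k, ⟨hk.1, hkT⟩, hk.2⟩,
    Set.sep_subset _ _, fun j hj => by linarith [hinner j, hj.2], hle⟩
  rw [hinner, hyS i hi, hgS i hi, mul_zero, sub_zero]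

end IsPolarFace

namespace FaceCov

lemma ssubset (h : FaceCov p S T) : S ⊂ T :=
  h.subset.ssubset_of_ne fun he => by have := h.faceRank_right; rw [he] at this; omega

lemma facePoint_sub_mem_orthogonal (h : FaceCov p S T) :
    facePoint p T - facePoint p S ∈ (faceSpan p S)ᗮ :=
  h.isPolarFace_left.facePoint_sub_mem_orthogonal h.isPolarFace_right h.subset

end FaceCov

end Faces

section Covers

variable {ι E : Type*} [NormedAddCommGroup E] [InnerProductSpace ℝ E] [FiniteDimensional ℝ E]

/-- The unit vector in the direction of the face `S` that is orthogonal to its facet `T` and points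
out of `S`. -/
noncomputable def normal (p : ι → E) (S T : Set ι) : E :=
  (‖(faceSpan p T).starProjection (facePoint p T - facePoint p S)‖)⁻¹ •
    (faceSpan p T).starProjection (facePoint p T - facePoint p S)

/-- The distance from the chosen point of the face `S` to the affine span of its facet `T`. -/
noncomputable def supportNumber (p : ι → E) (S T : Set ι) : ℝ :=
  ⟪facePoint p T - facePoint p S, normal p S T⟫_ℝ

variable {p : ι → E} {S T T' U W : Set ι} {i : ι} {y z : E}

namespace IsPolarFace

lemma eq_of_faceRank_le (hS : IsPolarFace p S) (hT : IsPolarFace p T) (hST : S ⊆ T)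
    (hrank : faceRank p T ≤ faceRank p S) : S = T := by
  have hspan := Submodule.eq_of_le_of_finrank_le (faceSpan_mono hST) hrank
  exact hST.antisymm fun i hi =>
    hS.mem_of_apply_mem_faceSpan hT hST hi (hspan ▸ apply_mem_faceSpan hi)

lemma faceRank_lt (hS : IsPolarFace p S) (hT : IsPolarFace p T) (hST : S ⊂ T) :
    faceRank p S < faceRank p T := by
  by_contra! hle
  exact hST.ne (hS.eq_of_faceRank_le hT hST.1 hle)

end IsPolarFace

lemma normal_mem_faceSpan : normal p S T ∈ faceSpan p T :=
  Submodule.smul_mem _ _ (Submodule.starProjection_apply_mem _ _)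

lemma faceSpan_sup_span_singleton_ne (h : faceRank p S + 1 < faceRank p W) (v : E) :
    ∃ k ∈ W, p k ∉ faceSpan p S ⊔ Submodule.span ℝ {v} := by
  by_contra! hle
  have hsup := Submodule.finrank_add_le_finrank_add_finrank (faceSpan p S) (Submodule.span ℝ {v})
  have hline := finrank_span_le_card (R := ℝ) ({v} : Set E)
  have hW := Submodule.finrank_mono (faceSpan_le hle)
  rw [Set.toFinset_singleton, Finset.card_singleton] at hline
  unfold faceRank at h
  omega

lemma IsPolarFace.exists_faceCov_subset [Finite ι] (hS : IsPolarFace p S) (hW : IsPolarFace p W)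
    (h : S ⊂ W) : ∃ T, FaceCov p S T ∧ T ⊆ W := by
  induction hn : W.ncard using Nat.strong_induction_on generalizing W with
  | _ n ih =>
    have hlt := hS.faceRank_lt hW h
    by_cases hrank : faceRank p W = faceRank p S + 1
    · exact ⟨W, ⟨hS, hW, h.1, hrank⟩, subset_rfl⟩
    -- A direction orthogonal to `S` and to `p j` has maximal slope on a face that avoids `j`.
    obtain ⟨j, hjW, hjS⟩ := Set.exists_of_ssubset h
    obtain ⟨k, hkW, hk⟩ :=
      faceSpan_sup_span_singleton_ne (p := p) (S := S) (W := W) (by omega) (p j)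
    obtain ⟨y, hy, hyk⟩ := exists_mem_orthogonal_inner_pos hk
    obtain ⟨T, t, hT, hST, hTW, heq, hle⟩ := hS.exists_maximal_slope hW h
      (Submodule.orthogonal_le (le_sup_left (a := faceSpan p S)) hy)
    have ht : 0 < t :=
      pos_of_mul_pos_left (hyk.trans_le (hle k hkW)) (hS.inner_facePoint_sub_nonneg hW hkW)
    have hjT : j ∉ T := fun hjT => by
      have hyj : ⟪y, p j⟫_ℝ = 0 := Submodule.inner_left_of_mem_orthogonal
        (Submodule.mem_sup_right (Submodule.mem_span_singleton_self _)) hy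
      exact (mul_pos ht (hS.inner_facePoint_sub_pos hW hjW hjS)).ne' (heq j hjT ▸ hyj)
    have hTW' : T ⊂ W := (Set.ssubset_iff_of_subset hTW).2 ⟨j, hjW, hjT⟩
    obtain ⟨R, hR, hRT⟩ := ih T.ncard (hn ▸ Set.ncard_lt_ncard hTW') hT hST rfl
    exact ⟨R, hR, hRT.trans hTW⟩

namespace FaceCov

lemma eq_of_subset (h : FaceCov p S T) (h' : FaceCov p S W) (hTW : T ⊆ W) : T = W :=
  h.isPolarFace_right.eq_of_faceRank_le h'.isPolarFace_right hTW
    (by rw [h.faceRank_right, h'.faceRank_right])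

lemma inner_starProjection_facePoint_sub_pos (h : FaceCov p S T) (hiT : i ∈ T) (hiS : i ∉ S) :
    0 < ⟪(faceSpan p T).starProjection (facePoint p T - facePoint p S), p i⟫_ℝ := by
  rw [Submodule.inner_starProjection_left_eq_right,
    Submodule.starProjection_eq_self_iff.2 (apply_mem_faceSpan hiT)]
  exact h.isPolarFace_left.inner_facePoint_sub_pos h.isPolarFace_right hiT hiS

lemma norm_starProjection_facePoint_sub_pos (h : FaceCov p S T) :
    0 < ‖(faceSpan p T).starProjection (facePoint p T - facePoint p S)‖ := by
  obtain ⟨j, hjT, hjS⟩ := Set.exists_of_ssubset h.ssubset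
  refine norm_pos_iff.2 fun h0 => ?_
  have := h.inner_starProjection_facePoint_sub_pos hjT hjS
  simp [h0] at this

lemma normal_mem_orthogonal (h : FaceCov p S T) : normal p S T ∈ (faceSpan p S)ᗮ := by
  refine Submodule.smul_mem _ _ ((Submodule.mem_orthogonal' _ _).2 fun z hz => ?_)
  rw [Submodule.inner_starProjection_left_eq_right,
    Submodule.starProjection_eq_self_iff.2 (faceSpan_mono h.subset hz)]
  exact Submodule.inner_left_of_mem_orthogonal hz h.facePoint_sub_mem_orthogonal

lemma inner_normal_self (h : FaceCov p S T) : ⟪normal p S T, normal p S T⟫_ℝ = 1 := by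
  rw [real_inner_self_eq_norm_sq, normal, norm_smul, norm_inv, norm_norm,
    inv_mul_cancel₀ h.norm_starProjection_facePoint_sub_pos.ne', one_pow]

lemma inner_normal_pos (h : FaceCov p S T) (hiT : i ∈ T) (hiS : i ∉ S) :
    0 < ⟪normal p S T, p i⟫_ℝ := by
  rw [normal, real_inner_smul_left]
  exact mul_pos (inv_pos.2 h.norm_starProjection_facePoint_sub_pos)
    (h.inner_starProjection_facePoint_sub_pos hiT hiS)

lemma finrank_inf_orthogonal (h : FaceCov p S T) :
    finrank ℝ ↥((faceSpan p S)ᗮ ⊓ faceSpan p T) = 1 := by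
  have := Submodule.finrank_add_inf_finrank_orthogonal (faceSpan_mono (p := p) h.subset)
  have := h.faceRank_right
  unfold faceRank at this
  omega

lemma eq_inner_smul_normal (h : FaceCov p S T) (hz : z ∈ faceSpan p T)
    (hzS : z ∈ (faceSpan p S)ᗮ) : z = ⟪z, normal p S T⟫_ℝ • normal p S T := by
  let u : ↥((faceSpan p S)ᗮ ⊓ faceSpan p T) :=
    ⟨normal p S T, h.normal_mem_orthogonal, normal_mem_faceSpan⟩
  have hu : u ≠ 0 := fun h0 => by
    have h1 := h.inner_normal_self
    rw [show normal p S T = 0 from congrArg Subtype.val h0, inner_zero_left] at h1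
    exact zero_ne_one h1
  obtain ⟨c, hc⟩ := exists_smul_eq_of_finrank_eq_one h.finrank_inf_orthogonal hu ⟨z, hzS, hz⟩
  have hc : c • normal p S T = z := congrArg Subtype.val hc
  rw [← hc, real_inner_smul_left, h.inner_normal_self, mul_one]

lemma sub_inner_smul_normal_mem (h : FaceCov p S T) (hz : z ∈ faceSpan p T) :
    z - ⟪z, normal p S T⟫_ℝ • normal p S T ∈ faceSpan p S := by
  have hproj : (faceSpan p S).starProjection z ∈ faceSpan p S :=
    Submodule.starProjection_apply_mem _ _
  have hline := h.eq_inner_smul_normal (Submodule.sub_mem _ hz (faceSpan_mono h.subset hproj))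
    (Submodule.sub_starProjection_mem_orthogonal z)
  rw [inner_sub_left, Submodule.inner_right_of_mem_orthogonal hproj h.normal_mem_orthogonal,
    sub_zero] at hline
  rwa [← hline, sub_sub_cancel]

lemma sub_inner_smul_normal_mem_orthogonal (h : FaceCov p S T) (hSW : W ⊆ S)
    (hz : z ∈ (faceSpan p W)ᗮ) : z - ⟪z, normal p S T⟫_ℝ • normal p S T ∈ (faceSpan p W)ᗮ :=
  Submodule.sub_mem _ hz <| Submodule.smul_mem _ _ <|
    Submodule.orthogonal_le (faceSpan_mono hSW) h.normal_mem_orthogonal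

lemma inner_eq_mul_inner_normal (h : FaceCov p S T) (hy : y ∈ (faceSpan p S)ᗮ)
    (hz : z ∈ faceSpan p T) : ⟪y, z⟫_ℝ = ⟪y, normal p S T⟫_ℝ * ⟪z, normal p S T⟫_ℝ := by
  have := Submodule.inner_left_of_mem_orthogonal (h.sub_inner_smul_normal_mem hz) hy
  rw [inner_sub_right, real_inner_smul_right] at this
  linarith

lemma inner_normal_pos_iff (h : FaceCov p S T) (hy : y ∈ (faceSpan p S)ᗮ) (hiT : i ∈ T)
    (hiS : i ∉ S) : 0 < ⟪y, normal p S T⟫_ℝ ↔ 0 < ⟪y, p i⟫_ℝ := by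
  rw [h.inner_eq_mul_inner_normal hy (apply_mem_faceSpan hiT),
    real_inner_comm (normal p S T) (p i)]
  exact (mul_pos_iff_of_pos_right (h.inner_normal_pos hiT hiS)).symm

lemma inner_normal_eq_zero (h : FaceCov p T U) : ⟪normal p S T, normal p T U⟫_ℝ = 0 :=
  Submodule.inner_right_of_mem_orthogonal normal_mem_faceSpan h.normal_mem_orthogonal

lemma eq_add_inner_smul_normal (h : FaceCov p S T) (h' : FaceCov p T U) (hz : z ∈ faceSpan p U)
    (hzS : z ∈ (faceSpan p S)ᗮ) :
    z = ⟪z, normal p S T⟫_ℝ • normal p S T + ⟪z, normal p T U⟫_ℝ • normal p T U := by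
  have := h.eq_inner_smul_normal (h'.sub_inner_smul_normal_mem hz)
    (h'.sub_inner_smul_normal_mem_orthogonal h.subset hzS)
  rwa [inner_sub_left, real_inner_smul_left, real_inner_comm (normal p S T) (normal p T U),
    h'.inner_normal_eq_zero, mul_zero, sub_zero, sub_eq_iff_eq_add] at this

lemma eq_add_add_inner_smul_normal (h : FaceCov p S T) (h' : FaceCov p T U) (h'' : FaceCov p U W)
    (hz : z ∈ faceSpan p W) (hzS : z ∈ (faceSpan p S)ᗮ) :
    z = ⟪z, normal p S T⟫_ℝ • normal p S T + ⟪z, normal p T U⟫_ℝ • normal p T U +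
      ⟪z, normal p U W⟫_ℝ • normal p U W := by
  have := h.eq_add_inner_smul_normal h' (h''.sub_inner_smul_normal_mem hz)
    (h''.sub_inner_smul_normal_mem_orthogonal (h.subset.trans h'.subset) hzS)
  rwa [inner_sub_left, inner_sub_left, real_inner_smul_left, real_inner_smul_left,
    real_inner_comm (normal p T U) (normal p U W), h''.inner_normal_eq_zero,
    Submodule.inner_left_of_mem_orthogonal (faceSpan_mono h'.subset normal_mem_faceSpan)
      h''.normal_mem_orthogonal, mul_zero, sub_zero, sub_zero, sub_eq_iff_eq_add] at this

lemma supportNumber_pos (h : FaceCov p S T) : 0 < supportNumber p S T := by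
  obtain ⟨j, hjT, hjS⟩ := Set.exists_of_ssubset h.ssubset
  exact (h.inner_normal_pos_iff h.facePoint_sub_mem_orthogonal hjT hjS).2
    (h.isPolarFace_left.inner_facePoint_sub_pos h.isPolarFace_right hjT hjS)

lemma inner_sub_facePoint_eq (h : FaceCov p S T) (hz : ∀ i ∈ T, ⟪z, p i⟫_ℝ = 1) :
    ⟪z - facePoint p S, normal p S T⟫_ℝ = supportNumber p S T := by
  have := Submodule.inner_left_of_mem_orthogonal (normal_mem_faceSpan (S := S))
    (sub_facePoint_mem_orthogonal h.isPolarFace_right subset_rfl hz)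
  rw [supportNumber, ← sub_eq_zero, ← inner_sub_left, sub_sub_sub_cancel_right, this]

lemma inner_facePoint_sub_eq (h : FaceCov p S T) (hW : IsPolarFace p W) (hTW : T ⊆ W) :
    ⟪facePoint p W - facePoint p S, normal p S T⟫_ℝ = supportNumber p S T :=
  h.inner_sub_facePoint_eq fun _ hi => hW.inner_facePoint_eq (hTW hi)

lemma supportNumber_sub_mul (h : FaceCov p S T) (hz : ∀ i ∈ S, ⟪z, p i⟫_ℝ = 1) (hiT : i ∈ T) :
    (supportNumber p S T - ⟪z - facePoint p S, normal p S T⟫_ℝ) * ⟪normal p S T, p i⟫_ℝ =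
      1 - ⟪z, p i⟫_ℝ := by
  have := h.inner_eq_mul_inner_normal
    (sub_facePoint_mem_orthogonal h.isPolarFace_right h.subset hz) (apply_mem_faceSpan hiT)
  rw [inner_sub_left, h.isPolarFace_right.inner_facePoint_eq hiT,
    real_inner_comm (normal p S T) (p i)] at this
  rw [supportNumber, ← inner_sub_left, sub_sub_sub_cancel_right, ← neg_sub z, inner_neg_left,
    neg_mul, ← this, neg_sub]

lemma inner_sub_facePoint_le (h : FaceCov p S T) (hz : ∀ i ∈ S, ⟪z, p i⟫_ℝ = 1)
    (hz' : ∀ i ∈ T, ⟪z, p i⟫_ℝ ≤ 1) :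
    ⟪z - facePoint p S, normal p S T⟫_ℝ ≤ supportNumber p S T := by
  obtain ⟨j, hjT, hjS⟩ := Set.exists_of_ssubset h.ssubset
  refine sub_nonneg.1 (nonneg_of_mul_nonneg_left ?_ (h.inner_normal_pos hjT hjS))
  rw [h.supportNumber_sub_mul hz hjT]
  exact sub_nonneg.2 (hz' j hjT)

lemma inner_facePoint_sub_lt (h : FaceCov p S T) (hW : IsPolarFace p W) (hSW : S ⊆ W)
    (hTW : ¬ T ⊆ W) :
    ⟪facePoint p W - facePoint p S, normal p S T⟫_ℝ < supportNumber p S T := by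
  obtain ⟨j, hjT, hjW⟩ := Set.not_subset.1 hTW
  refine sub_pos.1 (pos_of_mul_pos_left ?_
    (h.inner_normal_pos hjT fun hjS => hjW (hSW hjS)).le)
  rw [h.supportNumber_sub_mul (fun i hi => hW.inner_facePoint_eq (hSW hi)) hjT]
  exact sub_pos.2 (hW.inner_facePoint_lt hjW)

lemma inner_facePoint_sub_lt_of_ne (h : FaceCov p S T) (h' : FaceCov p S W) (hne : T ≠ W) :
    ⟪facePoint p W - facePoint p S, normal p S T⟫_ℝ < supportNumber p S T :=
  h.inner_facePoint_sub_lt h'.isPolarFace_right h'.subset fun hs => hne (h.eq_of_subset h' hs)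

end FaceCov

namespace IsPolarFace

lemma exists_faceCov_inner_normal_pos_of_subset [Finite ι] (hS : IsPolarFace p S)
    (hW : IsPolarFace p W) (h : S ⊂ W) (hy : y ∈ (faceSpan p S)ᗮ) (hpos : ∃ j ∈ W, 0 < ⟪y, p j⟫_ℝ) :
    ∃ T, FaceCov p S T ∧ T ⊆ W ∧ 0 < ⟪y, normal p S T⟫_ℝ := by
  obtain ⟨R, t, hR, hSR, hRW, heq, hle⟩ := hS.exists_maximal_slope hW h hy
  obtain ⟨j, hjW, hj⟩ := hpos
  have ht : 0 < t :=
    pos_of_mul_pos_left (hj.trans_le (hle j hjW)) (hS.inner_facePoint_sub_nonneg hW hjW)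
  obtain ⟨T, hT, hTR⟩ := hS.exists_faceCov_subset hR hSR
  obtain ⟨k, hkT, hkS⟩ := Set.exists_of_ssubset hT.ssubset
  refine ⟨T, hT, hTR.trans hRW, (hT.inner_normal_pos_iff hy hkT hkS).2 ?_⟩
  rw [heq k (hTR hkT)]
  exact mul_pos ht (hS.inner_facePoint_sub_pos hW (hRW (hTR hkT)) hkS)

lemma exists_faceCov_inner_normal_pos [Finite ι] (hp : PositivelySpans p) (hS : IsPolarFace p S)
    (hy0 : y ≠ 0) (hy : y ∈ (faceSpan p S)ᗮ) : ∃ T, FaceCov p S T ∧ 0 < ⟪y, normal p S T⟫_ℝ := by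
  obtain ⟨W, t, hW, hSW, -, -, -, hpos⟩ := hS.exists_exit hp hy0 hy
  obtain ⟨T, hT, -, hyT⟩ := hS.exists_faceCov_inner_normal_pos_of_subset hW hSW hy hpos
  exact ⟨T, hT, hyT⟩

end IsPolarFace

end Covers

section Diamonds

variable {ι E : Type*} [NormedAddCommGroup E] [InnerProductSpace ℝ E]

/-- `T` and `T'` are two different facets of the face `S` that share the ridge `U`. -/
structure Diamond (p : ι → E) (S T T' U : Set ι) : Prop where
  left : FaceCov p S T
  right : FaceCov p S T'
  left_top : FaceCov p T U
  right_top : FaceCov p T' U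
  ne : T ≠ T'

variable {p : ι → E} {S T T' U V W : Set ι} {y z : E}

lemma Diamond.symm (h : Diamond p S T T' U) : Diamond p S T' T U :=
  ⟨h.right, h.left, h.right_top, h.left_top, h.ne.symm⟩

section Covers

variable [Finite ι]

/-- The facets of the face `S`. -/
noncomputable def covers (p : ι → E) (S : Set ι) : Finset (Set ι) :=
  (Set.toFinite {T | FaceCov p S T}).toFinset

/-- The facets of the face `S` that contain the ridge `U` of `S`. -/
noncomputable def between (p : ι → E) (S U : Set ι) : Finset (Set ι) :=
  (Set.toFinite {T | FaceCov p S T ∧ FaceCov p T U}).toFinset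

/-- The ridges of the face `S`. -/
noncomputable def secondCovers (p : ι → E) (S : Set ι) : Finset (Set ι) :=
  (Set.toFinite {U | ∃ T, FaceCov p S T ∧ FaceCov p T U}).toFinset

@[simp] lemma mem_covers : T ∈ covers p S ↔ FaceCov p S T := by simp [covers]

@[simp] lemma mem_between : T ∈ between p S U ↔ FaceCov p S T ∧ FaceCov p T U := by simp [between]

@[simp] lemma mem_secondCovers : U ∈ secondCovers p S ↔ ∃ T, FaceCov p S T ∧ FaceCov p T U := by
  simp [secondCovers]

lemma sum_covers_sum_covers {A : Type*} [AddCommMonoid A] (f : Set ι → Set ι → A) :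
    ∑ T ∈ covers p S, ∑ U ∈ covers p T, f T U =
      ∑ U ∈ secondCovers p S, ∑ T ∈ between p S U, f T U := by
  refine Finset.sum_comm' fun T U => ?_
  simp only [mem_covers, mem_between, mem_secondCovers]
  exact ⟨fun h => ⟨h, T, h⟩, fun h => h.1⟩

end Covers

variable [FiniteDimensional ℝ E]

namespace Diamond

lemma inner_normal_pos (h : Diamond p S T T' U) : 0 < ⟪normal p S T', normal p T U⟫_ℝ := by
  obtain ⟨j, hjT', hjT⟩ := Set.not_subset.1 fun hle => h.ne (h.right.eq_of_subset h.left hle).symm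
  rw [real_inner_comm, h.right.inner_normal_pos_iff (Submodule.orthogonal_le
    (faceSpan_mono h.left.subset) h.left_top.normal_mem_orthogonal) hjT'
    fun hjS => hjT (h.left.subset hjS)]
  exact h.left_top.inner_normal_pos (h.right_top.subset hjT') hjT

/-- In the plane spanned by the directions normal to `U` inside `S`, the two pairs of consecutive
normals are orthonormal bases of opposite orientation. -/
lemma exists_reflection (h : Diamond p S T T' U) : ∃ c s : ℝ, 0 < s ∧ c ^ 2 + s ^ 2 = 1 ∧
    normal p S T' = c • normal p S T + s • normal p T U ∧
    normal p T' U = s • normal p S T - c • normal p T U := by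
  have hright := h.left.eq_add_inner_smul_normal h.left_top
    (faceSpan_mono h.right_top.subset normal_mem_faceSpan) h.right.normal_mem_orthogonal
  have htop := h.left.eq_add_inner_smul_normal h.left_top normal_mem_faceSpan
    (Submodule.orthogonal_le (faceSpan_mono h.right.subset) h.right_top.normal_mem_orthogonal)
  have hs := h.inner_normal_pos
  have hx := h.symm.inner_normal_pos
  rw [real_inner_comm] at hx
  set c := ⟪normal p S T', normal p S T⟫_ℝ
  set s := ⟪normal p S T', normal p T U⟫_ℝ
  set x := ⟪normal p T' U, normal p S T⟫_ℝ
  set y := ⟪normal p T' U, normal p T U⟫_ℝ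
  have hcs := h.right.inner_normal_self
  have hxy := h.right_top.inner_normal_self
  have hperp := h.right_top.inner_normal_eq_zero (S := S)
  rw [hright] at hcs
  rw [htop] at hxy
  rw [hright, htop] at hperp
  simp only [inner_add_left, inner_add_right, real_inner_smul_left, real_inner_smul_right,
    h.left.inner_normal_self, h.left_top.inner_normal_self, h.left_top.inner_normal_eq_zero,
    real_inner_comm (normal p S T) (normal p T U)] at hcs hxy hperp
  have hsq : x ^ 2 = s ^ 2 := by
    linear_combination (x * c - s * y) * hperp + s ^ 2 * hxy - x ^ 2 * hcs
  have hxs : x = s := (pow_left_inj₀ hx.le hs.le two_ne_zero).1 hsq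
  have hyc : y = -c := mul_left_cancel₀ hs.ne' (by rw [hxs] at hperp; linarith)
  exact ⟨c, s, hs, by linarith, hright, by rw [htop, hxs, hyc, neg_smul, sub_eq_add_neg]⟩

lemma eq_or_eq (h : Diamond p S T T' U) (hV : FaceCov p S V) (hVU : FaceCov p V U) :
    V = T ∨ V = T' := by
  by_contra! hne
  obtain ⟨c, s, -, -, hT', hT'U⟩ := h.exists_reflection
  obtain ⟨c', s', -, -, hVeq, hVUeq⟩ :=
    (Diamond.mk h.left hV h.left_top hVU hne.1.symm).exists_reflection
  have hpos := (Diamond.mk h.right hV h.right_top hVU hne.2.symm).inner_normal_pos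
  have hpos' := (Diamond.mk hV h.right hVU h.right_top hne.2).inner_normal_pos
  rw [hVeq, hT'U] at hpos
  rw [hT', hVUeq] at hpos'
  simp only [inner_add_left, inner_sub_right, real_inner_smul_left, real_inner_smul_right,
    h.left.inner_normal_self, h.left_top.inner_normal_self, h.left_top.inner_normal_eq_zero,
    real_inner_comm (normal p S T) (normal p T U)] at hpos hpos'
  linarith

end Diamond

lemma Diamond.sum_between [Finite ι] (h : Diamond p S T T' U) {A : Type*} [AddCommMonoid A]
    (f : Set ι → A) : ∑ V ∈ between p S U, f V = f T + f T' := by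
  classical
  have heq : between p S U = {T, T'} := by
    ext V
    rw [mem_between, Finset.mem_insert, Finset.mem_singleton]
    exact ⟨fun hV => h.eq_or_eq hV.1 hV.2, fun hV =>
      hV.elim (· ▸ ⟨h.left, h.left_top⟩) (· ▸ ⟨h.right, h.right_top⟩)⟩
  rw [heq, Finset.sum_pair h.ne]

lemma FaceCov.exists_diamond [Finite ι] (h : FaceCov p S T) (h' : FaceCov p T U) :
    ∃ T', Diamond p S T T' U := by
  have hS := h.isPolarFace_left
  have hU := h'.isPolarFace_right
  obtain ⟨R, t, hR, hSR, hRU, heq, hle⟩ := hS.exists_maximal_slope hU (h.ssubset.trans h'.ssubset)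
    (Submodule.orthogonal_le (faceSpan_mono h.subset) h'.normal_mem_orthogonal)
  obtain ⟨j, hjU, hjT⟩ := Set.exists_of_ssubset h'.ssubset
  have ht : 0 < t := pos_of_mul_pos_left ((h'.inner_normal_pos hjU hjT).trans_le (hle j hjU))
    (hS.inner_facePoint_sub_nonneg hU hjU)
  obtain ⟨T', hT', hT'R⟩ := hS.exists_faceCov_subset hR hSR
  refine ⟨T', h, hT', h', ⟨hT'.isPolarFace_right, hU, hT'R.trans hRU,
    by rw [h'.faceRank_right, h.faceRank_right, hT'.faceRank_right]⟩, ?_⟩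
  rintro rfl
  obtain ⟨k, hkT, hkS⟩ := Set.exists_of_ssubset h.ssubset
  have hk := heq k (hT'R hkT)
  rw [Submodule.inner_left_of_mem_orthogonal (apply_mem_faceSpan hkT)
    h'.normal_mem_orthogonal] at hk
  exact (mul_pos ht (hS.inner_facePoint_sub_pos hU (hRU (hT'R hkT)) hkS)).ne hk

lemma exists_ne_zero_mem_orthogonal_faceSpan (hrank : faceRank p S < finrank ℝ E) :
    ∃ y ∈ (faceSpan p S)ᗮ, y ≠ 0 := by
  refine Submodule.exists_mem_ne_zero_of_ne_bot fun hbot => ?_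
  rw [Submodule.orthogonal_eq_bot_iff] at hbot
  rw [faceRank, hbot, finrank_top] at hrank
  exact hrank.false

lemma IsPolarFace.exists_faceCov [Finite ι] (hp : PositivelySpans p) (hS : IsPolarFace p S)
    (hrank : faceRank p S < finrank ℝ E) : ∃ T, FaceCov p S T := by
  obtain ⟨y, hy, hy0⟩ := exists_ne_zero_mem_orthogonal_faceSpan hrank
  obtain ⟨T, hT, -⟩ := hS.exists_faceCov_inner_normal_pos hp hy0 hy
  exact ⟨T, hT⟩

namespace FaceCov

lemma normal_injective (h : FaceCov p S T) (h' : FaceCov p S T')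
    (heq : normal p S T = normal p S T') : T = T' := by
  by_contra hne
  have hlt := h.inner_facePoint_sub_lt_of_ne h' hne
  have hlt' := h'.inner_facePoint_sub_lt_of_ne h (Ne.symm hne)
  rw [supportNumber] at hlt hlt'
  rw [heq] at hlt
  exact hlt.asymm hlt'

lemma normal_eq_or_eq_neg (h : FaceCov p S T) (h' : FaceCov p S T')
    (hT : faceRank p T = finrank ℝ E) :
    normal p S T' = normal p S T ∨ normal p S T' = -normal p S T := by
  have hspan : faceSpan p T = ⊤ := Submodule.eq_top_of_finrank_eq hT
  have heq := h.eq_inner_smul_normal (hspan ▸ Submodule.mem_top) h'.normal_mem_orthogonal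
  have hself := h'.inner_normal_self
  rw [heq, real_inner_smul_left, real_inner_smul_right, h.inner_normal_self, mul_one,
    mul_self_eq_one_iff] at hself
  rcases hself with hc | hc
  · exact Or.inl (by rw [heq, hc, one_smul])
  · exact Or.inr (by rw [heq, hc, neg_one_smul])

lemma normal_ne_zero (h : FaceCov p S T) : normal p S T ≠ 0 := fun h0 => by
  simpa [h0] using h.inner_normal_self

lemma exists_normal_eq_neg [Finite ι] (hp : PositivelySpans p) (h : FaceCov p S T)
    (hT : faceRank p T = finrank ℝ E) :
    ∃ T', FaceCov p S T' ∧ T ≠ T' ∧ normal p S T' = -normal p S T := by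
  obtain ⟨T', hT', hpos⟩ := h.isPolarFace_left.exists_faceCov_inner_normal_pos hp
    (neg_ne_zero.2 h.normal_ne_zero) (Submodule.neg_mem _ h.normal_mem_orthogonal)
  rw [inner_neg_left, neg_pos] at hpos
  have hne : normal p S T' ≠ normal p S T := fun heq => by
    rw [heq, h.inner_normal_self] at hpos
    exact one_pos.not_gt hpos
  exact ⟨T', hT', fun he => hne (he ▸ rfl), (h.normal_eq_or_eq_neg hT' hT).resolve_left hne⟩

lemma sum_covers_eq_add [Finite ι] {A : Type*} [AddCommMonoid A] (h : FaceCov p S T)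
    (h' : FaceCov p S T') (hne : T ≠ T') (hT : faceRank p T = finrank ℝ E)
    (hneg : normal p S T' = -normal p S T) (f : Set ι → A) :
    ∑ V ∈ covers p S, f V = f T + f T' := by
  classical
  have heq : covers p S = {T, T'} := by
    ext V
    rw [mem_covers, Finset.mem_insert, Finset.mem_singleton]
    exact ⟨fun hV => (h.normal_eq_or_eq_neg hV hT).imp (hV.normal_injective h)
      fun hVT => hV.normal_injective h' (hVT.trans hneg.symm), fun hV => hV.elim (· ▸ h) (· ▸ h')⟩
  rw [heq, Finset.sum_pair hne]

lemma sum_between_inner_mul_comm [Finite ι] (h : FaceCov p S T) (h' : FaceCov p T U) (y z : E) :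
    ∑ V ∈ between p S U, ⟪y, normal p S V⟫_ℝ * ⟪z, normal p V U⟫_ℝ =
      ∑ V ∈ between p S U, ⟪z, normal p S V⟫_ℝ * ⟪y, normal p V U⟫_ℝ := by
  obtain ⟨T', hD⟩ := h.exists_diamond h'
  obtain ⟨c, s, -, hcs, hT', hT'U⟩ := hD.exists_reflection
  rw [hD.sum_between, hD.sum_between, hT', hT'U]
  simp only [inner_add_right, inner_sub_right, real_inner_smul_right]
  linear_combination (⟪z, normal p S T⟫_ℝ * ⟪y, normal p T U⟫_ℝ -
    ⟪y, normal p S T⟫_ℝ * ⟪z, normal p T U⟫_ℝ) * hcs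

end FaceCov

/-! ### Any two facets of a face are joined by a chain of diamonds -/

section Connectivity

variable {K : Set ι} {m : ℝ} [Finite ι]

private lemma exists_diamond_lt_of_sub_eq_smul (hp : PositivelySpans p)
    (hrank : faceRank p S + 2 ≤ finrank ℝ E) (hT : FaceCov p S T) (hK : FaceCov p S K)
    (hne : T ≠ K) (hm : facePoint p K - facePoint p S = m • (facePoint p T - facePoint p S)) :
    ∃ T' U, Diamond p S T T' U ∧
      m * supportNumber p S T' < ⟪facePoint p K - facePoint p S, normal p S T'⟫_ℝ := by
  obtain ⟨U, hU⟩ := hT.isPolarFace_right.exists_faceCov hp (by rw [hT.faceRank_right]; omega)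
  obtain ⟨T', hD⟩ := hT.exists_diamond hU
  refine ⟨T', U, hD, ?_⟩
  have hKT := hT.inner_facePoint_sub_lt_of_ne hK hne
  have hTK := hK.inner_facePoint_sub_lt_of_ne hT hne.symm
  have hTT' := hD.right.inner_facePoint_sub_lt_of_ne hT hD.ne.symm
  have hKK := hK.supportNumber_pos
  have hTT := hT.supportNumber_pos
  rw [supportNumber] at hKK hTT hKT hTK
  rw [hm, real_inner_smul_left] at hKK hKT hTK ⊢
  have hm0 : m < 0 := by
    by_contra! h0
    nlinarith [pos_of_mul_pos_right hKK h0, (mul_lt_iff_lt_one_left hTT).1 hKT]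
  exact mul_lt_mul_of_neg_left hTT' hm0

/-- Leave the facet `T` of `S` through the ridge hit by the ray in direction
`(v_K - v_S) - m (v_T - v_S)`, which lies in the affine span of `T`. -/
lemma exists_diamond_lt (hp : PositivelySpans p) (hrank : faceRank p S + 2 ≤ finrank ℝ E)
    (hT : FaceCov p S T) (hK : FaceCov p S K) (hne : T ≠ K)
    (hm : ⟪facePoint p K - facePoint p S, normal p S T⟫_ℝ = m * supportNumber p S T) :
    ∃ T' U, Diamond p S T T' U ∧
      m * supportNumber p S T' < ⟪facePoint p K - facePoint p S, normal p S T'⟫_ℝ := by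
  set y := (facePoint p K - facePoint p S) - m • (facePoint p T - facePoint p S) with hy
  by_cases hy0 : y = 0
  · exact exists_diamond_lt_of_sub_eq_smul hp hrank hT hK hne (sub_eq_zero.1 hy0)
  have hyS : y ∈ (faceSpan p S)ᗮ := Submodule.sub_mem _ hK.facePoint_sub_mem_orthogonal
    (Submodule.smul_mem _ _ hT.facePoint_sub_mem_orthogonal)
  have hyT : y ∈ (faceSpan p T)ᗮ := (Submodule.mem_orthogonal' _ _).2 fun z hz => by
    rw [hT.inner_eq_mul_inner_normal hyS hz, hy, inner_sub_left, real_inner_smul_left, hm,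
      supportNumber, sub_self, zero_mul]
  obtain ⟨W, t, hW, hTW, ht, hle, heq, hpos⟩ := hT.isPolarFace_right.exists_exit hp hy0 hyT
  obtain ⟨U, hU, hUW, -⟩ := hT.isPolarFace_right.exists_faceCov_inner_normal_pos_of_subset hW hTW
    hyT hpos
  obtain ⟨T', hD⟩ := hT.exists_diamond hU
  refine ⟨T', U, hD, ?_⟩
  have hexpand : ∀ V, ⟪facePoint p T + t • y - facePoint p S, normal p S V⟫_ℝ =
      ⟪facePoint p T - facePoint p S, normal p S V⟫_ℝ +
        t * (⟪facePoint p K - facePoint p S, normal p S V⟫_ℝ -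
          m * ⟪facePoint p T - facePoint p S, normal p S V⟫_ℝ) := fun V => by
    rw [add_sub_right_comm, inner_add_left, real_inner_smul_left, hy,
      inner_sub_left (facePoint p K - facePoint p S), real_inner_smul_left]
  have hT' := hD.right.inner_sub_facePoint_eq fun i hi => heq i (hUW (hD.right_top.subset hi))
  have hK' := hK.inner_sub_facePoint_le
    (fun i hi => heq i (hUW (hU.subset (hT.subset hi)))) fun i _ => hle i
  rw [hexpand] at hT' hK'
  have hTT' := hD.right.inner_facePoint_sub_lt_of_ne hT hD.ne.symm
  have hTK := hK.inner_facePoint_sub_lt_of_ne hT hne.symm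
  have hKT := hm ▸ hT.inner_facePoint_sub_lt_of_ne hK hne
  have hm1 : m < 1 := (mul_lt_iff_lt_one_left hT.supportNumber_pos).1 hKT
  rw [← supportNumber] at hK'
  by_contra! hge
  have htm : 1 ≤ t * m := by
    by_contra! hlt
    nlinarith [mul_le_mul_of_nonneg_left hge ht.le]
  nlinarith [mul_pos (mul_pos ht (sub_pos.2 hm1)) hK.supportNumber_pos,
    mul_le_mul_of_nonneg_left hTK.le (sub_nonneg.2 htm)]

lemma eq_of_forall_diamond (hp : PositivelySpans p) (hrank : faceRank p S + 2 ≤ finrank ℝ E)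
    {X : Type*} {f : Set ι → X} (hf : ∀ T T' U, Diamond p S T T' U → f T = f T')
    (hT : FaceCov p S T) (hK : FaceCov p S K) : f T = f K := by
  by_contra hne
  -- The facet with the value `f T` that faces `K` the most still has a neighbour facing `K` more.
  obtain ⟨R, ⟨hR, hRT⟩, hmax⟩ := Set.exists_max_image {V | FaceCov p S V ∧ f V = f T}
    (fun V => ⟪facePoint p K - facePoint p S, normal p S V⟫_ℝ / supportNumber p S V)
    (Set.toFinite _) ⟨T, hT, rfl⟩
  have hRK : R ≠ K := fun h => hne (h ▸ hRT).symm
  obtain ⟨R', U, hD, hlt⟩ := exists_diamond_lt hp hrank hR hK hRK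
    (div_mul_cancel₀ _ hR.supportNumber_pos.ne').symm
  exact ((lt_div_iff₀ hD.right.supportNumber_pos).2 hlt).not_ge
    (hmax R' ⟨hD.right, (hf R R' U hD).symm.trans hRT⟩)

end Connectivity

end Diamonds

/-! ### Volumes of faces and the Minkowski relation -/

section Volume

variable {ι E : Type*} [NormedAddCommGroup E] [InnerProductSpace ℝ E]

/-- The dimension of the face of the polar polytope with tight set `S`. -/
noncomputable def corank (p : ι → E) (S : Set ι) : ℕ :=
  finrank ℝ E - faceRank p S

variable [FiniteDimensional ℝ E] {p : ι → E} {S T U : Set ι} {k : ℕ}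

lemma FaceCov.corank_left (h : FaceCov p S T) : corank p S = corank p T + 1 := by
  have hT : faceRank p T ≤ finrank ℝ E := Submodule.finrank_le _
  have hrank := h.faceRank_right
  rw [corank, corank]
  omega

lemma faceRank_eq_of_corank_eq_zero (hk : corank p S = 0) : faceRank p S = finrank ℝ E :=
  (Submodule.finrank_le _).antisymm (Nat.sub_eq_zero_iff_le.1 hk)

variable [Finite ι]

/-- The volume of the face `S` of the polar polytope in its own dimension, computed by cutting the
face into the pyramids over its facets with apex `facePoint p S`. -/
noncomputable def faceVolume (p : ι → E) (S : Set ι) : ℝ :=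
  if corank p S = 0 then 1
  else (∑ T ∈ (covers p S).attach, supportNumber p S T * faceVolume p T) / corank p S
termination_by corank p S
decreasing_by
  rw [(mem_covers.1 T.2).corank_left]
  exact Nat.lt_succ_self _

lemma faceVolume_of_corank_eq_zero (hk : corank p S = 0) : faceVolume p S = 1 := by
  rw [faceVolume, if_pos hk]

lemma succ_mul_faceVolume (hk : corank p S = k + 1) :
    (k + 1 : ℝ) * faceVolume p S = ∑ T ∈ covers p S, supportNumber p S T * faceVolume p T := by
  rw [faceVolume, if_neg (by omega),
    Finset.sum_attach (covers p S) fun T => supportNumber p S T * faceVolume p T, hk,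
    Nat.cast_succ, mul_div_cancel₀ _ k.cast_add_one_ne_zero]

namespace IsPolarFace

lemma exists_faceCov_of_corank (hp : PositivelySpans p) (hS : IsPolarFace p S)
    (hk : corank p S = k + 1) : ∃ T, FaceCov p S T :=
  hS.exists_faceCov hp (Nat.lt_of_sub_eq_succ hk)

lemma faceVolume_pos (hp : PositivelySpans p) (hS : IsPolarFace p S) : 0 < faceVolume p S := by
  induction hk : corank p S generalizing S with
  | zero => rw [faceVolume_of_corank_eq_zero hk]; exact one_pos
  | succ k ih =>
    obtain ⟨T, hT⟩ := hS.exists_faceCov_of_corank hp hk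
    have hsum : 0 < ∑ T ∈ covers p S, supportNumber p S T * faceVolume p T :=
      Finset.sum_pos (fun V hV => by
        rw [mem_covers] at hV
        exact mul_pos hV.supportNumber_pos
          (ih hV.isPolarFace_right (by rw [hV.corank_left] at hk; omega))) ⟨T, mem_covers.2 hT⟩
    rw [← succ_mul_faceVolume hk] at hsum
    exact pos_of_mul_pos_right hsum k.cast_add_one_pos.le

end IsPolarFace

lemma succ_mul_faceVolume_eq_of_sum_eq_zero (hk : corank p S = k + 1)
    (hsum : ∀ y, ∑ T ∈ covers p S, faceVolume p T * ⟪y, normal p S T⟫_ℝ = 0) (q : E) :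
    (k + 1 : ℝ) * faceVolume p S =
      ∑ T ∈ covers p S, faceVolume p T * ⟪facePoint p T - q, normal p S T⟫_ℝ := by
  rw [succ_mul_faceVolume hk, ← add_zero (∑ T ∈ covers p S, _), ← hsum (facePoint p S - q),
    ← Finset.sum_add_distrib]
  refine Finset.sum_congr rfl fun T _ => ?_
  rw [supportNumber, mul_comm, ← mul_add, ← inner_add_left, sub_add_sub_cancel]

/-- Decompose the volumes of the facets with respect to the common apex `facePoint p S`; the
contributions of the two facets at each ridge can then be interchanged. -/
lemma sum_faceVolume_mul_inner_normal_of_facets (hk : corank p S = k + 2)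
    (hsum : ∀ T, FaceCov p S T →
      ∀ y, ∑ U ∈ covers p T, faceVolume p U * ⟪y, normal p T U⟫_ℝ = 0) (y : E) :
    ∑ T ∈ covers p S, faceVolume p T * ⟪y, normal p S T⟫_ℝ = 0 := by
  refine (mul_eq_zero.1 ?_).resolve_left (k.cast_add_one_ne_zero (R := ℝ))
  calc (k + 1 : ℝ) * ∑ T ∈ covers p S, faceVolume p T * ⟪y, normal p S T⟫_ℝ
      = ∑ T ∈ covers p S, ∑ U ∈ covers p T, faceVolume p U *
          (⟪y, normal p S T⟫_ℝ * ⟪facePoint p U - facePoint p S, normal p T U⟫_ℝ) := by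
        rw [Finset.mul_sum]
        refine Finset.sum_congr rfl fun T hT => ?_
        rw [mem_covers] at hT
        rw [← mul_assoc, succ_mul_faceVolume_eq_of_sum_eq_zero
          (by rw [hT.corank_left] at hk; omega) (hsum T hT) (facePoint p S), Finset.sum_mul]
        exact Finset.sum_congr rfl fun U _ => by ring
    _ = ∑ T ∈ covers p S, ∑ U ∈ covers p T, faceVolume p U *
          (supportNumber p S T * ⟪y, normal p T U⟫_ℝ) := by
        rw [sum_covers_sum_covers, sum_covers_sum_covers]
        refine Finset.sum_congr rfl fun U hU => ?_
        obtain ⟨T, hT, hTU⟩ := mem_secondCovers.1 hU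
        rw [← Finset.mul_sum, ← Finset.mul_sum, hT.sum_between_inner_mul_comm hTU]
        refine congrArg _ (Finset.sum_congr rfl fun V hV => ?_)
        rw [mem_between] at hV
        rw [hV.1.inner_facePoint_sub_eq hV.2.isPolarFace_right hV.2.subset]
    _ = 0 := Finset.sum_eq_zero fun T hT => by
        rw [← mul_zero (supportNumber p S T), ← hsum T (mem_covers.1 hT) y, Finset.mul_sum]
        exact Finset.sum_congr rfl fun U _ => by ring

namespace IsPolarFace

lemma sum_faceVolume_mul_inner_normal (hp : PositivelySpans p) (hS : IsPolarFace p S)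
    (hk : corank p S = k + 1) (y : E) :
    ∑ T ∈ covers p S, faceVolume p T * ⟪y, normal p S T⟫_ℝ = 0 := by
  induction k generalizing S y with
  | zero =>
    obtain ⟨T, hT⟩ := hS.exists_faceCov_of_corank hp hk
    have hT0 : corank p T = 0 := by rw [hT.corank_left] at hk; omega
    have hrank := faceRank_eq_of_corank_eq_zero hT0
    obtain ⟨T', hT', hne, hneg⟩ := hT.exists_normal_eq_neg hp hrank
    have hT'0 : corank p T' = 0 := by rw [hT'.corank_left] at hk; omega
    rw [hT.sum_covers_eq_add hT' hne hrank hneg, hneg, faceVolume_of_corank_eq_zero hT0,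
      faceVolume_of_corank_eq_zero hT'0, inner_neg_right, one_mul, one_mul, add_neg_cancel]
  | succ k ih =>
    exact sum_faceVolume_mul_inner_normal_of_facets hk (fun T hT z =>
      ih hT.isPolarFace_right (by rw [hT.corank_left] at hk; omega) z) y

lemma succ_mul_faceVolume_eq (hp : PositivelySpans p) (hS : IsPolarFace p S)
    (hk : corank p S = k + 1) (q : E) :
    (k + 1 : ℝ) * faceVolume p S =
      ∑ T ∈ covers p S, faceVolume p T * ⟪facePoint p T - q, normal p S T⟫_ℝ :=
  succ_mul_faceVolume_eq_of_sum_eq_zero hk (hS.sum_faceVolume_mul_inner_normal hp hk) q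

end IsPolarFace

end Volume

/-! ### The mixed volume form of a face -/

section Mixed

variable {ι E : Type*} [NormedAddCommGroup E] [InnerProductSpace ℝ E] [FiniteDimensional ℝ E]
  {p : ι → E} {S T T' U : Set ι} {k : ℕ} {x : Set ι → ℝ}

lemma Diamond.inner_eq (h : Diamond p S T T' U) {w w' z : E}
    (hT : ⟪w, normal p S T⟫_ℝ = ⟪w', normal p S T⟫_ℝ)
    (hT' : ⟪w, normal p S T'⟫_ℝ = ⟪w', normal p S T'⟫_ℝ)
    (hz : z ∈ faceSpan p U) (hzS : z ∈ (faceSpan p S)ᗮ) : ⟪w, z⟫_ℝ = ⟪w', z⟫_ℝ := by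
  obtain ⟨c, s, hs, -, heq, -⟩ := h.exists_reflection
  rw [heq] at hT'
  simp only [inner_add_right, real_inner_smul_right, hT, add_right_inj] at hT'
  rw [h.left.eq_add_inner_smul_normal h.left_top hz hzS]
  simp only [inner_add_right, real_inner_smul_right, hT, mul_left_cancel₀ hs.ne' hT']

variable [Finite ι]

lemma exists_cornerLift (p : ι → E) (S U : Set ι) : ∃ L : (Set ι → ℝ) →ₗ[ℝ] E,
    ∀ x V, FaceCov p S V → FaceCov p V U → ⟪L x, normal p S V⟫_ℝ = x V := by
  by_cases hne : ∃ T, FaceCov p S T ∧ FaceCov p T U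
  · obtain ⟨T, hT, hTU⟩ := hne
    obtain ⟨T', hD⟩ := hT.exists_diamond hTU
    obtain ⟨c, s, hs, -, heq, -⟩ := hD.exists_reflection
    let coord (V : Set ι) : (Set ι → ℝ) →ₗ[ℝ] ℝ := LinearMap.proj V
    refine ⟨(coord T).smulRight (normal p S T) +
      (s⁻¹ • (coord T' - c • coord T)).smulRight (normal p T U), fun x V hV hVU => ?_⟩
    simp only [coord, LinearMap.add_apply, LinearMap.smulRight_apply, LinearMap.smul_apply,
      LinearMap.sub_apply, LinearMap.proj_apply, smul_eq_mul]
    have hperp := hTU.inner_normal_eq_zero (S := S)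
    rcases hD.eq_or_eq hV hVU with rfl | rfl
    · simp only [inner_add_left, real_inner_smul_left, hT.inner_normal_self,
        real_inner_comm (normal p S V) (normal p V U), hperp]
      ring
    · rw [heq]
      simp only [inner_add_left, inner_add_right, real_inner_smul_left, real_inner_smul_right,
        hT.inner_normal_self, hTU.inner_normal_self, hperp,
        real_inner_comm (normal p S T) (normal p T U)]
      field_simp
      ring
  · exact ⟨0, fun x V hV hVU => absurd ⟨V, hV, hVU⟩ hne⟩

/-- A point, depending linearly on `x`, at signed height `x V` over each facet `V` of `S` that
contains the ridge `U`. -/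
noncomputable def cornerLift (p : ι → E) (S U : Set ι) : (Set ι → ℝ) →ₗ[ℝ] E :=
  (exists_cornerLift p S U).choose

lemma FaceCov.inner_cornerLift (h : FaceCov p S T) (h' : FaceCov p T U) (x : Set ι → ℝ) :
    ⟪cornerLift p S U x, normal p S T⟫_ℝ = x T :=
  (exists_cornerLift p S U).choose_spec x T h h'

/-- The support numbers induced on the facet `T` of `S` when the facets of `S` are moved to the
support numbers `x`. -/
noncomputable def induced (p : ι → E) (S T : Set ι) : (Set ι → ℝ) →ₗ[ℝ] Set ι → ℝ :=
  LinearMap.pi fun U => innerₗ E (normal p T U) ∘ₗ cornerLift p S U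

lemma induced_apply (p : ι → E) (S T U : Set ι) (x : Set ι → ℝ) :
    induced p S T x U = ⟪cornerLift p S U x, normal p T U⟫_ℝ := by
  rw [real_inner_comm]
  rfl

namespace FaceCov

lemma inner_cornerLift_eq (h : FaceCov p S T) (h' : FaceCov p T U) {w z : E}
    (hw : ∀ V, FaceCov p S V → FaceCov p V U → ⟪w, normal p S V⟫_ℝ = x V)
    (hz : z ∈ faceSpan p U) (hzS : z ∈ (faceSpan p S)ᗮ) : ⟪cornerLift p S U x, z⟫_ℝ = ⟪w, z⟫_ℝ := by
  obtain ⟨T', hD⟩ := h.exists_diamond h'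
  exact hD.inner_eq (by rw [h.inner_cornerLift h', hw T h h'])
    (by rw [hD.right.inner_cornerLift hD.right_top, hw T' hD.right hD.right_top]) hz hzS

lemma inner_cornerLift_eq_add (h : FaceCov p S T) (h' : FaceCov p T U) (x : Set ι → ℝ) {z : E}
    (hz : z ∈ faceSpan p U) (hzS : z ∈ (faceSpan p S)ᗮ) : ⟪cornerLift p S U x, z⟫_ℝ =
      ⟪z, normal p S T⟫_ℝ * x T + ⟪z, normal p T U⟫_ℝ * induced p S T x U := by
  conv_lhs => rw [h.eq_add_inner_smul_normal h' hz hzS]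
  rw [inner_add_right, real_inner_smul_right, real_inner_smul_right, h.inner_cornerLift h',
    induced_apply]

lemma induced_eq (h : FaceCov p S T) (h' : FaceCov p T U) {w : E}
    (hw : ∀ V, FaceCov p S V → FaceCov p V U → ⟪w, normal p S V⟫_ℝ = x V) :
    induced p S T x U = ⟪w, normal p T U⟫_ℝ := by
  rw [induced_apply]
  exact h.inner_cornerLift_eq h' hw normal_mem_faceSpan
    (Submodule.orthogonal_le (faceSpan_mono h.subset) h'.normal_mem_orthogonal)

lemma induced_congr (h : FaceCov p S T) (h' : FaceCov p T U) {x y : Set ι → ℝ}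
    (hxy : ∀ V, FaceCov p S V → x V = y V) : induced p S T x U = induced p S T y U := by
  rw [induced_apply p S T U y]
  exact h.induced_eq h' fun V hV hVU => by rw [hV.inner_cornerLift hVU, hxy V hV]

lemma induced_inner_normal (h : FaceCov p S T) (h' : FaceCov p T U) (y : E) :
    induced p S T (fun V => ⟪y, normal p S V⟫_ℝ) U = ⟪y, normal p T U⟫_ℝ :=
  h.induced_eq h' fun _ _ _ => rfl

lemma induced_supportNumber (h : FaceCov p S T) (h' : FaceCov p T U) :
    induced p S T (supportNumber p S) U = ⟪facePoint p U - facePoint p S, normal p T U⟫_ℝ :=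
  h.induced_eq h' fun _ hV hVU => hV.inner_facePoint_sub_eq hVU.isPolarFace_right hVU.subset

end FaceCov

/-- Up to a constant factor, the mixed volume of the facet `T` of `S` with all but one entry equal
to `T` itself and the last one given by the support numbers `x`. -/
noncomputable def facetMixed (p : ι → E) (S T : Set ι) : (Set ι → ℝ) →ₗ[ℝ] ℝ :=
  ∑ U ∈ covers p T, faceVolume p U • (LinearMap.proj U ∘ₗ induced p S T)

lemma facetMixed_apply (p : ι → E) (S T : Set ι) (x : Set ι → ℝ) :
    facetMixed p S T x = ∑ U ∈ covers p T, faceVolume p U * induced p S T x U := by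
  simp [facetMixed]

/-- Up to a constant factor, the mixed volume of the face `S` with all but two entries equal to
`S` itself and the last two given by support numbers of the facets of `S`. -/
noncomputable def mixedForm (p : ι → E) (S : Set ι) : LinearMap.BilinForm ℝ (Set ι → ℝ) :=
  ∑ T ∈ covers p S, LinearMap.BilinForm.linMulLin (LinearMap.proj T) (facetMixed p S T)

lemma mixedForm_apply (p : ι → E) (S : Set ι) (x y : Set ι → ℝ) :
    mixedForm p S x y = ∑ T ∈ covers p S, x T * facetMixed p S T y := by
  simp [mixedForm]

lemma FaceCov.facetMixed_congr (h : FaceCov p S T) {x y : Set ι → ℝ}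
    (hxy : ∀ V, FaceCov p S V → x V = y V) : facetMixed p S T x = facetMixed p S T y := by
  simp only [facetMixed_apply]
  exact Finset.sum_congr rfl fun U hU => by rw [h.induced_congr (mem_covers.1 hU) hxy]

lemma mixedForm_congr {x y x' y' : Set ι → ℝ} (hx : ∀ V, FaceCov p S V → x V = x' V)
    (hy : ∀ V, FaceCov p S V → y V = y' V) : mixedForm p S x y = mixedForm p S x' y' := by
  simp only [mixedForm_apply]
  exact Finset.sum_congr rfl fun T hT => by
    rw [hx T (mem_covers.1 hT), (mem_covers.1 hT).facetMixed_congr hy]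

lemma mixedForm_apply_eq_sum_secondCovers (p : ι → E) (S : Set ι) (x y : Set ι → ℝ) :
    mixedForm p S x y = ∑ U ∈ secondCovers p S, faceVolume p U * ∑ T ∈ between p S U,
      ⟪cornerLift p S U x, normal p S T⟫_ℝ * ⟪cornerLift p S U y, normal p T U⟫_ℝ := by
  simp only [mixedForm_apply, facetMixed_apply, Finset.mul_sum]
  rw [sum_covers_sum_covers]
  refine Finset.sum_congr rfl fun U _ => Finset.sum_congr rfl fun T hT => ?_
  rw [mem_between] at hT
  rw [hT.1.inner_cornerLift hT.2, induced_apply]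
  ring

lemma mixedForm_isSymm (p : ι → E) (S : Set ι) : (mixedForm p S).IsSymm := ⟨fun x y => by
  rw [mixedForm_apply_eq_sum_secondCovers, mixedForm_apply_eq_sum_secondCovers]
  refine Finset.sum_congr rfl fun U hU => ?_
  obtain ⟨T, hT, hTU⟩ := mem_secondCovers.1 hU
  rw [hT.sum_between_inner_mul_comm hTU]⟩

namespace FaceCov

lemma facetMixed_supportNumber (hp : PositivelySpans p) (h : FaceCov p S T)
    (hk : corank p S = k + 2) :
    facetMixed p S T (supportNumber p S) = (k + 1 : ℝ) * faceVolume p T := by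
  rw [h.isPolarFace_right.succ_mul_faceVolume_eq hp (by rw [h.corank_left] at hk; omega)
    (facePoint p S), facetMixed_apply]
  exact Finset.sum_congr rfl fun U hU => by rw [h.induced_supportNumber (mem_covers.1 hU)]

lemma facetMixed_inner_normal (hp : PositivelySpans p) (h : FaceCov p S T)
    (hk : corank p S = k + 2) (y : E) :
    facetMixed p S T (fun V => ⟪y, normal p S V⟫_ℝ) = 0 := by
  rw [← h.isPolarFace_right.sum_faceVolume_mul_inner_normal hp
    (k := k) (by rw [h.corank_left] at hk; omega) y, facetMixed_apply]
  exact Finset.sum_congr rfl fun U hU => by rw [h.induced_inner_normal (mem_covers.1 hU)]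

end FaceCov

lemma mixedForm_supportNumber (hp : PositivelySpans p) (hk : corank p S = k + 2)
    (x : Set ι → ℝ) : mixedForm p S x (supportNumber p S) =
      (k + 1 : ℝ) * ∑ T ∈ covers p S, x T * faceVolume p T := by
  rw [mixedForm_apply, Finset.mul_sum]
  refine Finset.sum_congr rfl fun T hT => ?_
  rw [(mem_covers.1 hT).facetMixed_supportNumber hp hk]
  ring

lemma mixedForm_supportNumber_self (hp : PositivelySpans p) (hk : corank p S = k + 2) :
    mixedForm p S (supportNumber p S) (supportNumber p S) =
      (k + 1 : ℝ) * ((k + 2 : ℝ) * faceVolume p S) := by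
  rw [mixedForm_supportNumber hp hk, ← succ_mul_faceVolume hk]
  push_cast
  ring

lemma IsPolarFace.mixedForm_supportNumber_self_pos (hp : PositivelySpans p)
    (hS : IsPolarFace p S) (hk : corank p S = k + 2) :
    0 < mixedForm p S (supportNumber p S) (supportNumber p S) := by
  rw [mixedForm_supportNumber_self hp hk]
  have := hS.faceVolume_pos hp
  positivity

lemma mixedForm_inner_normal (hp : PositivelySpans p) (hk : corank p S = k + 2)
    (x : Set ι → ℝ) (y : E) : mixedForm p S x (fun V => ⟪y, normal p S V⟫_ℝ) = 0 := by
  rw [mixedForm_apply]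
  refine Finset.sum_eq_zero fun T hT => ?_
  rw [(mem_covers.1 hT).facetMixed_inner_normal hp hk, mul_zero]

/-- The Alexandrov-Fenchel inequality for the mixed volume form of `S`, in Lorentzian form and with
its equality case: the form is nonpositive on the orthogonal complement of the support numbers of
`S`, and its isotropic vectors there come from translations. -/
def IsHyperbolic (p : ι → E) (S : Set ι) : Prop :=
  ∀ x, mixedForm p S x (supportNumber p S) = 0 → mixedForm p S x x ≤ 0 ∧
    (mixedForm p S x x = 0 → ∃ y : E, ∀ T, FaceCov p S T → x T = ⟪y, normal p S T⟫_ℝ)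

lemma FaceCov.facetMixed_eq_zero (hp : PositivelySpans p) (h : FaceCov p S T)
    (hk : corank p S = k + 2)
    (hneg : ∀ z, mixedForm p S z (supportNumber p S) = 0 → mixedForm p S z z ≤ 0)
    (hx : mixedForm p S x (supportNumber p S) = 0) (hxx : mixedForm p S x x = 0) :
    facetMixed p S T x = 0 := by
  classical
  have hzero := apply_eq_zero_of_isotropic (mixedForm_isSymm p S)
    (h.isPolarFace_left.mixedForm_supportNumber_self_pos hp hk) hneg hx hxx (Pi.single T 1)
  rw [(mixedForm_isSymm p S).eq, mixedForm_apply,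
    Finset.sum_eq_single_of_mem T (mem_covers.2 h) fun V _ hV => by
      rw [Pi.single_eq_of_ne hV, zero_mul], Pi.single_eq_same, one_mul] at hzero
  exact hzero

lemma IsHyperbolic.mul_le_sq (hp : PositivelySpans p) (hS : IsPolarFace p S)
    (hk : corank p S = k + 2) (h : IsHyperbolic p S) (x : Set ι → ℝ) :
    mixedForm p S x x * mixedForm p S (supportNumber p S) (supportNumber p S) ≤
      mixedForm p S x (supportNumber p S) ^ 2 :=
  mul_apply_self_le_sq (mixedForm_isSymm p S) (hS.mixedForm_supportNumber_self_pos hp hk)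
    (fun z hz => (h z hz).1) x

end Mixed

/-! ### Minkowski's inequality for planar faces -/

section Planar

variable {ι E : Type*} [NormedAddCommGroup E] [InnerProductSpace ℝ E] [FiniteDimensional ℝ E]
  {p : ι → E} {S T T' U V : Set ι} {x : Set ι → ℝ} {e y : E}

lemma FaceCov.mem_orthogonal_of_inner_normal_eq_zero (h : FaceCov p S T)
    (hy : y ∈ (faceSpan p S)ᗮ) (hyT : ⟪y, normal p S T⟫_ℝ = 0) : y ∈ (faceSpan p T)ᗮ :=
  (Submodule.mem_orthogonal' _ _).2 fun z hz => by
    rw [h.inner_eq_mul_inner_normal hy hz, hyT, zero_mul]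

lemma Diamond.mem_orthogonal (h : Diamond p S T T' U) (hy : y ∈ (faceSpan p S)ᗮ)
    (hyT : ⟪y, normal p S T⟫_ℝ = 0) (hyT' : ⟪y, normal p S T'⟫_ℝ = 0) : y ∈ (faceSpan p U)ᗮ := by
  refine h.left_top.mem_orthogonal_of_inner_normal_eq_zero
    (h.left.mem_orthogonal_of_inner_normal_eq_zero hy hyT) ?_
  rw [h.inner_eq (w' := 0) (by rw [hyT, inner_zero_left]) (by rw [hyT', inner_zero_left])
    normal_mem_faceSpan (Submodule.orthogonal_le (faceSpan_mono h.left.subset)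
      h.left_top.normal_mem_orthogonal), inner_zero_left]

lemma Diamond.inner_eq_cornerLift_right [Finite ι] (h : Diamond p S T T' U) {w z : E}
    (hT' : ⟪w, normal p S T'⟫_ℝ = x T') (hU : ⟪w, normal p T' U⟫_ℝ = induced p S T' x U)
    (hz : z ∈ faceSpan p U) (hzS : z ∈ (faceSpan p S)ᗮ) : ⟪w, z⟫_ℝ = ⟪cornerLift p S U x, z⟫_ℝ := by
  rw [h.right.inner_cornerLift_eq_add h.right_top x hz hzS]
  conv_lhs => rw [h.right.eq_add_inner_smul_normal h.right_top hz hzS]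
  rw [inner_add_right, real_inner_smul_right, real_inner_smul_right, hT', hU]

/-- The vectors `Y T` and `Y T'` of adjacent facets coincide, so all of them do. -/
lemma exists_forall_eq_inner_normal [Finite ι] (hp : PositivelySpans p)
    (hrank : faceRank p S + 2 ≤ finrank ℝ E) (Y : Set ι → E)
    (hY : ∀ T, FaceCov p S T → Y T ∈ (faceSpan p S)ᗮ)
    (hYS : ∀ T, FaceCov p S T → ⟪Y T, normal p S T⟫_ℝ = x T)
    (hYT : ∀ T U, FaceCov p S T → FaceCov p T U → ⟪Y T, normal p T U⟫_ℝ = induced p S T x U)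
    (hYU : ∀ T T' U W, Diamond p S T T' U → FaceCov p U W →
      ⟪Y T, normal p U W⟫_ℝ = ⟪Y T', normal p U W⟫_ℝ) :
    ∃ y : E, ∀ T, FaceCov p S T → x T = ⟪y, normal p S T⟫_ℝ := by
  have hYeq : ∀ T T' U, Diamond p S T T' U → Y T = Y T' := fun T T' U h => by
    by_contra hne
    have hlift : ∀ z ∈ faceSpan p U, z ∈ (faceSpan p S)ᗮ → ⟪Y T - Y T', z⟫_ℝ = 0 :=
        fun z hz hzS => by
      rw [inner_sub_left, h.inner_eq_cornerLift_right (hYS T' h.right)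
        (hYT T' U h.right h.right_top) hz hzS, h.symm.inner_eq_cornerLift_right (hYS T h.left)
        (hYT T U h.left h.left_top) hz hzS, sub_self]
    have hS := Submodule.sub_mem _ (hY T h.left) (hY T' h.right)
    have hU := h.mem_orthogonal hS
      (hlift _ (faceSpan_mono h.left_top.subset normal_mem_faceSpan) h.left.normal_mem_orthogonal)
      (hlift _ (faceSpan_mono h.right_top.subset normal_mem_faceSpan) h.right.normal_mem_orthogonal)
    obtain ⟨W, hW, hpos⟩ := h.left_top.isPolarFace_right.exists_faceCov_inner_normal_pos hp
      (sub_ne_zero.2 hne) hU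
    rw [inner_sub_left, hYU T T' U W h hW, sub_self] at hpos
    exact hpos.false
  by_cases hex : ∃ R, FaceCov p S R
  · obtain ⟨R, hR⟩ := hex
    exact ⟨Y R, fun T hT => by rw [← hYS T hT, eq_of_forall_diamond hp hrank hYeq hT hR]⟩
  · exact ⟨0, fun T hT => absurd ⟨T, hT⟩ hex⟩

lemma exists_mem_orthogonal_forall_inner_normal_ne_zero [Finite ι] (p : ι → E) (S : Set ι) :
    ∃ e ∈ (faceSpan p S)ᗮ, ∀ T U, FaceCov p S T → FaceCov p T U → ⟪normal p T U, e⟫_ℝ ≠ 0 := by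
  obtain ⟨e, he, hne⟩ := Module.Dual.exists_forall_mem_ne_zero_of_forall_exists (faceSpan p S)ᗮ
    (fun q : {q : Set ι × Set ι // FaceCov p S q.1 ∧ FaceCov p q.1 q.2} =>
      innerₗ E (normal p q.1.1 q.1.2)) fun q => ⟨normal p q.1.1 q.1.2,
        Submodule.orthogonal_le (faceSpan_mono q.2.1.subset) q.2.2.normal_mem_orthogonal, by
          rw [innerₗ_apply_apply, q.2.2.inner_normal_self]
          exact one_ne_zero⟩
  exact ⟨e, he, fun T U hT hU => hne ⟨(T, U), hT, hU⟩⟩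

namespace Diamond

lemma exists_inner_normal_mul_add (h : Diamond p S T T' U) (heU : e ∈ faceSpan p U)
    (heS : e ∈ (faceSpan p S)ᗮ) : ∃ s : ℝ, 0 < s ∧ ∀ w : E,
      ⟪normal p T' U, e⟫_ℝ * ⟪w, normal p S T⟫_ℝ + ⟪normal p T U, e⟫_ℝ * ⟪w, normal p S T'⟫_ℝ =
        s * ⟪w, e⟫_ℝ := by
  obtain ⟨c, s, hs, -, hT', hT'U⟩ := h.exists_reflection
  refine ⟨s, hs, fun w => ?_⟩
  conv_rhs => rw [h.left.eq_add_inner_smul_normal h.left_top heU heS]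
  rw [hT', hT'U]
  simp only [inner_add_right, inner_sub_left, real_inner_smul_left, real_inner_smul_right,
    real_inner_comm (normal p S T) e, real_inner_comm (normal p T U) e]
  ring

/-- A local maximum of the linear functional `e` over the polar polytope is a global one. -/
lemma inner_facePoint_lt (h : Diamond p S T T' U) (heU : e ∈ faceSpan p U)
    (heS : e ∈ (faceSpan p S)ᗮ) (hpos : 0 < ⟪normal p T U, e⟫_ℝ)
    (hpos' : 0 < ⟪normal p T' U, e⟫_ℝ) (hV : IsPolarFace p V) (hSV : S ⊆ V) (hUV : ¬U ⊆ V) :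
    ⟪facePoint p V, e⟫_ℝ < ⟪facePoint p U, e⟫_ℝ := by
  obtain ⟨s, hs, hw⟩ := h.exists_inner_normal_mul_add heU heS
  specialize hw (facePoint p U - facePoint p V)
  have hU := h.left_top.isPolarFace_right
  have hnonneg : ∀ R, FaceCov p S R → R ⊆ U →
      0 ≤ ⟪facePoint p U - facePoint p V, normal p S R⟫_ℝ := fun R hR hRU => by
    have hle := hR.inner_sub_facePoint_le (fun i hi => hV.inner_facePoint_eq (hSV hi))
      fun i _ => hV.inner_facePoint_le i
    rw [← sub_sub_sub_cancel_right _ _ (facePoint p S), inner_sub_left,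
      hR.inner_facePoint_sub_eq hU hRU]
    exact sub_nonneg.2 hle
  have hT := hnonneg T h.left h.left_top.subset
  have hT' := hnonneg T' h.right h.right_top.subset
  have hne : ¬(⟪facePoint p U - facePoint p V, normal p S T⟫_ℝ = 0 ∧
      ⟪facePoint p U - facePoint p V, normal p S T'⟫_ℝ = 0) := fun h0 => by
    obtain ⟨j, hjU, hjV⟩ := Set.not_subset.1 hUV
    have hS : facePoint p U - facePoint p V ∈ (faceSpan p S)ᗮ := mem_orthogonal_faceSpan.2
      fun i hi => by
        rw [inner_sub_left, hU.inner_facePoint_eq (h.left_top.subset (h.left.subset hi)),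
          hV.inner_facePoint_eq (hSV hi), sub_self]
    have hzero := mem_orthogonal_faceSpan.1 (h.mem_orthogonal hS h0.1 h0.2) j hjU
    exact (hV.inner_facePoint_sub_pos hU hjU hjV).ne' hzero
  rw [← sub_pos, ← inner_sub_left]
  refine pos_of_mul_pos_right (hw ▸ ?_) hs.le
  rcases hT.eq_or_lt with h0 | hlt
  · exact add_pos_of_nonneg_of_pos (mul_nonneg hpos'.le hT)
      (mul_pos hpos (hT'.lt_of_ne' fun h0' => hne ⟨h0.symm, h0'⟩))
  · exact add_pos_of_pos_of_nonneg (mul_pos hpos' hlt) (mul_nonneg hpos.le hT')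

end Diamond

lemma FaceCov.corank_eq_of_faceCov {k : ℕ} (h : FaceCov p S T) (h' : FaceCov p T U)
    (hk : corank p S = k + 2) : corank p U = k := by
  rw [h.corank_left, h'.corank_left] at hk
  exact Nat.add_right_cancel (m := 2) hk

lemma faceSpan_eq_top_of_corank_eq_zero (hk : corank p U = 0) : faceSpan p U = ⊤ :=
  Submodule.eq_top_of_finrank_eq (faceRank_eq_of_corank_eq_zero hk)

lemma Diamond.eq_of_inner_facePoint_le (h : Diamond p S T T' U) (hk : corank p S = 2)
    (heS : e ∈ (faceSpan p S)ᗮ) (hpos : 0 < ⟪normal p T U, e⟫_ℝ)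
    (hpos' : 0 < ⟪normal p T' U, e⟫_ℝ) (hV : IsPolarFace p V) (hSV : S ⊆ V)
    (hle : ⟪facePoint p U, e⟫_ℝ ≤ ⟪facePoint p V, e⟫_ℝ) : U = V := by
  have hU : corank p U = 0 := h.left.corank_eq_of_faceCov h.left_top hk
  have heU : e ∈ faceSpan p U := by
    rw [faceSpan_eq_top_of_corank_eq_zero hU]
    exact Submodule.mem_top
  have hUV : U ⊆ V := of_not_not fun hUV =>
    (h.inner_facePoint_lt heU heS hpos hpos' hV hSV hUV).not_ge hle
  exact h.left_top.isPolarFace_right.eq_of_faceRank_le hV hUV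
    ((Submodule.finrank_le _).trans_eq (faceRank_eq_of_corank_eq_zero hU).symm)

lemma Diamond.eq_of_le_inner_facePoint (h : Diamond p S T T' U) (hk : corank p S = 2)
    (heS : e ∈ (faceSpan p S)ᗮ) (hneg : ⟪normal p T U, e⟫_ℝ < 0)
    (hneg' : ⟪normal p T' U, e⟫_ℝ < 0) (hV : IsPolarFace p V) (hSV : S ⊆ V)
    (hle : ⟪facePoint p V, e⟫_ℝ ≤ ⟪facePoint p U, e⟫_ℝ) : U = V :=
  h.eq_of_inner_facePoint_le (e := -e) hk (Submodule.neg_mem _ heS)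
    (by rwa [inner_neg_right, neg_pos]) (by rwa [inner_neg_right, neg_pos]) hV hSV
    (by rwa [inner_neg_right, inner_neg_right, neg_le_neg_iff])

variable [Finite ι]

lemma FaceCov.facetMixed_eq_sum_div (hp : PositivelySpans p) (h : FaceCov p S T)
    (hk : corank p S = 2) (heS : e ∈ (faceSpan p S)ᗮ)
    (he : ∀ U, FaceCov p T U → ⟪normal p T U, e⟫_ℝ ≠ 0) (x : Set ι → ℝ) :
    facetMixed p S T x =
      ∑ U ∈ covers p T, ⟪cornerLift p S U x, e⟫_ℝ / ⟪normal p T U, e⟫_ℝ := by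
  obtain ⟨U, hU⟩ := h.isPolarFace_right.exists_faceCov_of_corank hp (k := 0)
    (by rw [h.corank_left] at hk; exact Nat.add_right_cancel hk)
  have hrank := faceRank_eq_of_corank_eq_zero (h.corank_eq_of_faceCov hU hk)
  obtain ⟨U', hU', hne, hneg⟩ := hU.exists_normal_eq_neg hp hrank
  have hterm : ∀ V, FaceCov p T V → ⟪cornerLift p S V x, e⟫_ℝ =
      ⟪e, normal p S T⟫_ℝ * x T + ⟪normal p T V, e⟫_ℝ * induced p S T x V := fun V hV => by
    have heV : e ∈ faceSpan p V := by
      rw [faceSpan_eq_top_of_corank_eq_zero (h.corank_eq_of_faceCov hV hk)]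
      exact Submodule.mem_top
    rw [h.inner_cornerLift_eq_add hV x heV heS, real_inner_comm e (normal p T V)]
  have hUe := he U hU
  rw [facetMixed_apply, hU.sum_covers_eq_add hU' hne hrank hneg,
    hU.sum_covers_eq_add hU' hne hrank hneg, hterm U hU, hterm U' hU', hneg, inner_neg_left,
    faceVolume_of_corank_eq_zero (h.corank_eq_of_faceCov hU hk),
    faceVolume_of_corank_eq_zero (h.corank_eq_of_faceCov hU' hk)]
  field_simp
  ring

/-- At a vertex `U` with edges `T` and `T'`, the contribution to the mixed form is a positive
multiple of `⟪cornerLift p S U x, e⟫ ^ 2 / (⟪normal p T U, e⟫ * ⟪normal p T' U, e⟫)`, so only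
the vertices where `e` has an extremum could contribute positively. -/
lemma mixedForm_self_nonpos_of_inner_cornerLift_eq_zero (hp : PositivelySpans p)
    (hk : corank p S = 2) (heS : e ∈ (faceSpan p S)ᗮ)
    (he : ∀ T U, FaceCov p S T → FaceCov p T U → ⟪normal p T U, e⟫_ℝ ≠ 0)
    (hx : ∀ T T' U, Diamond p S T T' U → 0 < ⟪normal p T U, e⟫_ℝ * ⟪normal p T' U, e⟫_ℝ →
      ⟪cornerLift p S U x, e⟫_ℝ = 0) : mixedForm p S x x ≤ 0 := by
  have hsum : mixedForm p S x x = ∑ T ∈ covers p S, ∑ U ∈ covers p T,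
      x T * (⟪cornerLift p S U x, e⟫_ℝ / ⟪normal p T U, e⟫_ℝ) := by
    rw [mixedForm_apply]
    exact Finset.sum_congr rfl fun T hT => by
      rw [(mem_covers.1 hT).facetMixed_eq_sum_div hp hk heS (he T · (mem_covers.1 hT)),
        Finset.mul_sum]
  rw [hsum, sum_covers_sum_covers]
  refine Finset.sum_nonpos fun U hU => ?_
  obtain ⟨T, hT, hTU⟩ := mem_secondCovers.1 hU
  obtain ⟨T', h⟩ := hT.exists_diamond hTU
  have heU : e ∈ faceSpan p U := by
    rw [faceSpan_eq_top_of_corank_eq_zero (hT.corank_eq_of_faceCov hTU hk)]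
    exact Submodule.mem_top
  obtain ⟨s, hs, hw⟩ := h.exists_inner_normal_mul_add heU heS
  specialize hw (cornerLift p S U x)
  rw [h.left.inner_cornerLift h.left_top, h.right.inner_cornerLift h.right_top] at hw
  have hT0 := he T U h.left h.left_top
  have hT'0 := he T' U h.right h.right_top
  have hvertex : x T * (⟪cornerLift p S U x, e⟫_ℝ / ⟪normal p T U, e⟫_ℝ) +
      x T' * (⟪cornerLift p S U x, e⟫_ℝ / ⟪normal p T' U, e⟫_ℝ) =
      s * ⟪cornerLift p S U x, e⟫_ℝ ^ 2 / (⟪normal p T U, e⟫_ℝ * ⟪normal p T' U, e⟫_ℝ) := by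
    rw [eq_div_iff (mul_ne_zero hT0 hT'0)]
    field_simp
    linear_combination ⟪cornerLift p S U x, e⟫_ℝ * hw
  rw [h.sum_between, hvertex]
  rcases lt_or_gt_of_ne (mul_ne_zero hT0 hT'0) with hneg | hpos
  · exact div_nonpos_of_nonneg_of_nonpos (by positivity) hneg.le
  · rw [hx T T' U h hpos, zero_pow two_ne_zero, mul_zero, zero_div]

lemma mixedForm_sub_sub_self (hp : PositivelySpans p) {k : ℕ} (hk : corank p S = k + 2)
    (hx : mixedForm p S x (supportNumber p S) = 0) (a : ℝ) (w : E) :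
    mixedForm p S (x - a • supportNumber p S - fun V => ⟪w, normal p S V⟫_ℝ)
        (x - a • supportNumber p S - fun V => ⟪w, normal p S V⟫_ℝ) =
      mixedForm p S x x + a ^ 2 * mixedForm p S (supportNumber p S) (supportNumber p S) := by
  have hsymm := (mixedForm_isSymm p S).eq
  have hw : ∀ z, mixedForm p S (fun V => ⟪w, normal p S V⟫_ℝ) z = 0 := fun z => by
    rw [← mixedForm_inner_normal hp hk z w]
    exact hsymm _ _
  have hx' : mixedForm p S (supportNumber p S) x = 0 := by
    rw [← hx]
    exact hsymm _ _
  simp only [map_sub, map_smul, LinearMap.sub_apply, LinearMap.smul_apply, smul_eq_mul,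
    mixedForm_inner_normal hp hk, hw, hx, hx']
  ring

lemma FaceCov.inner_cornerLift_sub_sub (h : FaceCov p S T) (h' : FaceCov p T U)
    (x : Set ι → ℝ) (a : ℝ) (w : E) {z : E} (hz : z ∈ faceSpan p U)
    (hzS : z ∈ (faceSpan p S)ᗮ) :
    ⟪cornerLift p S U (x - a • supportNumber p S - fun V => ⟪w, normal p S V⟫_ℝ), z⟫_ℝ =
      ⟪cornerLift p S U x, z⟫_ℝ - a * ⟪facePoint p U - facePoint p S, z⟫_ℝ - ⟪w, z⟫_ℝ := by
  rw [map_sub, map_sub, map_smul, inner_sub_left, inner_sub_left, real_inner_smul_left,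
    h.inner_cornerLift_eq h' (w := w) (fun _ _ _ => rfl) hz hzS,
    h.inner_cornerLift_eq h' (fun V hV hVU =>
      hV.inner_facePoint_sub_eq hVU.isPolarFace_right hVU.subset) hz hzS]

lemma exists_eq_mul_add_of_inner_normal_mul_pos (hk : corank p S = 2)
    (heS : e ∈ (faceSpan p S)ᗮ) (hne : (secondCovers p S).Nonempty) (q : Set ι → ℝ) :
    ∃ a b : ℝ, ∀ T T' U, Diamond p S T T' U →
      0 < ⟪normal p T U, e⟫_ℝ * ⟪normal p T' U, e⟫_ℝ → q U = a * ⟪facePoint p U, e⟫_ℝ + b := by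
  obtain ⟨M, hM, hmax⟩ := (secondCovers p S).exists_max_image (⟪facePoint p ·, e⟫_ℝ) hne
  obtain ⟨N, hN, hmin⟩ := (secondCovers p S).exists_min_image (⟪facePoint p ·, e⟫_ℝ) hne
  have hface : ∀ V ∈ secondCovers p S, IsPolarFace p V ∧ S ⊆ V := fun V hV => by
    obtain ⟨T, hT, hTV⟩ := mem_secondCovers.1 hV
    exact ⟨hTV.isPolarFace_right, hT.subset.trans hTV.subset⟩
  let g (U : Set ι) : ℝ := ⟪facePoint p U, e⟫_ℝ
  obtain ⟨a, ha⟩ : ∃ a : ℝ, g M ≠ g N → q N - a * g N = q M - a * g M :=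
    ⟨(q M - q N) / (g M - g N), fun hMN => by
      linear_combination div_mul_cancel₀ (q M - q N) (sub_ne_zero.2 hMN)⟩
  refine ⟨a, q M - a * g M, fun T T' U h hpos => sub_eq_iff_eq_add'.1 ?_⟩
  have hU : U ∈ secondCovers p S := mem_secondCovers.2 ⟨T, h.left, h.left_top⟩
  rcases pos_and_pos_or_neg_and_neg_of_mul_pos hpos with ⟨hT, hT'⟩ | ⟨hT, hT'⟩
  · rw [h.eq_of_inner_facePoint_le hk heS hT hT' (hface M hM).1 (hface M hM).2 (hmax U hU)]
  · by_cases hMN : g M = g N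
    · rw [h.eq_of_le_inner_facePoint hk heS hT hT' (hface M hM).1 (hface M hM).2
        (hMN.trans_le (hmin U hU))]
    · rw [h.eq_of_le_inner_facePoint hk heS hT hT' (hface N hN).1 (hface N hN).2 (hmin U hU)]
      exact ha hMN

/-- Subtract from `x` a multiple of the support numbers of `S` and a translation, so that the
result vanishes at the two vertices where a generic linear functional is extremal. -/
lemma mixedForm_self_nonpos_of_corank_eq_two (hp : PositivelySpans p) (hS : IsPolarFace p S)
    (hk : corank p S = 2) (hx : mixedForm p S x (supportNumber p S) = 0) :
    mixedForm p S x x ≤ 0 := by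
  obtain ⟨e, heS, he⟩ := exists_mem_orthogonal_forall_inner_normal_ne_zero p S
  obtain ⟨T₀, hT₀⟩ := hS.exists_faceCov_of_corank hp hk
  obtain ⟨U₀, hU₀⟩ := hT₀.isPolarFace_right.exists_faceCov_of_corank hp (k := 0)
    (by rw [hT₀.corank_left] at hk; exact Nat.add_right_cancel hk)
  have hee : ⟪e, e⟫_ℝ ≠ 0 := fun h0 => he T₀ U₀ hT₀ hU₀ (by
    rw [inner_self_eq_zero.1 h0, inner_zero_right])
  obtain ⟨a, b, hab⟩ := exists_eq_mul_add_of_inner_normal_mul_pos hk heS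
    ⟨U₀, mem_secondCovers.2 ⟨T₀, hT₀, hU₀⟩⟩ (⟪cornerLift p S · x, e⟫_ℝ)
  let w : E := ((a * ⟪facePoint p S, e⟫_ℝ + b) / ⟪e, e⟫_ℝ) • e
  have hw : ⟪w, e⟫_ℝ = a * ⟪facePoint p S, e⟫_ℝ + b := by
    rw [real_inner_smul_left, div_mul_cancel₀ _ hee]
  have hadjust := mixedForm_self_nonpos_of_inner_cornerLift_eq_zero hp hk heS he
    (x := x - a • supportNumber p S - fun V => ⟪w, normal p S V⟫_ℝ) fun T T' U h hpos => by
      have hUk := h.left.corank_eq_of_faceCov h.left_top (k := 0) hk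
      rw [h.left.inner_cornerLift_sub_sub h.left_top x a w
        (faceSpan_eq_top_of_corank_eq_zero hUk ▸ Submodule.mem_top) heS, hw, inner_sub_left,
        hab T T' U h hpos]
      ring
  rw [mixedForm_sub_sub_self hp hk hx] at hadjust
  have := hS.mixedForm_supportNumber_self_pos hp hk
  nlinarith [mul_nonneg (sq_nonneg a) this.le]

lemma isHyperbolic_of_corank_eq_two (hp : PositivelySpans p) (hS : IsPolarFace p S)
    (hk : corank p S = 2) : IsHyperbolic p S := by
  refine fun x hx => ⟨mixedForm_self_nonpos_of_corank_eq_two hp hS hk hx, fun hxx => ?_⟩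
  have hzero := fun T (hT : FaceCov p S T) => hT.facetMixed_eq_zero hp hk
    (fun z hz => mixedForm_self_nonpos_of_corank_eq_two hp hS hk hz) hx hxx
  have hcover : ∀ T, ∃ U, FaceCov p S T → FaceCov p T U := fun T => by
    by_cases hT : FaceCov p S T
    · obtain ⟨U, hU⟩ := hT.isPolarFace_right.exists_faceCov_of_corank hp (k := 0)
        (by rw [hT.corank_left] at hk; exact Nat.add_right_cancel hk)
      exact ⟨U, fun _ => hU⟩
    · exact ⟨T, fun h => absurd h hT⟩
  choose V hV using hcover
  refine exists_forall_eq_inner_normal hp (by unfold corank at hk; omega)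
    (fun T => x T • normal p S T + induced p S T x (V T) • normal p T (V T)) ?_ ?_ ?_ ?_
  · exact fun T hT => Submodule.add_mem _ (Submodule.smul_mem _ _ hT.normal_mem_orthogonal)
      (Submodule.smul_mem _ _ (Submodule.orthogonal_le (faceSpan_mono hT.subset)
        (hV T hT).normal_mem_orthogonal))
  · intro T hT
    rw [inner_add_left, real_inner_smul_left, real_inner_smul_left, hT.inner_normal_self,
      real_inner_comm, (hV T hT).inner_normal_eq_zero]
    ring
  · intro T U hT hTU
    have hVT := hT.corank_eq_of_faceCov (hV T hT) hk
    have hrank := faceRank_eq_of_corank_eq_zero hVT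
    rw [inner_add_left, real_inner_smul_left, real_inner_smul_left, hTU.inner_normal_eq_zero]
    rcases (hV T hT).normal_eq_or_eq_neg hTU hrank with heq | hneg
    · rw [← (hV T hT).normal_injective hTU heq.symm, (hV T hT).inner_normal_self]
      ring
    · have hne : V T ≠ U := fun heq =>
        have : IsAddTorsionFree E := .of_isTorsionFree ℝ E
        hTU.normal_ne_zero (self_eq_neg.1 (heq ▸ hneg))
      have hsum := hzero T hT
      rw [facetMixed_apply, (hV T hT).sum_covers_eq_add hTU hne hrank hneg,
        faceVolume_of_corank_eq_zero hVT,
        faceVolume_of_corank_eq_zero (hT.corank_eq_of_faceCov hTU hk)] at hsum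
      rw [hneg, inner_neg_right, (hV T hT).inner_normal_self]
      linear_combination -hsum
  · intro T T' U W h hW
    have hU := h.left.corank_eq_of_faceCov h.left_top (k := 0) hk
    rw [hW.corank_left] at hU
    exact absurd hU (Nat.succ_ne_zero _)

end Planar

/-! ### Links of faces of codimension three -/

section Wedge

variable {E : Type*} [NormedAddCommGroup E] [InnerProductSpace ℝ E]

/-- The area form `a ∧ b`. -/
noncomputable def wedge (a b : E) : LinearMap.BilinForm ℝ E :=
  LinearMap.BilinForm.linMulLin (innerₗ E a) (innerₗ E b) -
    LinearMap.BilinForm.linMulLin (innerₗ E b) (innerₗ E a)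

lemma wedge_apply (a b y z : E) :
    wedge a b y z = ⟪y, a⟫_ℝ * ⟪z, b⟫_ℝ - ⟪y, b⟫_ℝ * ⟪z, a⟫_ℝ := by
  simp only [wedge, LinearMap.sub_apply, LinearMap.BilinForm.linMulLin_apply, innerₗ_apply_apply,
    real_inner_comm]

lemma wedge_cyclic (a b n t y z : E) :
    ⟪t, n⟫_ℝ * wedge a b y z + ⟪y, n⟫_ℝ * wedge a b z t + ⟪z, n⟫_ℝ * wedge a b t y =
      ⟪y, a⟫_ℝ * wedge b n z t + ⟪z, a⟫_ℝ * wedge b n t y + ⟪t, a⟫_ℝ * wedge b n y z := by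
  simp only [wedge_apply]
  ring

end Wedge

section Link

variable {ι E : Type*} [NormedAddCommGroup E] [InnerProductSpace ℝ E]

/-- A maximal chain `S ⊂ T ⊂ U ⊂ W` of polar faces in an interval `[S, W]` of rank three. -/
structure Flag (p : ι → E) (S T U W : Set ι) : Prop where
  bottom : FaceCov p S T
  middle : FaceCov p T U
  top : FaceCov p U W

variable {p : ι → E} {S T T' U U' V W : Set ι} {g e : E} {ω : Set ι → E}

lemma Diamond.flag_left (h : Diamond p S T T' U) (hW : FaceCov p U W) : Flag p S T U W :=
  ⟨h.left, h.left_top, hW⟩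

lemma Diamond.flag_right (h : Diamond p S T T' U) (hW : FaceCov p U W) : Flag p S T' U W :=
  h.symm.flag_left hW

/-- A family of vectors indexed by the facets `T` of `S` below `W`, any two of which agree on the
plane spanned by the normals of their common ridge. -/
def AgreesOnRidges (p : ι → E) (S W : Set ι) (ω : Set ι → E) : Prop :=
  ∀ T T' U, Flag p S T U W → Flag p S T' U W → ∀ z ∈ faceSpan p U, z ∈ (faceSpan p S)ᗮ →
    ⟪ω T, z⟫_ℝ = ⟪ω T', z⟫_ℝ

lemma AgreesOnRidges.sub_const (hω : AgreesOnRidges p S W ω) (w : E) :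
    AgreesOnRidges p S W fun T => ω T - w := fun T T' U hT hT' z hz hzS => by
  rw [inner_sub_left, inner_sub_left, hω T T' U hT hT' z hz hzS]

lemma FaceCov.faceCov_of_subset (hT : FaceCov p S T) (hTU : FaceCov p T U) (hV : FaceCov p S V)
    (hVU : V ⊆ U) : FaceCov p V U :=
  ⟨hV.isPolarFace_right, hTU.isPolarFace_right, hVU, by
    rw [hTU.faceRank_right, hT.faceRank_right, hV.faceRank_right]⟩

/-- The pairs `(T, U)` with `Flag p S T U W`. -/
noncomputable def flags [Finite ι] (p : ι → E) (S W : Set ι) : Finset (Set ι × Set ι) :=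
  (Set.toFinite {q : Set ι × Set ι | Flag p S q.1 q.2 W}).toFinset

@[simp] lemma mem_flags [Finite ι] {q : Set ι × Set ι} : q ∈ flags p S W ↔ Flag p S q.1 q.2 W :=
  Set.Finite.mem_toFinset _

/-- The ridges of the interval `[S, W]`. -/
noncomputable def ridges [Finite ι] (p : ι → E) (S W : Set ι) : Finset (Set ι) :=
  (Set.toFinite {U | ∃ T, Flag p S T U W}).toFinset

@[simp] lemma mem_ridges [Finite ι] : U ∈ ridges p S W ↔ ∃ T, Flag p S T U W :=
  Set.Finite.mem_toFinset _

lemma sum_flags_left [Finite ι] (F : Set ι × Set ι → ℝ) :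
    ∑ q ∈ flags p S W, F q = ∑ T ∈ covers p S, ∑ U ∈ between p T W, F (T, U) :=
  Finset.sum_finset_product _ _ _ fun q => by
    rw [mem_flags, mem_covers, mem_between]
    exact ⟨fun h => ⟨h.bottom, h.middle, h.top⟩, fun h => ⟨h.1, h.2.1, h.2.2⟩⟩

lemma sum_flags_right [Finite ι] (F : Set ι × Set ι → ℝ) :
    ∑ q ∈ flags p S W, F q = ∑ U ∈ ridges p S W, ∑ T ∈ between p S U, F (T, U) :=
  Finset.sum_finset_product_right _ _ _ fun q => by
    rw [mem_flags, mem_ridges, mem_between]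
    exact ⟨fun h => ⟨⟨q.1, h⟩, h.bottom, h.middle⟩, fun ⟨⟨_, h⟩, h'⟩ => ⟨h'.1, h'.2, h.top⟩⟩

variable [FiniteDimensional ℝ E]

lemma Diamond.wedge_eq_neg (h : Diamond p S T T' U) :
    wedge (normal p S T') (normal p T' U) = -wedge (normal p S T) (normal p T U) := by
  obtain ⟨c, s, -, hcs, hT', hT'U⟩ := h.exists_reflection
  refine LinearMap.ext₂ fun y z => ?_
  rw [LinearMap.neg_apply, LinearMap.neg_apply, wedge_apply, wedge_apply, hT', hT'U]
  simp only [inner_add_right, inner_sub_right, real_inner_smul_right]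
  linear_combination (⟪y, normal p T U⟫_ℝ * ⟪z, normal p S T⟫_ℝ -
    ⟪y, normal p S T⟫_ℝ * ⟪z, normal p T U⟫_ℝ) * hcs

namespace Flag

lemma bottom_mem_faceSpan (h : Flag p S T U W) : normal p S T ∈ faceSpan p U :=
  faceSpan_mono h.middle.subset normal_mem_faceSpan

lemma middle_mem_orthogonal (h : Flag p S T U W) : normal p T U ∈ (faceSpan p S)ᗮ :=
  Submodule.orthogonal_le (faceSpan_mono h.bottom.subset) h.middle.normal_mem_orthogonal

lemma inner_eq (h : Flag p S T U W) (heW : e ∈ faceSpan p W) (heS : e ∈ (faceSpan p S)ᗮ) (y : E) :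
    ⟪y, e⟫_ℝ = ⟪e, normal p S T⟫_ℝ * ⟪y, normal p S T⟫_ℝ +
      ⟪e, normal p T U⟫_ℝ * ⟪y, normal p T U⟫_ℝ + ⟪e, normal p U W⟫_ℝ * ⟪y, normal p U W⟫_ℝ := by
  conv_lhs => rw [h.bottom.eq_add_add_inner_smul_normal h.middle h.top heW heS]
  rw [inner_add_right, inner_add_right, real_inner_smul_right, real_inner_smul_right,
    real_inner_smul_right]

/-- Exchanging the ridge `U` for the other ridge `U'` between `T` and `W` amounts to expanding the
area form of `normal p S T` and `e`. -/
lemma exists_wedge_bottom (h : Flag p S T U W) (hU' : Diamond p T U U' W) :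
    ∃ s : ℝ, 0 < s ∧ ∀ e ∈ faceSpan p W, e ∈ (faceSpan p S)ᗮ → ∀ y z : E,
      ⟪e, normal p U' W⟫_ℝ * wedge (normal p S T) (normal p T U) y z +
        ⟪e, normal p U W⟫_ℝ * wedge (normal p S T) (normal p T U') y z =
      s * wedge (normal p S T) e y z := by
  obtain ⟨c, s, hs, -, hTU', hU'W⟩ := hU'.exists_reflection
  refine ⟨s, hs, fun e heW heS y z => ?_⟩
  simp only [wedge_apply, h.inner_eq heW heS, hTU', hU'W, inner_add_right, inner_sub_right,
    real_inner_smul_right]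
  ring

lemma exists_wedge_top (h : Flag p S T U W) (hT' : Diamond p S T T' U) :
    ∃ s : ℝ, 0 < s ∧ ∀ e ∈ faceSpan p W, e ∈ (faceSpan p S)ᗮ → ∀ y z : E,
      ⟪e, normal p S T'⟫_ℝ * wedge (normal p T U) (normal p U W) y z +
        ⟪e, normal p S T⟫_ℝ * wedge (normal p T' U) (normal p U W) y z =
      s * wedge e (normal p U W) y z := by
  obtain ⟨c, s, hs, -, hST', hT'U⟩ := hT'.exists_reflection
  refine ⟨s, hs, fun e heW heS y z => ?_⟩
  simp only [wedge_apply, h.inner_eq heW heS, hST', hT'U, inner_add_right, inner_sub_right,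
    real_inner_smul_right]
  ring

end Flag

lemma FaceCov.inner_normal_normal_pos (h : FaceCov p S T) (hTW : T ⊆ W) (hSU : S ⊆ U)
    (hU : FaceCov p U W) (hTU : ¬T ⊆ U) : 0 < ⟪normal p S T, normal p U W⟫_ℝ := by
  obtain ⟨j, hjT, hjU⟩ := Set.not_subset.1 hTU
  have hpos := hU.inner_normal_pos (hTW hjT) hjU
  have hUS : normal p U W ∈ (faceSpan p S)ᗮ :=
    Submodule.orthogonal_le (faceSpan_mono hSU) hU.normal_mem_orthogonal
  rw [real_inner_comm]
  exact (h.inner_normal_pos_iff hUS hjT fun hjS => hjU (hSU hjS)).2 hpos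

lemma FaceCov.inner_normal_normal_eq_zero (hU : FaceCov p U W) (hTU : T ⊆ U) :
    ⟪normal p S T, normal p U W⟫_ℝ = 0 :=
  (Submodule.mem_orthogonal _ _).1 hU.normal_mem_orthogonal _
    (faceSpan_mono hTU normal_mem_faceSpan)

lemma FaceCov.inner_normal_normal_nonneg (h : FaceCov p S T) (hTW : T ⊆ W) (hSU : S ⊆ U)
    (hU : FaceCov p U W) : 0 ≤ ⟪normal p S T, normal p U W⟫_ℝ := by
  by_cases hTU : T ⊆ U
  · exact (hU.inner_normal_normal_eq_zero hTU).ge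
  · exact (h.inner_normal_normal_pos hTW hSU hU hTU).le

lemma Diamond.inner_normal_normal_pos (h : Diamond p S T T' U) (h' : Diamond p T U U' W) :
    0 < ⟪normal p S T', normal p U' W⟫_ℝ := by
  obtain ⟨c, s, hs, -, hT', -⟩ := h.exists_reflection
  rw [hT', inner_add_left, real_inner_smul_left, real_inner_smul_left,
    h'.right_top.inner_normal_normal_eq_zero h'.right.subset, mul_zero, zero_add]
  exact mul_pos hs h'.symm.inner_normal_pos

lemma Diamond.inner_normal_add_normal_pos (h : Diamond p S T T' U) (hW : FaceCov p U W)
    (hSV : S ⊆ V) (hV : FaceCov p V W) (hne : V ≠ U) :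
    0 < ⟪normal p S T + normal p S T', normal p V W⟫_ℝ := by
  have hTW := h.left_top.subset.trans hW.subset
  have hT'W := h.right_top.subset.trans hW.subset
  rw [inner_add_left]
  by_cases hTV : T ⊆ V
  · have hcov : FaceCov p T V := ⟨h.left.isPolarFace_right, hV.isPolarFace_left, hTV, by
      have hU := h.left_top.faceRank_right
      have hUW := hW.faceRank_right
      have hVW := hV.faceRank_right
      omega⟩
    rw [hV.inner_normal_normal_eq_zero hTV, zero_add]
    exact h.inner_normal_normal_pos ⟨h.left_top, hcov, hW, hV, hne.symm⟩
  · exact add_pos_of_pos_of_nonneg (h.left.inner_normal_normal_pos hTW hSV hV hTV)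
      (h.right.inner_normal_normal_nonneg hT'W hSV hV)

lemma Diamond.normal_add_normal_mem_faceSpan (h : Diamond p S T T' U) :
    normal p S T + normal p S T' ∈ faceSpan p U :=
  Submodule.add_mem _ (faceSpan_mono h.left_top.subset normal_mem_faceSpan)
    (faceSpan_mono h.right_top.subset normal_mem_faceSpan)

lemma Diamond.normal_add_normal_mem_orthogonal (h : Diamond p S T T' U) :
    normal p S T + normal p S T' ∈ (faceSpan p S)ᗮ :=
  Submodule.add_mem _ h.left.normal_mem_orthogonal h.right.normal_mem_orthogonal

variable [Finite ι]

lemma sum_flags_mul_wedge_top_eq_zero (f : Set ι → ℝ) (y z : Set ι → E) :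
    ∑ q ∈ flags p S W,
      f q.1 * wedge (normal p q.1 q.2) (normal p q.2 W) (y q.1) (z q.1) = 0 := by
  rw [sum_flags_left]
  refine Finset.sum_eq_zero fun T _ => ?_
  rcases (between p T W).eq_empty_or_nonempty with hempty | ⟨U, hU⟩
  · rw [hempty, Finset.sum_empty]
  · obtain ⟨hTU, hUW⟩ := mem_between.1 hU
    obtain ⟨U', h⟩ := hTU.exists_diamond hUW
    rw [h.sum_between, h.wedge_eq_neg, LinearMap.neg_apply, LinearMap.neg_apply]
    ring

lemma AgreesOnRidges.sum_flags_mul_wedge_bottom_eq_zero (hω : AgreesOnRidges p S W ω)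
    {f : Set ι → Set ι → ℝ}
    (hf : ∀ T T' U, Flag p S T U W → Flag p S T' U W → f T U = f T' U) (y : E) :
    ∑ q ∈ flags p S W,
      f q.1 q.2 * wedge (normal p S q.1) (normal p q.1 q.2) y (ω q.1) = 0 := by
  rw [sum_flags_right]
  refine Finset.sum_eq_zero fun U hU => ?_
  obtain ⟨T, hT⟩ := mem_ridges.1 hU
  obtain ⟨T', h⟩ := hT.bottom.exists_diamond hT.middle
  have hT' := h.flag_right hT.top
  have hwedge : wedge (normal p S T) (normal p T U) y (ω T') =
      wedge (normal p S T) (normal p T U) y (ω T) := by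
    rw [wedge_apply, wedge_apply,
      hω T' T U hT' hT _ hT.bottom_mem_faceSpan hT.bottom.normal_mem_orthogonal,
      hω T' T U hT' hT _ normal_mem_faceSpan hT.middle_mem_orthogonal]
  rw [h.sum_between, h.wedge_eq_neg, LinearMap.neg_apply, LinearMap.neg_apply, hwedge,
    hf T' T U hT' hT]
  ring

end Link

section LinkDefect

variable {ι E : Type*} [Finite ι] [NormedAddCommGroup E] [InnerProductSpace ℝ E]
  [FiniteDimensional ℝ E]
  {p : ι → E} {S T T' T₀ T₁ U U' U₀ V W : Set ι} {g e : E} {ω : Set ι → E}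

/-- A quadratic form measuring how far the family `ω` is from a single vector, the terms of which
are weighted by a functional of `g`; it vanishes on constant families. -/
noncomputable def linkDefect (p : ι → E) (S W : Set ι) (ω : Set ι → E) : E →ₗ[ℝ] ℝ :=
  ∑ q ∈ flags p S W, ⟪ω q.1, normal p q.2 W⟫_ℝ •
    LinearMap.flip (wedge (normal p S q.1) (normal p q.1 q.2)) (ω q.1)

lemma linkDefect_apply (p : ι → E) (S W : Set ι) (ω : Set ι → E) (g : E) :
    linkDefect p S W ω g = ∑ q ∈ flags p S W, ⟪ω q.1, normal p q.2 W⟫_ℝ *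
      wedge (normal p S q.1) (normal p q.1 q.2) g (ω q.1) := by
  simp only [linkDefect, LinearMap.sum_apply, LinearMap.smul_apply, LinearMap.flip_apply,
    smul_eq_mul]

lemma linkDefect_apply_eq_sum (p : ι → E) (S W : Set ι) (ω : Set ι → E) (g : E) :
    linkDefect p S W ω g = ∑ q ∈ flags p S W,
      (⟪g, normal p S q.1⟫_ℝ * (⟪ω q.1, normal p q.1 q.2⟫_ℝ * ⟪ω q.1, normal p q.2 W⟫_ℝ) -
        ⟪ω q.1, normal p S q.1⟫_ℝ * (⟪ω q.1, normal p q.1 q.2⟫_ℝ * ⟪g, normal p q.2 W⟫_ℝ)) := by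
  rw [linkDefect_apply, ← add_zero (Finset.sum _ _), ← sum_flags_mul_wedge_top_eq_zero
    (fun T => ⟪ω T, normal p S T⟫_ℝ) (fun _ => g) ω, ← Finset.sum_add_distrib]
  refine Finset.sum_congr rfl fun q _ => ?_
  rw [wedge_apply, wedge_apply]
  ring

namespace AgreesOnRidges

lemma sum_flags_inner_mul_wedge_eq_zero (hω : AgreesOnRidges p S W ω) (y z : E) :
    ∑ q ∈ flags p S W, ⟪ω q.1, normal p q.2 W⟫_ℝ *
      wedge (normal p S q.1) (normal p q.1 q.2) y z = 0 := by
  have htop (f : Set ι → ℝ) (y z : Set ι → E) := sum_flags_mul_wedge_top_eq_zero (p := p)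
    (S := S) (W := W) f y z
  have hbottom (t y : E) := hω.sum_flags_mul_wedge_bottom_eq_zero
    (f := fun _ U => ⟪t, normal p U W⟫_ℝ) (fun _ _ _ _ _ => rfl) y
  have hcyclic := Finset.sum_congr (rfl : flags p S W = flags p S W) fun q _ =>
    wedge_cyclic (normal p S q.1) (normal p q.1 q.2) (normal p q.2 W) (ω q.1) y z
  have hswap (q : Set ι × Set ι) : wedge (normal p S q.1) (normal p q.1 q.2) (ω q.1) y =
      -wedge (normal p S q.1) (normal p q.1 q.2) y (ω q.1) := by
    rw [wedge_apply, wedge_apply]; ring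
  simp only [Finset.sum_add_distrib, hswap, mul_neg, Finset.sum_neg_distrib] at hcyclic
  rw [hbottom y z, hbottom z y, htop (fun T => ⟪y, normal p S T⟫_ℝ) (fun _ => z) ω,
    htop (fun T => ⟪z, normal p S T⟫_ℝ) ω fun _ => y,
    htop (fun T => ⟪ω T, normal p S T⟫_ℝ) (fun _ => y) fun _ => z] at hcyclic
  simpa using hcyclic

lemma linkDefect_sub_const (hω : AgreesOnRidges p S W ω) (w : E) :
    linkDefect p S W (fun T => ω T - w) = linkDefect p S W ω := by
  refine LinearMap.ext fun g => ?_
  have hbottom {ω' : Set ι → E} (hω' : AgreesOnRidges p S W ω') :=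
    hω'.sum_flags_mul_wedge_bottom_eq_zero (f := fun _ U => ⟪w, normal p U W⟫_ℝ)
      (fun _ _ _ _ _ => rfl) g
  have hconst : AgreesOnRidges p S W fun _ => w := fun _ _ _ _ _ _ _ _ => rfl
  simp only [linkDefect_apply, inner_sub_left, map_sub, sub_mul, mul_sub, Finset.sum_sub_distrib]
  rw [hω.sum_flags_inner_mul_wedge_eq_zero, hbottom hω, hbottom hconst]
  ring

lemma linkDefect_eq_sum_div (hω : AgreesOnRidges p S W ω) (heW : e ∈ faceSpan p W)
    (heS : e ∈ (faceSpan p S)ᗮ) (he : ∀ T U, Flag p S T U W → ⟪e, normal p U W⟫_ℝ = 0 →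
      ⟪g, normal p S T⟫_ℝ = 0 ∧ ⟪g, normal p T U⟫_ℝ = 0) :
    linkDefect p S W ω g = ∑ q ∈ flags p S W, ⟪ω q.1, e⟫_ℝ *
      ((⟪e, normal p q.2 W⟫_ℝ)⁻¹ * wedge (normal p S q.1) (normal p q.1 q.2) g (ω q.1)) := by
  let f (T U : Set ι) : ℝ :=
    (⟪e, normal p U W⟫_ℝ)⁻¹ * ⟪ω T, e - ⟪e, normal p U W⟫_ℝ • normal p U W⟫_ℝ
  have hf : ∀ T T' U, Flag p S T U W → Flag p S T' U W → f T U = f T' U := fun T T' U hT hT' =>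
    congrArg _ (hω T T' U hT hT' _ (hT.top.sub_inner_smul_normal_mem heW)
      (Submodule.sub_mem _ heS (Submodule.smul_mem _ _ (Submodule.orthogonal_le
        (faceSpan_mono (hT.bottom.subset.trans hT.middle.subset)) hT.top.normal_mem_orthogonal))))
  rw [linkDefect_apply, ← add_zero (Finset.sum _ _),
    ← hω.sum_flags_mul_wedge_bottom_eq_zero hf g, ← Finset.sum_add_distrib]
  refine Finset.sum_congr rfl fun ⟨T, U⟩ hq => ?_
  rw [mem_flags] at hq
  rcases eq_or_ne ⟪e, normal p U W⟫_ℝ 0 with h0 | h0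
  · obtain ⟨ha, hb⟩ := he T U hq h0
    simp only [wedge_apply, ha, hb, zero_mul, sub_zero, mul_zero, add_zero]
  · simp only [f, inner_sub_right, real_inner_smul_right]
    field_simp
    ring

end AgreesOnRidges


lemma Flag.exists_sum_between_wedge_div (h : Flag p S T U W) (heW : e ∈ faceSpan p W)
    (heS : e ∈ (faceSpan p S)ᗮ) (he : ∀ V ∈ between p T W, 0 < ⟪e, normal p V W⟫_ℝ)
    (hg : 0 < ⟪g, normal p S T⟫_ℝ) (hge : ⟪g, e⟫_ℝ = 0) :
    ∃ κ : ℝ, 0 < κ ∧ ∀ z, ∑ V ∈ between p T W, (⟪e, normal p V W⟫_ℝ)⁻¹ *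
      wedge (normal p S T) (normal p T V) g z = κ * ⟪z, e⟫_ℝ := by
  obtain ⟨U', hU'⟩ := h.middle.exists_diamond h.top
  obtain ⟨s, hs, hwedge⟩ := h.exists_wedge_bottom hU'
  have hpos := he U (mem_between.2 ⟨h.middle, h.top⟩)
  have hpos' := he U' (mem_between.2 ⟨hU'.right, hU'.right_top⟩)
  refine ⟨s * ⟪g, normal p S T⟫_ℝ / (⟪e, normal p U W⟫_ℝ * ⟪e, normal p U' W⟫_ℝ), by positivity,
    fun z => ?_⟩
  have hz := hwedge e heW heS g z
  rw [wedge_apply _ e, hge, zero_mul, sub_zero] at hz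
  rw [hU'.sum_between]
  field_simp
  linear_combination hz

lemma Diamond.exists_sum_between_wedge_div (h : Diamond p S T₀ T₁ U₀) (hW : FaceCov p U₀ W)
    (hT : FaceCov p S T) {z : E}
    (hz : T ⊆ U₀ → ⟪z, normal p S T₀ + normal p S T₁⟫_ℝ = 0) :
    ∃ κ : ℝ, 0 ≤ κ ∧ (∀ U, Flag p S T U W → ¬T ⊆ U₀ → 0 < κ) ∧
      ∑ U ∈ between p T W, ⟪z, normal p S T₀ + normal p S T₁⟫_ℝ *
        ((⟪normal p S T₀ + normal p S T₁, normal p U W⟫_ℝ)⁻¹ *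
          wedge (normal p S T) (normal p T U) (normal p U₀ W) z) =
      κ * ⟪z, normal p S T₀ + normal p S T₁⟫_ℝ ^ 2 := by
  by_cases hTU₀ : T ⊆ U₀
  · exact ⟨0, le_rfl, fun _ _ hT' => absurd hTU₀ hT', by simp only [hz hTU₀, zero_mul,
      Finset.sum_const_zero]⟩
  rcases (between p T W).eq_empty_or_nonempty with hempty | ⟨U, hU⟩
  · refine ⟨0, le_rfl, fun U hU => ?_, by rw [hempty, Finset.sum_empty, zero_mul]⟩
    exact absurd (mem_between.2 ⟨hU.middle, hU.top⟩) (hempty ▸ Finset.notMem_empty U)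
  obtain ⟨hTU, hUW⟩ := mem_between.1 hU
  have hSU₀ := h.left.subset.trans h.left_top.subset
  have hg := hT.inner_normal_normal_pos (hTU.subset.trans hUW.subset) hSU₀ hW hTU₀
  obtain ⟨κ, hκ, hsum⟩ := Flag.exists_sum_between_wedge_div ⟨hT, hTU, hUW⟩
    (faceSpan_mono hW.subset h.normal_add_normal_mem_faceSpan)
    h.normal_add_normal_mem_orthogonal
    (fun V hV => h.inner_normal_add_normal_pos hW
      (hT.subset.trans (mem_between.1 hV).1.subset) (mem_between.1 hV).2
      fun hVU => hTU₀ (hVU ▸ (mem_between.1 hV).1.subset))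
    (real_inner_comm _ (normal p U₀ W) ▸ hg)
    ((Submodule.mem_orthogonal' _ _).1 hW.normal_mem_orthogonal _
      h.normal_add_normal_mem_faceSpan)
  exact ⟨κ, hκ.le, fun _ _ _ => hκ, by rw [← Finset.mul_sum, hsum]; ring⟩

/-- For `g` the normal of a facet `U₀` of the link, testing against the sum of the two normals in
`U₀` turns the defect into a sum of squares. -/
lemma AgreesOnRidges.exists_linkDefect_normal_eq_sum_sq (hω : AgreesOnRidges p S W ω)
    (h : Diamond p S T₀ T₁ U₀) (hW : FaceCov p U₀ W) :
    ∃ κ : Set ι → ℝ, (∀ T ∈ covers p S, 0 ≤ κ T) ∧ (∀ T U, Flag p S T U W → ¬T ⊆ U₀ → 0 < κ T) ∧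
      linkDefect p S W ω (normal p U₀ W) = ∑ T ∈ covers p S,
        κ T * ⟪ω T - ω T₀, normal p S T₀ + normal p S T₁⟫_ℝ ^ 2 := by
  have heU := h.normal_add_normal_mem_faceSpan
  have heS := h.normal_add_normal_mem_orthogonal
  have hzero {T : Set ι} (hT : FaceCov p S T) (hTU : T ⊆ U₀) :
      ⟪ω T - ω T₀, normal p S T₀ + normal p S T₁⟫_ℝ = 0 := by
    have hTU₀ := h.left.faceCov_of_subset h.left_top hT hTU
    rw [inner_sub_left, hω T T₀ U₀ ⟨hT, hTU₀, hW⟩ (h.flag_left hW) _ heU heS, sub_self]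
  choose! κ hκ0 hκpos hκeq using fun T (hT : FaceCov p S T) =>
    h.exists_sum_between_wedge_div hW hT (hzero hT)
  refine ⟨κ, fun T hT => hκ0 T (mem_covers.1 hT), fun T U hT => hκpos T hT.bottom U hT, ?_⟩
  rw [← hω.linkDefect_sub_const (ω T₀), (hω.sub_const _).linkDefect_eq_sum_div
    (faceSpan_mono hW.subset heU) heS, sum_flags_left]
  · exact Finset.sum_congr rfl fun T hT => hκeq T (mem_covers.1 hT)
  · intro T U hT h0
    obtain rfl : U = U₀ := by_contra fun hU => (h.inner_normal_add_normal_pos hW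
      (hT.bottom.subset.trans hT.middle.subset) hT.top hU).ne' h0
    exact ⟨(Submodule.mem_orthogonal' _ _).1 hW.normal_mem_orthogonal _ hT.bottom_mem_faceSpan,
      (Submodule.mem_orthogonal' _ _).1 hW.normal_mem_orthogonal _ normal_mem_faceSpan⟩

end LinkDefect

section LinkPositivity

variable {ι E : Type*} [Finite ι] [NormedAddCommGroup E] [InnerProductSpace ℝ E]
  [FiniteDimensional ℝ E] {p : ι → E} {S T T' U W : Set ι} {g : E} {ω : Set ι → E}

lemma Flag.exists_sum_between_wedge_top (h : Flag p S T U W) (hgW : g ∈ faceSpan p W)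
    (hgS : g ∈ (faceSpan p S)ᗮ) (hg : ∀ V ∈ between p S U, 0 < ⟪g, normal p S V⟫_ℝ) :
    ∃ γ : ℝ, 0 < γ ∧ ∀ y z, ∑ V ∈ between p S U, (⟪g, normal p S V⟫_ℝ)⁻¹ *
      wedge (normal p V U) (normal p U W) y z = γ * wedge g (normal p U W) y z := by
  obtain ⟨T', hT'⟩ := h.bottom.exists_diamond h.middle
  obtain ⟨s, hs, hwedge⟩ := h.exists_wedge_top hT'
  have hpos := hg T (mem_between.2 ⟨h.bottom, h.middle⟩)
  have hpos' := hg T' (mem_between.2 ⟨hT'.right, hT'.right_top⟩)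
  refine ⟨s / (⟪g, normal p S T⟫_ℝ * ⟪g, normal p S T'⟫_ℝ), by positivity, fun y z => ?_⟩
  rw [hT'.sum_between]
  field_simp
  linear_combination hwedge g hgW hgS y z

lemma Flag.sum_ridges_mul_inner_normal_pos (h : Flag p S T U W) {γ : Set ι → ℝ}
    (hγ : ∀ V ∈ ridges p S W, 0 < γ V) :
    0 < ∑ V ∈ ridges p S W, γ V * ⟪normal p S T, normal p V W⟫_ℝ := by
  obtain ⟨T', hT'⟩ := h.bottom.exists_diamond h.middle
  obtain ⟨U', hU'⟩ := hT'.right_top.exists_diamond h.top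
  have hU'mem : U' ∈ ridges p S W := mem_ridges.2 ⟨T', hT'.right, hU'.right, hU'.right_top⟩
  refine Finset.sum_pos' (fun V hV => ?_)
    ⟨U', hU'mem, mul_pos (hγ U' hU'mem) (hT'.symm.inner_normal_normal_pos hU')⟩
  obtain ⟨R, hR⟩ := mem_ridges.1 hV
  exact mul_nonneg (hγ V hV).le (h.bottom.inner_normal_normal_nonneg
    (h.middle.subset.trans h.top.subset) (hR.bottom.subset.trans hR.middle.subset) hR.top)

lemma Flag.exists_smul_eq_sum_ridges (h : Flag p S T U W) (hgW : g ∈ faceSpan p W)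
    (hgS : g ∈ (faceSpan p S)ᗮ) (hg : ∀ T U, Flag p S T U W → 0 < ⟪g, normal p S T⟫_ℝ) :
    ∃ (κ : ℝ) (γ : Set ι → ℝ), 0 < κ ∧ (∀ V ∈ ridges p S W, 0 < γ V) ∧
      κ • g = ∑ V ∈ ridges p S W, γ V • normal p V W := by
  have hγ (V : Set ι) (hV : V ∈ ridges p S W) : ∃ γ : ℝ, 0 < γ ∧ ∀ y z,
      ∑ R ∈ between p S V, (⟪g, normal p S R⟫_ℝ)⁻¹ *
        wedge (normal p R V) (normal p V W) y z = γ * wedge g (normal p V W) y z := by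
    obtain ⟨R, hR⟩ := mem_ridges.1 hV
    exact hR.exists_sum_between_wedge_top hgW hgS fun R' hR' =>
      hg R' V ⟨(mem_between.1 hR').1, (mem_between.1 hR').2, hR.top⟩
  choose! γ hγ hsum using hγ
  set v := ∑ V ∈ ridges p S W, γ V • normal p V W
  have hv (y : E) : ⟪y, v⟫_ℝ = ∑ V ∈ ridges p S W, γ V * ⟪y, normal p V W⟫_ℝ := by
    simp only [v, inner_sum, real_inner_smul_right]
  have hparallel (y : E) : ⟪g, g⟫_ℝ * ⟪y, v⟫_ℝ = ⟪g, v⟫_ℝ * ⟪y, g⟫_ℝ := by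
    have hzero := sum_flags_mul_wedge_top_eq_zero (p := p) (S := S) (W := W)
      (fun T => (⟪g, normal p S T⟫_ℝ)⁻¹) (fun _ => g) (fun _ => y)
    rw [sum_flags_right, Finset.sum_congr rfl fun V hV => hsum V hV g y] at hzero
    rw [hv, hv, Finset.mul_sum, Finset.sum_mul, ← sub_eq_zero, ← Finset.sum_sub_distrib, ← hzero]
    exact Finset.sum_congr rfl fun V _ => by rw [wedge_apply]; ring
  have hgT := hg T U h
  have hgg : 0 < ⟪g, g⟫_ℝ := real_inner_self_pos.2 fun h0 => by simp [h0] at hgT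
  refine ⟨⟪g, v⟫_ℝ, fun V => ⟪g, g⟫_ℝ * γ V, ?_, fun V hV => mul_pos hgg (hγ V hV), ?_⟩
  · have hvT := h.sum_ridges_mul_inner_normal_pos hγ
    rw [← hv] at hvT
    refine pos_of_mul_pos_left ?_ (real_inner_comm g (normal p S T) ▸ hgT).le
    rw [← hparallel]
    exact mul_pos hgg hvT
  · simp only [mul_smul, ← Finset.smul_sum]
    refine ext_inner_left ℝ fun y => ?_
    rw [real_inner_smul_right, real_inner_smul_right]
    exact (hparallel y).symm

lemma exists_linkDefect_eq_sum_ridges (hg : ∀ T U, Flag p S T U W → 0 < ⟪g, normal p S T⟫_ℝ) :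
    ∃ γ : Set ι → ℝ, (∀ V ∈ ridges p S W, 0 < γ V) ∧ ∀ ω,
      linkDefect p S W ω g = ∑ V ∈ ridges p S W, γ V * linkDefect p S W ω (normal p V W) := by
  by_cases hflag : ∃ T U, Flag p S T U W
  · obtain ⟨T, U, h⟩ := hflag
    let K : Submodule ℝ E := faceSpan p W ⊓ (faceSpan p S)ᗮ
    have hK {z : E} (hzW : z ∈ faceSpan p W) (hzS : z ∈ (faceSpan p S)ᗮ) :
        ⟪K.starProjection g, z⟫_ℝ = ⟪g, z⟫_ℝ := by
      rw [K.inner_starProjection_left_eq_right, K.starProjection_eq_self_iff.2 ⟨hzW, hzS⟩]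
    have hbottom {T U : Set ι} (h : Flag p S T U W) :=
      hK (faceSpan_mono h.top.subset h.bottom_mem_faceSpan) h.bottom.normal_mem_orthogonal
    have hproj (ω : Set ι → E) :
        linkDefect p S W ω (K.starProjection g) = linkDefect p S W ω g := by
      simp only [linkDefect_apply]
      refine Finset.sum_congr rfl fun ⟨T, U⟩ h => ?_
      rw [mem_flags] at h
      rw [wedge_apply, wedge_apply, hbottom h,
        hK (faceSpan_mono h.top.subset normal_mem_faceSpan) h.middle_mem_orthogonal]
    obtain ⟨hgW, hgS⟩ := K.starProjection_apply_mem g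
    obtain ⟨κ, γ, hκ, hγ, hsum⟩ := h.exists_smul_eq_sum_ridges hgW hgS fun T U h =>
      (hbottom h).symm ▸ hg T U h
    refine ⟨fun V => κ⁻¹ * γ V, fun V hV => mul_pos (inv_pos.2 hκ) (hγ V hV), fun ω => ?_⟩
    rw [← hproj, ← inv_smul_smul₀ hκ.ne' (K.starProjection g), hsum]
    simp only [map_smul, map_sum, smul_eq_mul, Finset.mul_sum, mul_assoc]
  · push Not at hflag
    have hflags : flags p S W = ∅ := Finset.eq_empty_of_forall_notMem fun q hq =>
      hflag q.1 q.2 (mem_flags.1 hq)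
    have hridges : ridges p S W = ∅ := Finset.eq_empty_of_forall_notMem fun U hU =>
      let ⟨T, hT⟩ := mem_ridges.1 hU; hflag T U hT
    exact ⟨0, by simp [hridges], fun ω => by simp [linkDefect_apply, hflags, hridges]⟩

namespace AgreesOnRidges

lemma linkDefect_normal_nonneg (hω : AgreesOnRidges p S W ω) (hU : U ∈ ridges p S W) :
    0 ≤ linkDefect p S W ω (normal p U W) := by
  obtain ⟨T, hT⟩ := mem_ridges.1 hU
  obtain ⟨T', hT'⟩ := hT.bottom.exists_diamond hT.middle
  obtain ⟨κ, hκ, -, hsum⟩ := hω.exists_linkDefect_normal_eq_sum_sq hT' hT.top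
  rw [hsum]
  exact Finset.sum_nonneg fun T hT => mul_nonneg (hκ T hT) (sq_nonneg _)

theorem linkDefect_nonneg (hω : AgreesOnRidges p S W ω)
    (hg : ∀ T U, Flag p S T U W → 0 < ⟪g, normal p S T⟫_ℝ) : 0 ≤ linkDefect p S W ω g := by
  obtain ⟨γ, hγ, hsum⟩ := exists_linkDefect_eq_sum_ridges hg
  rw [hsum]
  exact Finset.sum_nonneg fun V hV => mul_nonneg (hγ V hV).le (hω.linkDefect_normal_nonneg hV)

lemma inner_normal_eq_of_linkDefect_normal_eq_zero (hω : AgreesOnRidges p S W ω)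
    (h : Diamond p S T T' U) (hU : Diamond p T U U' W)
    (h0 : linkDefect p S W ω (normal p U' W) = 0) :
    ⟪ω T, normal p U W⟫_ℝ = ⟪ω T', normal p U W⟫_ℝ := by
  obtain ⟨R, hR⟩ := h.left.exists_diamond hU.right
  set e := normal p S T + normal p S R
  have hflag := h.flag_left hU.left_top
  have hflag' := h.flag_right hU.left_top
  have heW : e ∈ faceSpan p W :=
    faceSpan_mono hU.right_top.subset hR.normal_add_normal_mem_faceSpan
  have heS := hR.normal_add_normal_mem_orthogonal
  have hT'U' : ¬T' ⊆ U' := fun hs => (h.inner_normal_normal_pos hU).ne'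
    (hU.right_top.inner_normal_normal_eq_zero hs)
  have heT : ⟪ω T', e⟫_ℝ = ⟪ω T, e⟫_ℝ := by
    obtain ⟨κ, hκ, hκpos, hsum⟩ := hω.exists_linkDefect_normal_eq_sum_sq hR hU.right_top
    rw [h0, eq_comm, Finset.sum_eq_zero_iff_of_nonneg fun T hT =>
      mul_nonneg (hκ T hT) (sq_nonneg _)] at hsum
    have hzero := hsum T' (mem_covers.2 h.right)
    rwa [mul_eq_zero_iff_left (hκpos T' U hflag' hT'U').ne', sq_eq_zero_iff, inner_sub_left,
      sub_eq_zero] at hzero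
  have hpos : 0 < ⟪e, normal p U W⟫_ℝ :=
    hR.inner_normal_add_normal_pos hU.right_top
      (hflag.bottom.subset.trans hflag.middle.subset) hU.left_top hU.ne
  have hplane := hω T T' U hflag hflag'
  rw [hflag.inner_eq heW heS, hflag.inner_eq heW heS,
    hplane _ hflag.bottom_mem_faceSpan hflag.bottom.normal_mem_orthogonal,
    hplane _ normal_mem_faceSpan hflag.middle_mem_orthogonal] at heT
  exact mul_left_cancel₀ hpos.ne' (by linarith)

theorem inner_normal_eq_of_linkDefect_eq_zero (hω : AgreesOnRidges p S W ω)
    (hg : ∀ T U, Flag p S T U W → 0 < ⟪g, normal p S T⟫_ℝ) (h0 : linkDefect p S W ω g = 0)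
    (h : Diamond p S T T' U) (hW : FaceCov p U W) :
    ⟪ω T, normal p U W⟫_ℝ = ⟪ω T', normal p U W⟫_ℝ := by
  obtain ⟨U', hU'⟩ := h.left_top.exists_diamond hW
  have hmem : U' ∈ ridges p S W := mem_ridges.2 ⟨T, h.left, hU'.right, hU'.right_top⟩
  obtain ⟨γ, hγ, hsum⟩ := exists_linkDefect_eq_sum_ridges hg
  specialize hsum ω
  rw [h0, eq_comm, Finset.sum_eq_zero_iff_of_nonneg fun V hV =>
    mul_nonneg (hγ V hV).le (hω.linkDefect_normal_nonneg hV)] at hsum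
  exact hω.inner_normal_eq_of_linkDefect_normal_eq_zero h hU'
    ((mul_eq_zero_iff_left (hγ U' hmem).ne').1 (hsum U' hmem))

end AgreesOnRidges

end LinkPositivity

/-! ### The Bochner step -/

section Bochner

variable {V : Type*} [AddCommGroup V] [Module ℝ V] [FiniteDimensional ℝ V]
  {B Q : LinearMap.BilinForm ℝ V}

/-- The operator `A` has no eigenvalue in `(0, 1)` and none above `1`. -/
lemma apply_self_nonpos_of_bochner (hB : B.IsSymm) (hQ : Q.IsSymm) {A : V → V}
    (hA : ∀ x y, Q (A x) y = B x y) (hle : ∀ x, B x x ≤ Q x x)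
    (hbochner : ∀ x, B x x ≤ Q (A x) (A x)) {x : V}
    (hx : ∀ v, B v v = Q v v → Q v x = 0) : B x x ≤ 0 := by
  obtain ⟨y, hy⟩ : Q x ∈ LinearMap.range (LinearMap.flip (Q - B)) := by
    rw [← LinearMap.dualAnnihilator_ker_eq_range_flip, Submodule.mem_dualAnnihilator]
    intro v hv
    have hvv : Q v v - B v v = 0 := LinearMap.congr_fun (LinearMap.mem_ker.1 hv) v
    rw [hQ.eq, hx v (sub_eq_zero.1 hvv).symm]
  have hsub (w : V) : Q x w = Q y w - B y w := by
    rw [← hy, LinearMap.flip_apply, LinearMap.sub_apply, LinearMap.sub_apply, hQ.eq, hB.eq]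
  have hBx (w : V) : B w x = B w y - B w (A y) := by
    rw [← hA w x, hQ.eq, hsub, hQ.eq, hA, ← hA y, hQ.eq, hA]
  have hBAy : B (A y) x = Q (A y) (A y) - B (A y) (A y) := by
    rw [hBx, hB.eq, ← hA y]
  have hBxx : B x x = B y y - Q (A y) (A y) - (Q (A y) (A y) - B (A y) (A y)) := by
    rw [hBx x, hB.eq x y, hB.eq x (A y), hBAy, hBx y, ← hA y (A y)]
  linarith [hbochner y, hle (A y)]

end Bochner

section ThirdCovers

variable {ι E : Type*} [Finite ι] [NormedAddCommGroup E] [InnerProductSpace ℝ E]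
  {p : ι → E} {S W : Set ι}

/-- The faces three dimensions below `S`. -/
noncomputable def thirdCovers (p : ι → E) (S : Set ι) : Finset (Set ι) :=
  (Set.toFinite {W | ∃ T U, Flag p S T U W}).toFinset

@[simp] lemma mem_thirdCovers : W ∈ thirdCovers p S ↔ ∃ T U, Flag p S T U W := by simp [thirdCovers]

lemma sum_covers_sum_covers_sum_covers (F : Set ι → Set ι → Set ι → ℝ) :
    ∑ T ∈ covers p S, ∑ U ∈ covers p T, ∑ W ∈ covers p U, F T U W =
      ∑ W ∈ thirdCovers p S, ∑ q ∈ flags p S W, F q.1 q.2 W := by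
  have hleft (W : Set ι) := sum_flags_left (p := p) (S := S) (W := W) fun q => F q.1 q.2 W
  simp only [hleft]
  rw [Finset.sum_comm]
  refine Finset.sum_congr rfl fun T hT => ?_
  rw [sum_covers_sum_covers]
  refine Finset.sum_subset (fun W hW => ?_) fun W _ hW => Finset.sum_eq_zero fun U hU => ?_
  · obtain ⟨U, hU, hUW⟩ := mem_secondCovers.1 hW
    exact mem_thirdCovers.2 ⟨T, U, mem_covers.1 hT, hU, hUW⟩
  · exact absurd (mem_secondCovers.2 ⟨U, mem_between.1 hU⟩) hW

end ThirdCovers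

section LocalToGlobal

variable {ι E : Type*} [Finite ι] [NormedAddCommGroup E] [InnerProductSpace ℝ E]
  [FiniteDimensional ℝ E] {p : ι → E} {S T T' U W : Set ι} {k : ℕ}

/-- The diagonal form for which the support numbers of `S` are an eigenvector, of eigenvalue `1`,
of the operator representing `mixedForm p S`. -/
noncomputable def facetForm (p : ι → E) (S : Set ι) : LinearMap.BilinForm ℝ (Set ι → ℝ) :=
  ∑ T ∈ covers p S, (facetMixed p S T (supportNumber p S) / supportNumber p S T) •
    LinearMap.BilinForm.linMulLin (LinearMap.proj T) (LinearMap.proj T)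

lemma facetForm_apply (p : ι → E) (S : Set ι) (x y : Set ι → ℝ) :
    facetForm p S x y = ∑ T ∈ covers p S,
      facetMixed p S T (supportNumber p S) / supportNumber p S T * (x T * y T) := by
  simp [facetForm]

lemma facetForm_isSymm (p : ι → E) (S : Set ι) : (facetForm p S).IsSymm := ⟨fun x y => by
  simp only [facetForm_apply, mul_comm (x _)]⟩

lemma facetForm_supportNumber (p : ι → E) (S : Set ι) (x : Set ι → ℝ) :
    facetForm p S (supportNumber p S) x = mixedForm p S x (supportNumber p S) := by
  rw [facetForm_apply, mixedForm_apply]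
  refine Finset.sum_congr rfl fun T hT => ?_
  have := (mem_covers.1 hT).supportNumber_pos
  field_simp

lemma facetForm_congr {x x' : Set ι → ℝ} (hx : ∀ T, FaceCov p S T → x T = x' T) (y : Set ι → ℝ) :
    facetForm p S x y = facetForm p S x' y := by
  simp only [facetForm_apply]
  exact Finset.sum_congr rfl fun T hT => by rw [hx T (mem_covers.1 hT)]

lemma Diamond.exists_induced_eq (h : Diamond p S T T' U) : ∃ c s : ℝ, 0 < s ∧ ∀ x,
    induced p S T x U = (x T' - c * x T) / s ∧ induced p S T' x U = (x T - c * x T') / s := by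
  obtain ⟨c, s, hs, hcs, hbottom, htop⟩ := h.exists_reflection
  refine ⟨c, s, hs, fun x => ?_⟩
  have hT' := h.right.inner_cornerLift h.right_top x
  have htop' := induced_apply p S T' U x
  rw [hbottom, inner_add_right, real_inner_smul_right, real_inner_smul_right,
    h.left.inner_cornerLift h.left_top, ← induced_apply p S T U x] at hT'
  rw [htop, inner_sub_right, real_inner_smul_right, real_inner_smul_right,
    h.left.inner_cornerLift h.left_top, ← induced_apply p S T U x] at htop'
  rw [eq_div_iff hs.ne', eq_div_iff hs.ne']
  exact ⟨by linarith, by rw [htop', ← hT']; linear_combination x T * hcs⟩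

lemma Diamond.exists_sum_between_eq_sq (hp : PositivelySpans p) (h : Diamond p S T T' U) :
    ∃ s : ℝ, 0 < s ∧ ∀ x : Set ι → ℝ, ∑ V ∈ between p S U, faceVolume p U *
      (x V ^ 2 / supportNumber p S V * induced p S V (supportNumber p S) U -
        x V * induced p S V x U) =
      s * (x T / supportNumber p S T - x T' / supportNumber p S T') ^ 2 := by
  obtain ⟨c, s, hs, hinduced⟩ := h.exists_induced_eq
  have hT := h.left.supportNumber_pos
  have hT' := h.right.supportNumber_pos
  have hU := h.left_top.isPolarFace_right.faceVolume_pos hp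
  refine ⟨faceVolume p U * supportNumber p S T * supportNumber p S T' / s, by positivity,
    fun x => ?_⟩
  rw [h.sum_between, (hinduced x).1, (hinduced x).2, (hinduced (supportNumber p S)).1,
    (hinduced (supportNumber p S)).2]
  field_simp
  ring

lemma facetForm_sub_mixedForm (p : ι → E) (S : Set ι) (x : Set ι → ℝ) :
    facetForm p S x x - mixedForm p S x x =
      ∑ U ∈ secondCovers p S, ∑ T ∈ between p S U, faceVolume p U *
        (x T ^ 2 / supportNumber p S T * induced p S T (supportNumber p S) U -
          x T * induced p S T x U) := by
  rw [← sum_covers_sum_covers, facetForm_apply, mixedForm_apply, ← Finset.sum_sub_distrib]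
  refine Finset.sum_congr rfl fun T _ => ?_
  rw [facetMixed_apply, facetMixed_apply, Finset.sum_div, Finset.sum_mul, Finset.mul_sum,
    ← Finset.sum_sub_distrib]
  exact Finset.sum_congr rfl fun U _ => by ring

lemma sum_between_sub_nonneg (hp : PositivelySpans p) (x : Set ι → ℝ)
    (hU : U ∈ secondCovers p S) : 0 ≤ ∑ T ∈ between p S U, faceVolume p U *
      (x T ^ 2 / supportNumber p S T * induced p S T (supportNumber p S) U -
        x T * induced p S T x U) := by
  obtain ⟨T, hT, hTU⟩ := mem_secondCovers.1 hU
  obtain ⟨T', h⟩ := hT.exists_diamond hTU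
  obtain ⟨s, hs, hsum⟩ := h.exists_sum_between_eq_sq hp
  rw [hsum]
  positivity

lemma mixedForm_self_le_facetForm_self (hp : PositivelySpans p) (S : Set ι) (x : Set ι → ℝ) :
    mixedForm p S x x ≤ facetForm p S x x := by
  rw [← sub_nonneg, facetForm_sub_mixedForm]
  exact Finset.sum_nonneg fun U hU => sum_between_sub_nonneg hp x hU

lemma exists_eq_mul_supportNumber (hp : PositivelySpans p) (hS : IsPolarFace p S)
    (hk : corank p S = k + 2) {x : Set ι → ℝ} (hx : mixedForm p S x x = facetForm p S x x) :
    ∃ t : ℝ, ∀ T, FaceCov p S T → x T = t * supportNumber p S T := by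
  rw [eq_comm, ← sub_eq_zero, facetForm_sub_mixedForm,
    Finset.sum_eq_zero_iff_of_nonneg fun U hU => sum_between_sub_nonneg hp x hU] at hx
  obtain ⟨T₀, hT₀⟩ := hS.exists_faceCov_of_corank hp hk
  refine ⟨x T₀ / supportNumber p S T₀, fun T hT => ?_⟩
  rw [← div_eq_iff hT.supportNumber_pos.ne']
  refine eq_of_forall_diamond hp (by rw [corank] at hk; omega)
    (f := fun T => x T / supportNumber p S T) (fun T T' U h => ?_) hT hT₀
  obtain ⟨s, hs, hsum⟩ := h.exists_sum_between_eq_sq hp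
  specialize hsum x
  rw [hx U (mem_secondCovers.2 ⟨T, h.left, h.left_top⟩), zero_eq_mul, sq_eq_zero_iff,
    sub_eq_zero] at hsum
  exact hsum.resolve_left hs.ne'

/-- The vector whose inner products with the normals along the flags `S ⊂ T ⊂ U ⊂ W` are the
support numbers induced from `x`. -/
noncomputable def facetLift (p : ι → E) (S W : Set ι) (x : Set ι → ℝ) (T : Set ι) : E :=
  cornerLift p T W (induced p S T x) +
    (x T - ⟪cornerLift p T W (induced p S T x), normal p S T⟫_ℝ) • normal p S T

namespace Flag

lemma inner_facetLift_bottom (h : FaceCov p S T) (W : Set ι) (x : Set ι → ℝ) :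
    ⟪facetLift p S W x T, normal p S T⟫_ℝ = x T := by
  rw [facetLift, inner_add_left, real_inner_smul_left, h.inner_normal_self]
  ring

lemma inner_facetLift_middle (h : Flag p S T U W) (x : Set ι → ℝ) :
    ⟪facetLift p S W x T, normal p T U⟫_ℝ = induced p S T x U := by
  rw [facetLift, inner_add_left, real_inner_smul_left, h.middle.inner_cornerLift h.top,
    h.middle.inner_normal_eq_zero]
  ring

lemma inner_facetLift_top (h : Flag p S T U W) (x : Set ι → ℝ) :
    ⟪facetLift p S W x T, normal p U W⟫_ℝ = induced p T U (induced p S T x) W := by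
  rw [facetLift, inner_add_left, real_inner_smul_left, ← induced_apply,
    (Submodule.mem_orthogonal _ _).1 h.top.normal_mem_orthogonal _
      (faceSpan_mono h.middle.subset normal_mem_faceSpan)]
  ring

end Flag

lemma agreesOnRidges_facetLift (p : ι → E) (S W : Set ι) (x : Set ι → ℝ) :
    AgreesOnRidges p S W (facetLift p S W x) := by
  suffices ∀ T U, Flag p S T U W → ∀ z ∈ faceSpan p U, z ∈ (faceSpan p S)ᗮ →
      ⟪facetLift p S W x T, z⟫_ℝ = ⟪cornerLift p S U x, z⟫_ℝ from
    fun T T' U h h' z hz hzS => (this T U h z hz hzS).trans (this T' U h' z hz hzS).symm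
  intro T U h z hz hzS
  rw [h.bottom.inner_cornerLift_eq_add h.middle x hz hzS]
  conv_lhs => rw [h.bottom.eq_add_inner_smul_normal h.middle hz hzS]
  rw [inner_add_right, real_inner_smul_right, real_inner_smul_right,
    Flag.inner_facetLift_bottom h.bottom, h.inner_facetLift_middle]

end LocalToGlobal

section Induction

variable {ι E : Type*} [NormedAddCommGroup E] [InnerProductSpace ℝ E] [FiniteDimensional ℝ E]
  {p : ι → E} {S T U W : Set ι} {k : ℕ}

lemma Flag.inner_facePoint_sub_pos (h : Flag p S T U W) :
    0 < ⟪facePoint p W - facePoint p S, normal p S T⟫_ℝ := by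
  rw [h.bottom.inner_facePoint_sub_eq h.top.isPolarFace_right
    (h.middle.subset.trans h.top.subset)]
  exact h.bottom.supportNumber_pos

lemma FaceCov.inner_sub_starProjection_add_smul (h : FaceCov p U W) (hTU : T ⊆ U) (y : E) (t : ℝ) :
    ⟪y - (faceSpan p T).starProjection y + t • normal p S T, normal p U W⟫_ℝ =
      ⟪y, normal p U W⟫_ℝ := by
  have hperp {z : E} (hz : z ∈ faceSpan p T) : ⟪z, normal p U W⟫_ℝ = 0 :=
    (Submodule.mem_orthogonal _ _).1 h.normal_mem_orthogonal _ (faceSpan_mono hTU hz)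
  rw [inner_add_left, inner_sub_left, real_inner_smul_left, hperp normal_mem_faceSpan,
    hperp (Submodule.starProjection_apply_mem _ _)]
  ring

variable [Finite ι]

lemma sum_supportNumber_mul_mixedForm_induced (p : ι → E) (S : Set ι) (x : Set ι → ℝ) :
    ∑ T ∈ covers p S, supportNumber p S T * mixedForm p T (induced p S T x) (induced p S T x) =
      ∑ T ∈ covers p S, ∑ U ∈ covers p T, ∑ W ∈ covers p U, supportNumber p S T *
        (induced p S T x U * (faceVolume p W * induced p T U (induced p S T x) W)) := by
  simp only [mixedForm_apply, facetMixed_apply, Finset.mul_sum]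

lemma succ_mul_mixedForm_self (hp : PositivelySpans p) (hk : corank p S = k + 3)
    (x : Set ι → ℝ) :
    (k + 1 : ℝ) * mixedForm p S x x = ∑ T ∈ covers p S, ∑ U ∈ covers p T, ∑ W ∈ covers p U,
      x T * (induced p S T x U * (faceVolume p W *
        ⟪facePoint p W - facePoint p S, normal p U W⟫_ℝ)) := by
  simp only [mixedForm_apply, facetMixed_apply, Finset.mul_sum]
  refine Finset.sum_congr rfl fun T hT => Finset.sum_congr rfl fun U hU => ?_
  have hTU := mem_covers.1 hU
  rw [← Finset.mul_sum, ← Finset.mul_sum, ← hTU.isPolarFace_right.succ_mul_faceVolume_eq hp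
    ((mem_covers.1 hT).corank_eq_of_faceCov hTU hk)]
  ring

lemma sum_supportNumber_mul_mixedForm_sub (hp : PositivelySpans p) (hk : corank p S = k + 3)
    (x : Set ι → ℝ) :
    ∑ T ∈ covers p S, supportNumber p S T *
        mixedForm p T (induced p S T x) (induced p S T x) - (k + 1 : ℝ) * mixedForm p S x x =
      ∑ W ∈ thirdCovers p S, faceVolume p W *
        linkDefect p S W (facetLift p S W x) (facePoint p W - facePoint p S) := by
  rw [sum_supportNumber_mul_mixedForm_induced, succ_mul_mixedForm_self hp hk,
    sum_covers_sum_covers_sum_covers, sum_covers_sum_covers_sum_covers, ← Finset.sum_sub_distrib]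
  refine Finset.sum_congr rfl fun W _ => ?_
  rw [linkDefect_apply_eq_sum, Finset.mul_sum, ← Finset.sum_sub_distrib]
  refine Finset.sum_congr rfl fun q hq => ?_
  have h := mem_flags.1 hq
  rw [Flag.inner_facetLift_bottom h.bottom, h.inner_facetLift_middle, h.inner_facetLift_top,
    h.bottom.inner_facePoint_sub_eq h.top.isPolarFace_right (h.middle.subset.trans h.top.subset)]
  ring

lemma faceVolume_mul_linkDefect_nonneg (hp : PositivelySpans p) (x : Set ι → ℝ)
    (hW : W ∈ thirdCovers p S) : 0 ≤ faceVolume p W *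
      linkDefect p S W (facetLift p S W x) (facePoint p W - facePoint p S) := by
  obtain ⟨T, U, h⟩ := mem_thirdCovers.1 hW
  exact mul_nonneg (h.top.isPolarFace_right.faceVolume_pos hp).le
    ((agreesOnRidges_facetLift p S W x).linkDefect_nonneg fun _ _ h => h.inner_facePoint_sub_pos)

lemma succ_mul_mixedForm_self_le (hp : PositivelySpans p) (hk : corank p S = k + 3)
    (x : Set ι → ℝ) : (k + 1 : ℝ) * mixedForm p S x x ≤ ∑ T ∈ covers p S,
      supportNumber p S T * mixedForm p T (induced p S T x) (induced p S T x) := by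
  rw [← sub_nonneg, sum_supportNumber_mul_mixedForm_sub hp hk]
  exact Finset.sum_nonneg fun W hW => faceVolume_mul_linkDefect_nonneg hp x hW

lemma FaceCov.mixedForm_induced_supportNumber (hp : PositivelySpans p) (h : FaceCov p S T)
    (hk : corank p S = k + 3) (x : Set ι → ℝ) :
    mixedForm p T (induced p S T x) (supportNumber p T) = (k + 1 : ℝ) * facetMixed p S T x := by
  rw [mixedForm_supportNumber hp (k := k) (by rw [h.corank_left] at hk; omega), facetMixed_apply]
  simp only [mul_comm]

lemma FaceCov.mixedForm_induced_self_le (hp : PositivelySpans p) (h : FaceCov p S T)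
    (hk : corank p S = k + 3) (hT : IsHyperbolic p T) (x : Set ι → ℝ) :
    mixedForm p T (induced p S T x) (induced p S T x) ≤
      (k + 1 : ℝ) * (facetMixed p S T x ^ 2 / facetMixed p S T (supportNumber p S)) := by
  have hkT : corank p T = k + 2 := by rw [h.corank_left] at hk; omega
  have hle := hT.mul_le_sq hp h.isPolarFace_right hkT (induced p S T x)
  rw [h.mixedForm_induced_supportNumber hp hk, mixedForm_supportNumber_self hp hkT,
    ← le_div_iff₀ (by have := h.isPolarFace_right.faceVolume_pos hp; positivity)] at hle
  refine hle.trans_eq ?_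
  rw [h.facetMixed_supportNumber hp hk]
  push_cast
  have := h.isPolarFace_right.faceVolume_pos hp
  field_simp
  ring

/-- The operator representing `mixedForm p S` with respect to `facetForm p S`. -/
noncomputable def facetOperator (p : ι → E) (S : Set ι) (x : Set ι → ℝ) (T : Set ι) : ℝ :=
  facetMixed p S T x / (facetMixed p S T (supportNumber p S) / supportNumber p S T)

lemma FaceCov.facetMixed_supportNumber_div_pos (hp : PositivelySpans p) (h : FaceCov p S T)
    (hk : corank p S = k + 2) :
    0 < facetMixed p S T (supportNumber p S) / supportNumber p S T := by
  rw [h.facetMixed_supportNumber hp hk]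
  have := h.isPolarFace_right.faceVolume_pos hp
  have := h.supportNumber_pos
  positivity

lemma facetForm_facetOperator (hp : PositivelySpans p) (hk : corank p S = k + 2)
    (x y : Set ι → ℝ) : facetForm p S (facetOperator p S x) y = mixedForm p S x y := by
  rw [(mixedForm_isSymm p S).eq, facetForm_apply, mixedForm_apply]
  refine Finset.sum_congr rfl fun T hT => ?_
  have := (mem_covers.1 hT).facetMixed_supportNumber_div_pos hp hk
  rw [facetOperator, ← mul_assoc, mul_div_cancel₀ _ this.ne', mul_comm]

lemma mixedForm_self_le_facetForm_facetOperator (hp : PositivelySpans p)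
    (hk : corank p S = k + 3) (hfacets : ∀ T, FaceCov p S T → IsHyperbolic p T)
    (x : Set ι → ℝ) :
    mixedForm p S x x ≤ facetForm p S (facetOperator p S x) (facetOperator p S x) := by
  have hk1 : (0 : ℝ) < k + 1 := by positivity
  refine le_of_mul_le_mul_left ((succ_mul_mixedForm_self_le hp hk x).trans ?_) hk1
  rw [facetForm_apply, Finset.mul_sum]
  refine Finset.sum_le_sum fun T hT => ?_
  have h := mem_covers.1 hT
  have hh := h.supportNumber_pos
  have hmixed := h.facetMixed_supportNumber_div_pos hp hk
  have hmixed' := (div_pos_iff_of_pos_right hh).1 hmixed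
  calc supportNumber p S T * mixedForm p T (induced p S T x) (induced p S T x)
      ≤ supportNumber p S T *
          ((k + 1 : ℝ) * (facetMixed p S T x ^ 2 / facetMixed p S T (supportNumber p S))) :=
        mul_le_mul_of_nonneg_left (h.mixedForm_induced_self_le hp hk (hfacets T h) x) hh.le
    _ = _ := by
        rw [facetOperator]
        field_simp

lemma mixedForm_self_nonpos_of_facets (hp : PositivelySpans p) (hS : IsPolarFace p S)
    (hk : corank p S = k + 3) (hfacets : ∀ T, FaceCov p S T → IsHyperbolic p T)
    {x : Set ι → ℝ} (hx : mixedForm p S x (supportNumber p S) = 0) : mixedForm p S x x ≤ 0 := by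
  refine apply_self_nonpos_of_bochner (mixedForm_isSymm p S) (facetForm_isSymm p S)
    (facetForm_facetOperator hp hk) (mixedForm_self_le_facetForm_self hp S)
    (mixedForm_self_le_facetForm_facetOperator hp hk hfacets) fun v hv => ?_
  obtain ⟨t, ht⟩ := exists_eq_mul_supportNumber hp hS hk hv
  rw [facetForm_congr (x' := t • supportNumber p S) ht, map_smul, LinearMap.smul_apply,
    facetForm_supportNumber, hx, smul_zero]

lemma exists_eq_inner_normal_of_facets (hp : PositivelySpans p) (hk : corank p S = k + 3)
    {x : Set ι → ℝ} {y : Set ι → E}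
    (hy : ∀ T, FaceCov p S T → ∀ U, FaceCov p T U → induced p S T x U = ⟪y T, normal p T U⟫_ℝ)
    (hlift : ∀ T T' U W, Diamond p S T T' U → FaceCov p U W →
      ⟪facetLift p S W x T, normal p U W⟫_ℝ = ⟪facetLift p S W x T', normal p U W⟫_ℝ) :
    ∃ z : E, ∀ T, FaceCov p S T → x T = ⟪z, normal p S T⟫_ℝ := by
  have hlift_eq {T U W : Set ι} (h : Flag p S T U W) :
      ⟪facetLift p S W x T, normal p U W⟫_ℝ = ⟪y T, normal p U W⟫_ℝ := by
    rw [h.inner_facetLift_top, h.middle.induced_congr h.top (hy T h.bottom),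
      h.middle.induced_inner_normal h.top]
  have hperp (T : Set ι) : y T - (faceSpan p T).starProjection (y T) ∈ (faceSpan p T)ᗮ :=
    Submodule.sub_starProjection_mem_orthogonal _
  refine exists_forall_eq_inner_normal hp (by rw [corank] at hk; omega)
    (fun T => y T - (faceSpan p T).starProjection (y T) + x T • normal p S T)
    (fun T hT => ?_) (fun T hT => ?_) (fun T U hT hU => ?_) fun T T' U W h hW => ?_
  · exact Submodule.add_mem _ (Submodule.orthogonal_le (faceSpan_mono hT.subset) (hperp T))
      (Submodule.smul_mem _ _ hT.normal_mem_orthogonal)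
  · rw [inner_add_left, real_inner_smul_left, hT.inner_normal_self,
      Submodule.inner_left_of_mem_orthogonal normal_mem_faceSpan (hperp T)]
    ring
  · rw [hU.inner_sub_starProjection_add_smul subset_rfl, hy T hT U hU]
  · rw [hW.inner_sub_starProjection_add_smul h.left_top.subset,
      hW.inner_sub_starProjection_add_smul h.right_top.subset,
      ← hlift_eq (h.flag_left hW), ← hlift_eq (h.flag_right hW), hlift T T' U W h hW]

lemma isHyperbolic_of_facets (hp : PositivelySpans p) (hS : IsPolarFace p S)
    (hk : corank p S = k + 3) (hfacets : ∀ T, FaceCov p S T → IsHyperbolic p T) :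
    IsHyperbolic p S := by
  have hneg (x : Set ι → ℝ) : mixedForm p S x (supportNumber p S) = 0 → mixedForm p S x x ≤ 0 :=
    mixedForm_self_nonpos_of_facets hp hS hk hfacets
  refine fun x hx => ⟨hneg x hx, fun hxx => ?_⟩
  have hinduced (T : Set ι) (hT : FaceCov p S T) :
      mixedForm p T (induced p S T x) (supportNumber p T) = 0 := by
    rw [hT.mixedForm_induced_supportNumber hp hk, hT.facetMixed_eq_zero hp hk hneg hx hxx,
      mul_zero]
  have hnonpos : ∀ T ∈ covers p S,
      supportNumber p S T * mixedForm p T (induced p S T x) (induced p S T x) ≤ 0 := fun T hT =>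
    mul_nonpos_of_nonneg_of_nonpos (mem_covers.1 hT).supportNumber_pos.le
      (hfacets T (mem_covers.1 hT) _ (hinduced T (mem_covers.1 hT))).1
  have hnonneg := fun W hW => faceVolume_mul_linkDefect_nonneg (S := S) (W := W) hp x hW
  have hsum := sum_supportNumber_mul_mixedForm_sub hp hk x
  rw [hxx, mul_zero, sub_zero] at hsum
  have hlocal := (Finset.sum_eq_zero_iff_of_nonpos hnonpos).1
    ((Finset.sum_nonpos hnonpos).antisymm (hsum ▸ Finset.sum_nonneg hnonneg))
  have hdefect := (Finset.sum_eq_zero_iff_of_nonneg hnonneg).1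
    ((hsum ▸ Finset.sum_nonpos hnonpos).antisymm (Finset.sum_nonneg hnonneg))
  choose! y hy using fun T hT => (hfacets T hT _ (hinduced T hT)).2
    ((mul_eq_zero.1 (hlocal T (mem_covers.2 hT))).resolve_left hT.supportNumber_pos.ne')
  refine exists_eq_inner_normal_of_facets hp hk hy fun T T' U W h hW => ?_
  exact (agreesOnRidges_facetLift p S W x).inner_normal_eq_of_linkDefect_eq_zero
    (fun _ _ h => h.inner_facePoint_sub_pos)
    ((mul_eq_zero.1 (hdefect W (mem_thirdCovers.2 ⟨T, U, h.flag_left hW⟩))).resolve_left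
      (hW.isPolarFace_right.faceVolume_pos hp).ne') h hW

theorem IsPolarFace.isHyperbolic (hp : PositivelySpans p) (hS : IsPolarFace p S)
    (hk : corank p S = k + 2) : IsHyperbolic p S := by
  induction k generalizing S with
  | zero => exact isHyperbolic_of_corank_eq_two hp hS hk
  | succ k ih =>
    refine isHyperbolic_of_facets hp hS hk fun T hT => ih hT.isPolarFace_right ?_
    rw [hT.corank_left] at hk
    omega

end Induction

/-! ### Extreme subsets of the polytope and faces of its polar -/

section Extreme

variable {E : Type*} [NormedAddCommGroup E] [NormedSpace ℝ E]

lemma inter_affineSpan_subset_of_isExtreme [FiniteDimensional ℝ E] {P F : Set E}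
    (hF : IsExtreme ℝ P F) (hconv : Convex ℝ F) : P ∩ affineSpan ℝ F ⊆ F := by
  rintro z ⟨hzP, hz⟩
  obtain ⟨w, hw⟩ := ((affineSpan_nonempty ℝ).1 ⟨z, hz⟩).intrinsicInterior hconv
  obtain ⟨w', hw', rfl⟩ := mem_intrinsicInterior.1 hw
  let ray : ℝ → affineSpan ℝ F := fun t =>
    ⟨AffineMap.lineMap z w' t, AffineMap.lineMap_mem t hz w'.2⟩
  have hray : Continuous ray := AffineMap.lineMap_continuous.subtype_mk _
  have hray_one : ray 1 = w' := Subtype.ext (AffineMap.lineMap_apply_one z (w' : E))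
  have hev : ∀ᶠ t in nhdsWithin (1 : ℝ) (Set.Ioi 1), AffineMap.lineMap z (w' : E) t ∈ F :=
    ((hray.tendsto 1).eventually (mem_interior_iff_mem_nhds.1 (hray_one ▸ hw'))).filter_mono
      nhdsWithin_le_nhds
  obtain ⟨t, htF, ht⟩ := (hev.and self_mem_nhdsWithin).exists
  have ht0 : 0 < t := one_pos.trans ht
  refine hF.left_mem_of_mem_openSegment hzP (hF.1 htF)
    (interior_subset hw' : w' ∈ Subtype.val ⁻¹' F) ?_
  rw [openSegment_eq_image_lineMap]
  refine ⟨t⁻¹, ⟨inv_pos.2 ht0, inv_lt_one_of_one_lt₀ ht⟩, ?_⟩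
  rw [AffineMap.lineMap_lineMap_right, inv_mul_cancel₀ ht0.ne', AffineMap.lineMap_apply_one]

lemma eq_of_forall_mem_affineSubspace_lt {Q : AffineSubspace ℝ E} {f : StrongDual ℝ E} {c : ℝ}
    (hf : ∀ z ∈ Q, c < f z) {a b : E} (ha : a ∈ Q) (hb : b ∈ Q) : f a = f b := by
  by_contra hne
  have hne' : f b - f a ≠ 0 := sub_ne_zero.2 (Ne.symm hne)
  have := hf _ (AffineMap.lineMap_mem ((c - f a) / (f b - f a)) ha hb)
  rw [AffineMap.lineMap_apply, vsub_eq_sub, vadd_eq_add, map_add, map_smul, map_sub, smul_eq_mul,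
    div_mul_cancel₀ _ hne'] at this
  linarith

end Extreme

section Edges

variable {ι E : Type*} [NormedAddCommGroup E] [InnerProductSpace ℝ E] {p : ι → E} {S : Set ι}

lemma positivelySpans_of_zero_mem_interior
    (h0 : (0 : E) ∈ interior (convexHull ℝ (Set.range p))) : PositivelySpans p := by
  intro y hy
  by_contra! hle
  have hsub : convexHull ℝ (Set.range p) ⊆ {z | ⟪y, z⟫_ℝ ≤ 0} :=
    convexHull_min (Set.range_subset_iff.2 hle) (convex_halfSpace_le (innerₗ E y).isLinear 0)
  have hline : Filter.Tendsto (fun t : ℝ => t • y) (nhds 0) (nhds 0) :=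
    Continuous.tendsto' (by fun_prop) 0 0 (zero_smul ℝ y)
  have hev : ∀ᶠ t in nhdsWithin (0 : ℝ) (Set.Ioi 0), t • y ∈ convexHull ℝ (Set.range p) :=
    (hline.eventually (mem_interior_iff_mem_nhds.1 h0)).filter_mono nhdsWithin_le_nhds
  obtain ⟨t, htP, ht⟩ := (hev.and self_mem_nhdsWithin).exists
  have hty : ⟪y, t • y⟫_ℝ ≤ 0 := hsub htP
  rw [real_inner_smul_right] at hty
  exact hty.not_gt (mul_pos ht (real_inner_self_pos.2 hy))

lemma convexHull_subset_of_inner_le {x : E} (hS : ∀ i ∈ S, ⟪x, p i⟫_ℝ = 1)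
    (hlt : ∀ i ∉ S, ⟪x, p i⟫_ℝ < 1) : convexHull ℝ (Set.range p) ⊆
      {z | ⟪x, z⟫_ℝ ≤ 1 ∧ (⟪x, z⟫_ℝ = 1 → z ∈ convexHull ℝ (p '' S))} := by
  refine convexHull_min ?_ (convex_iff_forall_pos.2 ?_)
  · rintro _ ⟨i, rfl⟩
    by_cases hi : i ∈ S
    · exact ⟨(hS i hi).le, fun _ => subset_convexHull ℝ _ ⟨i, hi, rfl⟩⟩
    · exact ⟨(hlt i hi).le, fun h => absurd h (hlt i hi).ne⟩
  · rintro z₁ ⟨hz₁, hmem₁⟩ z₂ ⟨hz₂, hmem₂⟩ a b ha hb hab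
    simp only [Set.mem_ofPred_eq, inner_add_right, real_inner_smul_right]
    refine ⟨by nlinarith, fun h => ?_⟩
    exact convex_convexHull ℝ _ (hmem₁ (le_antisymm hz₁ (by nlinarith)))
      (hmem₂ (le_antisymm hz₂ (by nlinarith))) ha.le hb.le hab

lemma IsPolarFace.isExposed (h : IsPolarFace p S) :
    IsExposed ℝ (convexHull ℝ (Set.range p)) (convexHull ℝ (p '' S)) := by
  obtain ⟨x, hS, hlt⟩ := h
  have hP := convexHull_subset_of_inner_le hS hlt
  have hone : convexHull ℝ (p '' S) ⊆ {z | ⟪x, z⟫_ℝ = 1} :=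
    convexHull_min (by rintro _ ⟨i, hi, rfl⟩; exact hS i hi)
      (convex_hyperplane (innerₗ E x).isLinear 1)
  have hSP : convexHull ℝ (p '' S) ⊆ convexHull ℝ (Set.range p) :=
    convexHull_mono (Set.image_subset_range p S)
  rintro ⟨w, hw⟩
  refine ⟨innerSL ℝ x, Set.Subset.antisymm (fun z hz => ⟨hSP hz, fun y hy => ?_⟩) ?_⟩
  · simpa only [innerSL_apply_apply, show ⟪x, z⟫_ℝ = 1 from hone hz] using (hP hy).1
  · rintro z ⟨hz, hmax⟩
    refine (hP hz).2 (le_antisymm (hP hz).1 ?_)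
    simpa only [innerSL_apply_apply, show ⟪x, w⟫_ℝ = 1 from hone hw] using hmax w (hSP hw)

namespace PositivelySpans

lemma isPolarFace_of_inner_lt (hp : PositivelySpans p) {y : E} (hy : y ≠ 0) {c : ℝ}
    (heq : ∀ i ∈ S, ⟪y, p i⟫_ℝ = c) (hlt : ∀ i ∉ S, ⟪y, p i⟫_ℝ < c) : IsPolarFace p S := by
  have hc : 0 < c := by
    obtain ⟨i, hi⟩ := hp y hy
    by_cases hiS : i ∈ S
    · rwa [← heq i hiS]
    · exact hi.trans (hlt i hiS)
  refine ⟨c⁻¹ • y, fun i hi => ?_, fun i hi => ?_⟩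
  · rw [real_inner_smul_left, heq i hi, inv_mul_cancel₀ hc.ne']
  · rw [real_inner_smul_left, ← div_eq_inv_mul, div_lt_one hc]
    exact hlt i hi

variable [FiniteDimensional ℝ E] [Finite ι]

lemma isPolarFace_of_isExtreme (hp : PositivelySpans p) (hinj : Function.Injective p)
    (hvert : ∀ i, p i ∈ Set.extremePoints ℝ (convexHull ℝ (Set.range p)))
    (hS : S.Nonempty) (hS' : S ≠ Set.univ)
    (he : IsExtreme ℝ (convexHull ℝ (Set.range p)) (convexHull ℝ (p '' S))) :
    IsPolarFace p S := by
  set C : Set E := convexHull ℝ (p '' Sᶜ)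
  have hCdiff : C ⊆ convexHull ℝ (Set.range p) \ convexHull ℝ (p '' S) := by
    refine convexHull_min ?_ (he.convex_sdiff (convex_convexHull ℝ _))
    rintro _ ⟨i, hi, rfl⟩
    refine ⟨(hvert i).1, fun hmem => hi ?_⟩
    exact hinj.mem_set_image.1 (extremePoints_convexHull_subset
      (inter_extremePoints_subset_extremePoints_of_subset he.1 ⟨hmem, hvert i⟩))
  have hdisj : Disjoint C (affineSpan ℝ (p '' S) : Set E) := by
    refine Set.disjoint_left.2 fun z hz hzS => (hCdiff hz).2 ?_
    rw [← affineSpan_convexHull] at hzS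
    exact inter_affineSpan_subset_of_isExtreme he (convex_convexHull ℝ _) ⟨(hCdiff hz).1, hzS⟩
  obtain ⟨f, u, v, hfC, huv, hfS⟩ := geometric_hahn_banach_compact_closed (convex_convexHull ℝ _)
    ((Set.toFinite _).isCompact_convexHull ℝ) (AffineSubspace.convex _)
    (AffineSubspace.closed_of_finiteDimensional _) hdisj
  have hmem : ∀ i ∈ S, p i ∈ affineSpan ℝ (p '' S) := fun i hi =>
    subset_affineSpan ℝ _ (Set.mem_image_of_mem p hi)
  obtain ⟨j, hj⟩ := hS
  have hlt : ∀ i ∉ S, f (p i) < f (p j) := fun i hi =>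
    (hfC _ (subset_convexHull ℝ _ ⟨i, hi, rfl⟩)).trans (huv.trans (hfS _ (hmem j hj)))
  obtain ⟨k, hk⟩ := (Set.ne_univ_iff_exists_notMem S).1 hS'
  refine hp.isPolarFace_of_inner_lt (y := (InnerProductSpace.toDual ℝ E).symm f) (c := f (p j))
    (fun h0 => ?_) (fun i hi => ?_) fun i hi => ?_
  · have hf : f = 0 := by simpa using h0
    simpa [hf] using hlt k hk
  · rw [InnerProductSpace.toDual_symm_apply]
    exact eq_of_forall_mem_affineSubspace_lt hfS (hmem i hi) (hmem j hj)
  · rw [InnerProductSpace.toDual_symm_apply]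
    exact hlt i hi

end PositivelySpans

variable [Finite ι]

lemma faceRank_le_ncard (p : ι → E) (S : Set ι) : faceRank p S ≤ S.ncard := by
  classical
  have := Fintype.ofFinite ↥(p '' S)
  refine (finrank_span_le_card (R := ℝ) (p '' S)).trans ?_
  rw [← Set.ncard_eq_toFinset_card']
  exact Set.ncard_image_le (Set.toFinite S)

namespace PositivelySpans

variable [FiniteDimensional ℝ E]

lemma ne_univ_of_ncard_le_finrank (hp : PositivelySpans p) (hE : 0 < finrank ℝ E)
    (hS : S.ncard ≤ finrank ℝ E) : S ≠ Set.univ := by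
  rintro rfl
  have : Nontrivial E := Module.finrank_pos_iff.1 hE
  obtain ⟨y₀, hy₀⟩ := exists_ne (0 : E)
  obtain ⟨i, -⟩ := hp y₀ hy₀
  have hrank : faceRank p {i}ᶜ < finrank ℝ E := by
    have := faceRank_le_ncard p {i}ᶜ
    have := Set.ncard_sdiff_singleton_lt_of_mem (Set.mem_univ i)
    rw [← Set.compl_eq_univ_sdiff] at this
    omega
  obtain ⟨y, hy, hy0⟩ := exists_ne_zero_mem_orthogonal_faceSpan hrank
  have honly : ∀ z ∈ (faceSpan p {i}ᶜ)ᗮ, z ≠ 0 → 0 < ⟪z, p i⟫_ℝ := fun z hz hz0 => by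
    obtain ⟨k, hk⟩ := hp z hz0
    by_cases hki : k = i
    · exact hki ▸ hk
    · exact absurd (mem_orthogonal_faceSpan.1 hz k hki) hk.ne'
  have hneg := honly (-y) (Submodule.neg_mem _ hy) (neg_ne_zero.2 hy0)
  rw [inner_neg_left, neg_pos] at hneg
  exact hneg.asymm (honly y hy hy0)

lemma isPolarFace_iff_isExtreme (hp : PositivelySpans p) (hinj : Function.Injective p)
    (hvert : ∀ i, p i ∈ Set.extremePoints ℝ (convexHull ℝ (Set.range p)))
    (hS : S.Nonempty) (hS' : S ≠ Set.univ) : IsPolarFace p S ↔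
      IsExtreme ℝ (convexHull ℝ (Set.range p)) (convexHull ℝ (p '' S)) :=
  ⟨fun h => h.isExposed.isExtreme, hp.isPolarFace_of_isExtreme hinj hvert hS hS'⟩

lemma isPolarFace_singleton (hp : PositivelySpans p) (hinj : Function.Injective p)
    (hvert : ∀ i, p i ∈ Set.extremePoints ℝ (convexHull ℝ (Set.range p)))
    (hE : 0 < finrank ℝ E) (i : ι) : IsPolarFace p {i} := by
  rw [hp.isPolarFace_iff_isExtreme hinj hvert (Set.singleton_nonempty i)
    (hp.ne_univ_of_ncard_le_finrank hE ((Set.ncard_singleton i).trans_le hE)), Set.image_singleton,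
    convexHull_singleton, isExtreme_singleton]
  exact hvert i

lemma isPolarFace_pair_iff (hp : PositivelySpans p) (hinj : Function.Injective p)
    (hvert : ∀ i, p i ∈ Set.extremePoints ℝ (convexHull ℝ (Set.range p)))
    (hE : 2 ≤ finrank ℝ E) (i j : ι) : IsPolarFace p {i, j} ↔
      IsExtreme ℝ (convexHull ℝ (Set.range p)) (segment ℝ (p i) (p j)) := by
  have hcard : ({i, j} : Set ι).ncard ≤ 2 := by simpa using Set.ncard_insert_le i {j}
  rw [hp.isPolarFace_iff_isExtreme hinj hvert (Set.insert_nonempty i {j})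
    (hp.ne_univ_of_ncard_le_finrank (two_pos.trans_le hE) (hcard.trans hE)),
    Set.image_pair, convexHull_pair]

end PositivelySpans

end Edges

/-! ### The Hessian of the volume at the polar polytope -/

section Vertices

variable {ι E : Type*} [NormedAddCommGroup E] [InnerProductSpace ℝ E]
  {p : ι → E} {T U : Set ι} {i j : ι}

lemma isPolarFace_empty (p : ι → E) : IsPolarFace p ∅ := ⟨0, by simp, by simp⟩

lemma faceRank_empty (p : ι → E) : faceRank p ∅ = 0 := by
  rw [faceRank, faceSpan, Set.image_empty, Submodule.span_empty, finrank_bot]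

lemma corank_empty (p : ι → E) : corank p ∅ = finrank ℝ E := by
  rw [corank, faceRank_empty, Nat.sub_zero]

lemma IsPolarFace.apply_ne_zero (h : IsPolarFace p {i}) : p i ≠ 0 := fun h0 => by
  simpa [h0] using h.inner_facePoint_eq (Set.mem_singleton i)

variable [FiniteDimensional ℝ E] [Finite ι]

lemma IsPolarFace.faceCov_empty (h : IsPolarFace p {i}) : FaceCov p ∅ {i} := by
  refine ⟨isPolarFace_empty p, h, Set.empty_subset _, ?_⟩
  have hlt := (isPolarFace_empty p).faceRank_lt h (Set.empty_ssubset.2 (Set.singleton_nonempty i))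
  have hle := faceRank_le_ncard p {i}
  rw [Set.ncard_singleton] at hle
  rw [faceRank_empty] at hlt ⊢
  omega

lemma faceCov_empty_iff (h : ∀ i, IsPolarFace p {i}) : FaceCov p ∅ T ↔ ∃ i, T = {i} := by
  refine ⟨fun hT => ?_, fun ⟨i, hi⟩ => hi ▸ (h i).faceCov_empty⟩
  obtain ⟨i, hi, -⟩ := Set.exists_of_ssubset hT.ssubset
  exact ⟨i, ((h i).faceCov_empty.eq_of_subset hT (Set.singleton_subset_iff.2 hi)).symm⟩

lemma normal_empty_singleton (h : IsPolarFace p {i}) :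
    normal p ∅ {i} = ‖p i‖⁻¹ • p i := by
  have hmem : normal p ∅ {i} ∈ faceSpan p {i} := normal_mem_faceSpan
  rw [faceSpan, Set.image_singleton, Submodule.mem_span_singleton] at hmem
  obtain ⟨a, ha⟩ := hmem
  have hpos := h.faceCov_empty.inner_normal_pos (Set.mem_singleton i) (Set.notMem_empty i)
  have hnorm := h.faceCov_empty.inner_normal_self
  rw [← ha, real_inner_smul_left] at hpos
  have ha0 : 0 < a := pos_of_mul_pos_left hpos real_inner_self_nonneg
  rw [← ha, real_inner_self_eq_norm_sq, norm_smul, Real.norm_of_nonneg ha0.le,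
    pow_eq_one_iff_of_nonneg (by positivity) two_ne_zero] at hnorm
  rw [← ha, eq_inv_of_mul_eq_one_left hnorm]

lemma faceCov_singleton_pair (hi : IsPolarFace p {i}) (hij : i ≠ j) (h : IsPolarFace p {i, j}) :
    FaceCov p {i} {i, j} := by
  refine ⟨hi, h, by simp, ?_⟩
  have hlt := hi.faceRank_lt h <| (Set.ssubset_iff_of_subset (by simp)).2
    ⟨j, by simp, hij.symm⟩
  have hle := faceRank_le_ncard p {i, j}
  rw [Set.ncard_pair hij] at hle
  have hrank := hi.faceCov_empty.faceRank_right
  rw [faceRank_empty] at hrank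
  omega

lemma exists_diamond_empty (h : ∀ i, IsPolarFace p {i}) (hU : FaceCov p {i} U) :
    ∃ k, U = {i, k} ∧ Diamond p ∅ {i} {k} U := by
  obtain ⟨T', hdiamond⟩ := (h i).faceCov_empty.exists_diamond hU
  obtain ⟨k, rfl⟩ := (faceCov_empty_iff h).1 hdiamond.right
  refine ⟨k, Set.Subset.antisymm (fun l hl => ?_) (Set.pair_subset (hU.subset rfl)
    (hdiamond.right_top.subset rfl)), hdiamond⟩
  have hrank : faceRank p {l} = faceRank p {i} := by
    rw [(h l).faceCov_empty.faceRank_right, (h i).faceCov_empty.faceRank_right]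
  have hlU : FaceCov p {l} U :=
    ⟨h l, hU.isPolarFace_right, Set.singleton_subset_iff.2 hl, hrank ▸ hU.faceRank_right⟩
  simpa using hdiamond.eq_or_eq (h l).faceCov_empty hlU

lemma exists_induced_eq_div (h : ∀ i, IsPolarFace p {i}) (hU : FaceCov p {i} U) :
    ∃ k, U = {i, k} ∧ ∃ s > 0, ∀ x, x {i} = 0 → induced p ∅ {i} x U = x {k} / s := by
  obtain ⟨k, hUk, hdiamond⟩ := exists_diamond_empty h hU
  obtain ⟨c, s, hs, hinduced⟩ := hdiamond.exists_induced_eq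
  exact ⟨k, hUk, s, hs, fun x hx => by rw [(hinduced x).1, hx, mul_zero, sub_zero]⟩

lemma facetMixed_singleton_pos (hp : PositivelySpans p) (h : ∀ i, IsPolarFace p {i})
    (hij : i ≠ j) (hF : IsPolarFace p {i, j}) {x : Set ι → ℝ} (hx : ∀ l, 0 ≤ x {l})
    (hxi : x {i} = 0) (hxj : 0 < x {j}) : 0 < facetMixed p ∅ {i} x := by
  rw [facetMixed_apply]
  refine Finset.sum_pos' (fun U hU => ?_)
    ⟨{i, j}, mem_covers.2 (faceCov_singleton_pair (h i) hij hF), ?_⟩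
  · rw [mem_covers] at hU
    obtain ⟨k, -, s, hs, hinduced⟩ := exists_induced_eq_div h hU
    rw [hinduced x hxi]
    exact mul_nonneg (hU.isPolarFace_right.faceVolume_pos hp).le (div_nonneg (hx k) hs.le)
  · obtain ⟨k, hk, s, hs, hinduced⟩ :=
      exists_induced_eq_div h (faceCov_singleton_pair (h i) hij hF)
    have hjk : j = k := by
      have : j ∈ ({i, k} : Set ι) := hk ▸ Set.mem_insert_of_mem i rfl
      exact this.resolve_left hij.symm
    rw [hinduced x hxi, ← hjk]
    exact mul_pos (hF.faceVolume_pos hp) (div_pos hxj hs)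

lemma facetMixed_singleton_eq_zero (h : ∀ i, IsPolarFace p {i}) {x : Set ι → ℝ}
    (hx : ∀ l, IsPolarFace p {i, l} → x {l} = 0) : facetMixed p ∅ {i} x = 0 := by
  rw [facetMixed_apply]
  refine Finset.sum_eq_zero fun U hU => ?_
  rw [mem_covers] at hU
  obtain ⟨k, rfl, s, -, hinduced⟩ := exists_induced_eq_div h hU
  rw [hinduced x (hx i (by simpa using h i)), hx k hU.isPolarFace_right, zero_div, mul_zero]

end Vertices

section Hessian

variable {ι E : Type*} [NormedAddCommGroup E]

/-- The displacements of the facet hyperplanes `⟪x, p i⟫ = 1` of the polar polytope, measured along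
their unit normals, when the right-hand sides are changed by `v`. -/
noncomputable def facetOffset (p : ι → E) : (ι → ℝ) →ₗ[ℝ] Set ι → ℝ :=
  Function.ExtendByZero.linearMap ℝ (fun i => ({i} : Set ι)) ∘ₗ
    LinearMap.pi fun i => ‖p i‖⁻¹ • LinearMap.proj i

lemma facetOffset_singleton (p : ι → E) (v : ι → ℝ) (i : ι) :
    facetOffset p v {i} = ‖p i‖⁻¹ * v i :=
  Set.singleton_injective.extend_apply _ _ i

variable [InnerProductSpace ℝ E] [FiniteDimensional ℝ E] {p : ι → E}

lemma facetOffset_inner [Finite ι] (h : ∀ i, IsPolarFace p {i}) (y : E) {T : Set ι}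
    (hT : FaceCov p ∅ T) :
    facetOffset p (fun i => ⟪y, p i⟫_ℝ) T = ⟪y, normal p ∅ T⟫_ℝ := by
  obtain ⟨i, rfl⟩ := (faceCov_empty_iff h).1 hT
  rw [facetOffset_singleton, normal_empty_singleton (h i), real_inner_smul_right]

lemma exists_facetOffset_eq [Finite ι] (h : ∀ i, IsPolarFace p {i}) (x : Set ι → ℝ) :
    ∃ v, ∀ T, FaceCov p ∅ T → facetOffset p v T = x T := by
  refine ⟨fun i => ‖p i‖ * x {i}, fun T hT => ?_⟩
  obtain ⟨i, rfl⟩ := (faceCov_empty_iff h).1 hT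
  rw [facetOffset_singleton, inv_mul_cancel_left₀ (norm_ne_zero_iff.2 (h i).apply_ne_zero)]

variable [Fintype ι]

lemma sum_covers_empty (h : ∀ i, IsPolarFace p {i}) {A : Type*} [AddCommMonoid A]
    (f : Set ι → A) : ∑ T ∈ covers p ∅, f T = ∑ i, f {i} := by
  refine (Finset.sum_nbij (fun i => ({i} : Set ι)) (fun i _ => ?_)
    Set.singleton_injective.injOn (fun T hT => ?_) fun _ _ => rfl).symm
  · exact mem_covers.2 (h i).faceCov_empty
  · obtain ⟨i, rfl⟩ := (faceCov_empty_iff h).1 (mem_covers.1 hT)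
    exact ⟨i, Finset.mem_coe.2 (Finset.mem_univ i), rfl⟩

variable [DecidableEq ι]

/-- Up to a constant factor, the Hessian of the volume of `{x | ∀ i, ⟪x, p i⟫ ≤ 1 + v i}` as a
function of `v`, at `v = 0`. -/
noncomputable def volumeHessian (p : ι → E) : Matrix ι ι ℝ :=
  LinearMap.toMatrix₂' ℝ ((mixedForm p ∅).compl₁₂ (facetOffset p) (facetOffset p))

lemma dotProduct_volumeHessian_mulVec (p : ι → E) (v w : ι → ℝ) :
    v ⬝ᵥ volumeHessian p *ᵥ w = mixedForm p ∅ (facetOffset p v) (facetOffset p w) := by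
  rw [volumeHessian, ← Matrix.toLinearMap₂'_apply', Matrix.toLinearMap₂'_toMatrix',
    LinearMap.compl₁₂_apply]

lemma volumeHessian_isHermitian (p : ι → E) : (volumeHessian p).IsHermitian :=
  Matrix.IsHermitian.ext fun i j => by
    simp only [volumeHessian, LinearMap.toMatrix₂'_apply, LinearMap.compl₁₂_apply, star_trivial]
    exact (mixedForm_isSymm p ∅).eq _ _

lemma volumeHessian_apply (h : ∀ i, IsPolarFace p {i}) (i j : ι) : volumeHessian p i j =
    ‖p i‖⁻¹ * facetMixed p ∅ {i} (facetOffset p (Pi.single j 1)) := by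
  rw [volumeHessian, LinearMap.toMatrix₂'_apply, LinearMap.compl₁₂_apply, mixedForm_apply,
    sum_covers_empty h, Finset.sum_eq_single i]
  · rw [facetOffset_singleton, Pi.single_eq_same, mul_one]
  · intro l _ hl
    rw [facetOffset_singleton, Pi.single_eq_of_ne hl, mul_zero, zero_mul]
  · simp

lemma volumeHessian_pos (hp : PositivelySpans p) (h : ∀ i, IsPolarFace p {i}) {i j : ι}
    (hij : i ≠ j) (hF : IsPolarFace p {i, j}) : 0 < volumeHessian p i j := by
  have hnorm : ∀ l, 0 < ‖p l‖⁻¹ := fun l => inv_pos.2 (norm_pos_iff.2 (h l).apply_ne_zero)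
  rw [volumeHessian_apply h]
  refine mul_pos (hnorm i) (facetMixed_singleton_pos hp h hij hF (fun l => ?_) ?_ ?_)
  · rw [facetOffset_singleton, Pi.single_apply]
    exact mul_nonneg (hnorm l).le (by split_ifs <;> norm_num)
  · rw [facetOffset_singleton, Pi.single_eq_of_ne hij, mul_zero]
  · rw [facetOffset_singleton, Pi.single_eq_same, mul_one]
    exact hnorm j

lemma volumeHessian_eq_zero (h : ∀ i, IsPolarFace p {i}) {i j : ι} (hF : ¬ IsPolarFace p {i, j}) :
    volumeHessian p i j = 0 := by
  rw [volumeHessian_apply h, facetMixed_singleton_eq_zero h fun l hl => ?_, mul_zero]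
  rw [facetOffset_singleton, Pi.single_eq_of_ne (by rintro rfl; exact hF hl), mul_zero]

variable {k : ℕ}

lemma volumeHessian_mulVec_eq_zero_iff (hp : PositivelySpans p) (h : ∀ i, IsPolarFace p {i})
    (hk : finrank ℝ E = k + 2) (v : ι → ℝ) :
    volumeHessian p *ᵥ v = 0 ↔ ∃ y : E, ∀ i, v i = ⟪y, p i⟫_ℝ := by
  rw [← corank_empty p] at hk
  have hsymm := mixedForm_isSymm p ∅
  constructor
  · intro hv
    have hzero : ∀ x, mixedForm p ∅ x (facetOffset p v) = 0 := fun x => by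
      obtain ⟨w, hw⟩ := exists_facetOffset_eq h x
      rw [← mixedForm_congr hw fun _ _ => rfl, ← dotProduct_volumeHessian_mulVec, hv,
        dotProduct_zero]
    obtain ⟨y, hy⟩ := ((isPolarFace_empty p).isHyperbolic hp hk _
      ((hsymm.eq _ _).symm.trans (hzero _))).2 (hzero _)
    refine ⟨y, fun i => ?_⟩
    have := hy {i} (h i).faceCov_empty
    rw [facetOffset_singleton, normal_empty_singleton (h i), real_inner_smul_right] at this
    exact mul_left_cancel₀ (inv_ne_zero (norm_ne_zero_iff.2 (h i).apply_ne_zero)) this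
  · rintro ⟨y, hy⟩
    obtain rfl : v = fun i => ⟪y, p i⟫_ℝ := funext hy
    rw [← dotProduct_self_eq_zero, dotProduct_volumeHessian_mulVec,
      mixedForm_congr (fun _ _ => rfl) fun _ hT => facetOffset_inner h y hT,
      mixedForm_inner_normal hp hk]

lemma exists_volumeHessian_lorentzian (hp : PositivelySpans p) (h : ∀ i, IsPolarFace p {i})
    (hk : finrank ℝ E = k + 2) : ∃ w : ι → ℝ, 0 < w ⬝ᵥ volumeHessian p *ᵥ w ∧
      ∀ v, w ⬝ᵥ volumeHessian p *ᵥ v = 0 → v ⬝ᵥ volumeHessian p *ᵥ v ≤ 0 := by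
  rw [← corank_empty p] at hk
  obtain ⟨w, hw⟩ := exists_facetOffset_eq h (supportNumber p ∅)
  refine ⟨w, ?_, fun v hv => ?_⟩
  · rw [dotProduct_volumeHessian_mulVec, mixedForm_congr hw hw]
    exact (isPolarFace_empty p).mixedForm_supportNumber_self_pos hp hk
  · rw [dotProduct_volumeHessian_mulVec, mixedForm_congr hw fun _ _ => rfl,
      ← (mixedForm_isSymm p ∅).eq] at hv
    rw [dotProduct_volumeHessian_mulVec]
    exact ((isPolarFace_empty p).isHyperbolic hp hk _ hv).1

end Hessian

/-! ### Lorentzian matrices -/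

section Lorentzian

variable {m : Type*} [Fintype m] {M : Matrix m m ℝ} {w : m → ℝ}

lemma dotProduct_mulVec_comm (hM : M.IsHermitian) (v w : m → ℝ) : v ⬝ᵥ M *ᵥ w = w ⬝ᵥ M *ᵥ v := by
  rw [Matrix.dotProduct_mulVec, ← Matrix.mulVec_transpose,
    ← Matrix.conjTranspose_eq_transpose_of_trivial, hM.eq, dotProduct_comm]

lemma inner_eq_dotProduct (v w : EuclideanSpace ℝ m) : ⟪v, w⟫_ℝ = v.ofLp ⬝ᵥ w.ofLp := by
  rw [EuclideanSpace.inner_eq_star_dotProduct, star_trivial, dotProduct_comm]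

variable [DecidableEq m]

lemma dotProduct_eigenvectorBasis (hM : M.IsHermitian) (i j : m) :
    (hM.eigenvectorBasis i).ofLp ⬝ᵥ (hM.eigenvectorBasis j).ofLp = if i = j then 1 else 0 := by
  rw [← inner_eq_dotProduct, orthonormal_iff_ite.1 hM.eigenvectorBasis.orthonormal]

lemma dotProduct_mulVec_self_eq_sum_eigenvalues (hM : M.IsHermitian) (w : m → ℝ) :
    w ⬝ᵥ M *ᵥ w = ∑ i, hM.eigenvalues i * (w ⬝ᵥ (hM.eigenvectorBasis i).ofLp) ^ 2 := by
  have h := hM.eigenvectorBasis.sum_inner_mul_inner (WithLp.toLp 2 w) (WithLp.toLp 2 (M *ᵥ w))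
  simp only [inner_eq_dotProduct] at h
  rw [← h]
  refine Finset.sum_congr rfl fun i _ => ?_
  rw [dotProduct_mulVec_comm hM, hM.mulVec_eigenvectorBasis, dotProduct_smul, smul_eq_mul]
  ring

lemma exists_eigenvalues_pos (hM : M.IsHermitian) (hw : 0 < w ⬝ᵥ M *ᵥ w) :
    ∃ i, 0 < hM.eigenvalues i := by
  by_contra! h
  rw [dotProduct_mulVec_self_eq_sum_eigenvalues hM] at hw
  exact hw.not_ge (Finset.sum_nonpos fun i _ => mul_nonpos_of_nonpos_of_nonneg (h i) (sq_nonneg _))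

lemma eq_of_eigenvalues_pos (hM : M.IsHermitian)
    (hw : ∀ v, w ⬝ᵥ M *ᵥ v = 0 → v ⬝ᵥ M *ᵥ v ≤ 0) {i j : m}
    (hi : 0 < hM.eigenvalues i) (hj : 0 < hM.eigenvalues j) : i = j := by
  by_contra hij
  set b := hM.eigenvectorBasis
  have hcomb : ∀ a c : ℝ, a * (w ⬝ᵥ M *ᵥ (b i).ofLp) + c * (w ⬝ᵥ M *ᵥ (b j).ofLp) = 0 →
      a ^ 2 * hM.eigenvalues i + c ^ 2 * hM.eigenvalues j ≤ 0 := fun a c hac => by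
    have h := hw (a • (b i).ofLp + c • (b j).ofLp) (by
      rwa [Matrix.mulVec_add, Matrix.mulVec_smul, Matrix.mulVec_smul, dotProduct_add,
        dotProduct_smul, dotProduct_smul])
    simp only [Matrix.mulVec_add, Matrix.mulVec_smul, b, hM.mulVec_eigenvectorBasis,
      dotProduct_add, add_dotProduct, dotProduct_smul, smul_dotProduct, smul_eq_mul,
      dotProduct_eigenvectorBasis, if_true, if_neg hij, if_neg (Ne.symm hij)] at h
    linarith
  by_cases hs : w ⬝ᵥ M *ᵥ (b i).ofLp = 0
  · exact absurd (hcomb 1 0 (by rw [hs]; ring)) (by linarith)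
  · refine absurd (hcomb (w ⬝ᵥ M *ᵥ (b j).ofLp) (-(w ⬝ᵥ M *ᵥ (b i).ofLp)) (by ring)) (not_le.2 ?_)
    rw [neg_sq]
    exact add_pos_of_nonneg_of_pos (mul_nonneg (sq_nonneg _) hi.le) (mul_pos (by positivity) hj)

lemma card_eigenvalues_pos_eq_one (hM : M.IsHermitian) (hw : 0 < w ⬝ᵥ M *ᵥ w)
    (hw' : ∀ v, w ⬝ᵥ M *ᵥ v = 0 → v ⬝ᵥ M *ᵥ v ≤ 0) :
    (Finset.univ.filter fun i => 0 < hM.eigenvalues i).card = 1 := by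
  obtain ⟨i, hi⟩ := exists_eigenvalues_pos hM hw
  refine Finset.card_eq_one.2 ⟨i, Finset.eq_singleton_iff_unique_mem.2 ⟨by simpa using hi, ?_⟩⟩
  intro j hj
  exact eq_of_eigenvalues_pos hM hw' (by simpa using hj) hi

end Lorentzian

section LowDimension

variable {ι E : Type*} [NormedAddCommGroup E] [InnerProductSpace ℝ E] [FiniteDimensional ℝ E]
  {p : ι → E}

lemma eq_or_eq_of_finrank_le_one (hE : finrank ℝ E ≤ 1) (hinj : Function.Injective p)
    (hvert : ∀ i, p i ∈ Set.extremePoints ℝ (convexHull ℝ (Set.range p))) {i j : ι}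
    (hij : i ≠ j) (k : ι) : k = i ∨ k = j := by
  by_contra! hk
  have hnot : ∀ {a b c : ι}, b ≠ a → b ≠ c → ¬ Wbtw ℝ (p a) (p b) (p c) := fun hba hbc h =>
    ((mem_extremePoints_iff_forall_segment.1 (hvert _)).2 _ (hvert _).1 _ (hvert _).1
      (mem_segment_iff_wbtw.2 h)).elim (fun h => hba (hinj h).symm) fun h => hbc (hinj h).symm
  have hcol : Collinear ℝ {p i, p j, p k} :=
    collinear_iff_finrank_le_one.2 ((Submodule.finrank_le _).trans hE)
  rcases hcol.wbtw_or_wbtw_or_wbtw with h | h | h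
  · exact hnot hij.symm hk.2.symm h
  · exact hnot hk.2 hk.1 h
  · exact hnot hk.1.symm hij h

lemma affineIndependent_of_finrank_le_one (hE : finrank ℝ E ≤ 1) (hinj : Function.Injective p)
    (hvert : ∀ i, p i ∈ Set.extremePoints ℝ (convexHull ℝ (Set.range p))) :
    AffineIndependent ℝ p := by
  rcases isEmpty_or_nonempty ι with _ | ⟨⟨i⟩⟩
  · exact affineIndependent_of_subsingleton ℝ p
  · have : Subsingleton {j // j ≠ i} := ⟨fun j k => Subtype.ext
      ((eq_or_eq_of_finrank_le_one hE hinj hvert j.2.symm k).resolve_left k.2).symm⟩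
    rw [affineIndependent_iff_linearIndependent_vsub ℝ p i,
      linearIndependent_subsingleton_index_iff]
    exact fun j => vsub_ne_zero.2 (hinj.ne j.2)

lemma isExtreme_segment_of_finrank_le_one (hE : finrank ℝ E ≤ 1) (hinj : Function.Injective p)
    (hvert : ∀ i, p i ∈ Set.extremePoints ℝ (convexHull ℝ (Set.range p))) {i j : ι}
    (hij : i ≠ j) : IsExtreme ℝ (convexHull ℝ (Set.range p)) (segment ℝ (p i) (p j)) := by
  have huniv : (Set.univ : Set ι) = {i, j} :=
    (Set.eq_univ_of_forall (eq_or_eq_of_finrank_le_one hE hinj hvert hij)).symm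
  rw [← Set.image_univ, huniv, Set.image_pair, convexHull_pair]

lemma exists_inner_eq_of_dotProduct_coords_eq_zero [Fintype ι] (b : AffineBasis ι ℝ E)
    {v : ι → ℝ} (hv : b.coords 0 ⬝ᵥ v = 0) : ∃ y : E, ∀ i, v i = ⟪y, b i⟫_ℝ := by
  classical
  let f : E →ᵃ[ℝ] ℝ := (dotProductBilin ℝ ℝ v).toAffineMap.comp b.coords
  have hf : ∀ x, f x = v ⬝ᵥ b.coords x := fun _ => rfl
  have hvertex : ∀ i, b.coords (b i) = Pi.single i 1 := fun i => by
    ext j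
    rw [b.coords_apply, b.coord_apply, Pi.single_apply]
  refine ⟨(InnerProductSpace.toDual ℝ E).symm f.linear.toContinuousLinearMap, fun i => ?_⟩
  have hlinear := congrFun f.decomp' (b i)
  rw [Pi.sub_apply, hf, hf, hvertex, dotProduct_single_one, dotProduct_comm, hv, sub_zero]
    at hlinear
  rw [InnerProductSpace.toDual_symm_apply, LinearMap.coe_toContinuousLinearMap', hlinear]

end LowDimension

section IzmestievMatrix

variable {ι E : Type*} [Fintype ι] [NormedAddCommGroup E] [InnerProductSpace ℝ E]

/-- A matrix satisfying the conclusions of Izmestiev's theorem for the polytope with vertices `p`.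
The sign condition on the spectrum is encoded as the Lorentzian condition on the quadratic form,
and the kernel is required to consist of the restrictions of linear functions to the vertices. -/
structure IsIzmestievMatrix (p : ι → E) (M : Matrix ι ι ℝ) : Prop where
  isHermitian : M.IsHermitian
  apply_pos : ∀ i j, i ≠ j →
    IsExtreme ℝ (convexHull ℝ (Set.range p)) (segment ℝ (p i) (p j)) → 0 < M i j
  apply_eq_zero : ∀ i j, i ≠ j →
    ¬ IsExtreme ℝ (convexHull ℝ (Set.range p)) (segment ℝ (p i) (p j)) → M i j = 0
  mulVec_eq_zero_iff : ∀ v, M *ᵥ v = 0 ↔ ∃ y : E, ∀ i, v i = ⟪y, p i⟫_ℝ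
  exists_lorentzian : ∃ w, 0 < w ⬝ᵥ M *ᵥ w ∧ ∀ v, w ⬝ᵥ M *ᵥ v = 0 → v ⬝ᵥ M *ᵥ v ≤ 0

variable {p : ι → E} {M : Matrix ι ι ℝ}

lemma IsIzmestievMatrix.sum_smul_eq_zero (h : IsIzmestievMatrix p M) (i : ι) :
    ∑ j, M i j • p j = 0 := by
  refine ext_inner_left ℝ fun y => ?_
  have hy := congrFun ((h.mulVec_eq_zero_iff fun j => ⟪y, p j⟫_ℝ).2 ⟨y, fun _ => rfl⟩) i
  simp only [inner_sum, real_inner_smul_right, inner_zero_right]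
  exact hy

lemma IsIzmestievMatrix.finrank_ker (h : IsIzmestievMatrix p M) (hp : PositivelySpans p) :
    finrank ℝ (LinearMap.ker M.mulVecLin) = finrank ℝ E := by
  let evaluation : E →ₗ[ℝ] ι → ℝ := LinearMap.pi fun i => innerₗ E (p i)
  have hinj : Function.Injective evaluation := by
    rw [injective_iff_map_eq_zero]
    intro y hy
    by_contra hne
    obtain ⟨i, hi⟩ := hp y hne
    rw [real_inner_comm] at hi
    exact hi.ne' (congrFun hy i)
  have hrange : LinearMap.ker M.mulVecLin = LinearMap.range evaluation := by
    ext v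
    rw [LinearMap.mem_ker, Matrix.mulVecLin_apply, h.mulVec_eq_zero_iff, LinearMap.mem_range]
    refine exists_congr fun y => ?_
    rw [funext_iff]
    exact forall_congr' fun i => by
      rw [eq_comm, real_inner_comm]
      rfl
  rw [hrange, LinearMap.finrank_range_of_inj hinj]

variable [FiniteDimensional ℝ E]

/-- The polytope is a simplex, and the barycentric coordinates of the origin give a matrix of rank
one. -/
lemma exists_isIzmestievMatrix_of_finrank_le_one (hE : finrank ℝ E ≤ 1)
    (hinj : Function.Injective p)
    (hvert : ∀ i, p i ∈ Set.extremePoints ℝ (convexHull ℝ (Set.range p)))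
    (h0 : (0 : E) ∈ interior (convexHull ℝ (Set.range p))) :
    ∃ M : Matrix ι ι ℝ, IsIzmestievMatrix p M := by
  let b : AffineBasis ι ℝ E := ⟨p, affineIndependent_of_finrank_le_one hE hinj hvert,
    interior_convexHull_nonempty_iff_affineSpan_eq_top.1 ⟨0, h0⟩⟩
  let w : ι → ℝ := b.coords 0
  have hw : ∀ i, 0 < w i := by
    have : (0 : E) ∈ interior (convexHull ℝ (Set.range b)) := h0
    rwa [b.interior_convexHull] at this
  have hww : 0 < w ⬝ᵥ w := by
    have : Nonempty ι := b.nonempty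
    exact Finset.sum_pos (fun i _ => mul_pos (hw i) (hw i)) Finset.univ_nonempty
  have hw0 : ∑ i, w i • p i = 0 := b.linear_combination_coord_eq_self 0
  have hmul : ∀ v, Matrix.vecMulVec w w *ᵥ v = (w ⬝ᵥ v) • w := fun v => by
    rw [Matrix.vecMulVec_mulVec, op_smul_eq_smul]
  refine ⟨Matrix.vecMulVec w w, ?_, fun i j _ _ => mul_pos (hw i) (hw j), fun i j hij h =>
    absurd (isExtreme_segment_of_finrank_le_one hE hinj hvert hij) h, fun v => ?_, w, ?_,
    fun v hv => ?_⟩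
  · exact Matrix.IsHermitian.ext fun i j => mul_comm _ _
  · rw [hmul, smul_eq_zero_iff_left (by rintro h; simp [h] at hww)]
    refine ⟨exists_inner_eq_of_dotProduct_coords_eq_zero b, fun ⟨y, hy⟩ => ?_⟩
    rw [funext hy, ← inner_zero_right y, ← hw0, inner_sum]
    exact Finset.sum_congr rfl fun i _ => (real_inner_smul_right _ _ _).symm
  · rw [hmul, dotProduct_smul]
    positivity
  · rw [hmul, dotProduct_smul, smul_eq_mul, mul_eq_zero, or_iff_left hww.ne'] at hv
    rw [hmul, hv, zero_smul, dotProduct_zero]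

variable [DecidableEq ι]

lemma isIzmestievMatrix_volumeHessian (hE : 2 ≤ finrank ℝ E) (hinj : Function.Injective p)
    (hvert : ∀ i, p i ∈ Set.extremePoints ℝ (convexHull ℝ (Set.range p)))
    (hp : PositivelySpans p) : IsIzmestievMatrix p (volumeHessian p) := by
  have hsingle := hp.isPolarFace_singleton hinj hvert (by omega)
  have hpair := hp.isPolarFace_pair_iff hinj hvert hE
  obtain ⟨k, hk⟩ := Nat.exists_eq_add_of_le' hE
  exact ⟨volumeHessian_isHermitian p,
    fun i j hij h => volumeHessian_pos hp hsingle hij ((hpair i j).2 h),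
    fun i j _ h => volumeHessian_eq_zero hsingle fun hF => h ((hpair i j).1 hF),
    volumeHessian_mulVec_eq_zero_iff hp hsingle hk, exists_volumeHessian_lorentzian hp hsingle hk⟩

end IzmestievMatrix

end PolarPolytope

open PolarPolytope in
theorem izmestiev_matrix_exists_general {ι E : Type*} [Fintype ι] [DecidableEq ι]
    [NormedAddCommGroup E] [InnerProductSpace ℝ E] [FiniteDimensional ℝ E]
    (p : ι → E) (hinj : Function.Injective p)
    (hvert : ∀ i, p i ∈ Set.extremePoints ℝ (convexHull ℝ (Set.range p)))
    (h0 : (0 : E) ∈ interior (convexHull ℝ (Set.range p))) :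
    ∃ (M : Matrix ι ι ℝ) (hM : M.IsHermitian),
      (∀ i j, i ≠ j → IsExtreme ℝ (convexHull ℝ (Set.range p)) (segment ℝ (p i) (p j)) →
        0 < M i j) ∧
      (∀ i j, i ≠ j → ¬ IsExtreme ℝ (convexHull ℝ (Set.range p)) (segment ℝ (p i) (p j)) →
        M i j = 0) ∧
      finrank ℝ (LinearMap.ker M.mulVecLin) = finrank ℝ E ∧
      (∀ i, ∑ j, M i j • p j = 0) ∧
      (Finset.univ.filter fun i => 0 < hM.eigenvalues i).card = 1 := by
  have hp := positivelySpans_of_zero_mem_interior h0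
  obtain ⟨M, hM⟩ : ∃ M : Matrix ι ι ℝ, IsIzmestievMatrix p M := by
    rcases le_or_gt (finrank ℝ E) 1 with hE | hE
    · exact exists_isIzmestievMatrix_of_finrank_le_one hE hinj hvert h0
    · exact ⟨volumeHessian p, isIzmestievMatrix_volumeHessian hE hinj hvert hp⟩
  obtain ⟨w, hw, hw'⟩ := hM.exists_lorentzian
  exact ⟨M, hM.isHermitian, hM.apply_pos, hM.apply_eq_zero, hM.finrank_ker hp,
    hM.sum_smul_eq_zero, card_eigenvalues_pos_eq_one hM.isHermitian hw hw'⟩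

theorem izmestiev_matrix_exists {n d : ℕ}
    (p : Fin n → EuclideanSpace ℝ (Fin d)) (hinj : Function.Injective p)
    (hvert : ∀ i, p i ∈ Set.extremePoints ℝ (convexHull ℝ (Set.range p)))
    (h0 : (0 : EuclideanSpace ℝ (Fin d)) ∈ interior (convexHull ℝ (Set.range p))) :
    ∃ (M : Matrix (Fin n) (Fin n) ℝ) (hM : M.IsHermitian),
      (∀ i j, IsEdge p i j → 0 < M i j) ∧
      (∀ i j, i ≠ j → ¬ IsEdge p i j → M i j = 0) ∧
      Module.finrank ℝ ↥(LinearMap.ker M.mulVecLin) = d ∧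
      (∀ i, ∑ j, M i j • p j = 0) ∧
      (Finset.univ.filter fun i => 0 < hM.eigenvalues i).card = 1 := by
  obtain ⟨M, hM, hpos, hzero, hker, hsum, hcard⟩ :=
    izmestiev_matrix_exists_general p hinj hvert h0
  exact ⟨M, hM, fun i j h => hpos i j h.1 h.2, fun i j hij h => hzero i j hij fun he => h ⟨hij, he⟩,
    by rw [hker, finrank_euclideanSpace_fin], hsum, hcard⟩
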